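/- arXiv:2206.14032 — 3 statements merged into one kernel-verified Lean document; each statement's English description precedes it below -/
import Mathlib

section
/- Let $A$ and $B$ be distinct odd primes and let $k$ be a positive integer. Then the equation $A^m - B^n = 2^k$ has at most one solution in positive integers $(m,n)$: if $A^{m_1} - B^{n_1} = 2^k$ and $A^{m_2} - B^{n_2} = 2^k$ with $m_1, n_1, m_2, n_2$ positive integers, then $(m_1,n_1) = (m_2,n_2)$. -/
/-!
A solution of `A ^ m = B ^ n + 2 ^ k` gives an element of norm `A ^ m` (or its square) in some
`ℤ√(-d)`, whose real and imaginary parts are products of a power of `2` and a power of `B`. The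
elements of `A`-power norm not divisible by `A` are, up to sign and conjugation, the powers of a
single `α`, and each coordinate of `α ^ q` is the corresponding coordinate of `α` times a factor
whose valuations at `2` and `B` are governed by those of `q`. This forces the factor to be a unit
or to divide a single `B`, so two solutions come from the same power of `α`, except for small
norms.

If the two exponents of `B` have the same parity, two solutions are compared in this way directly.
If they have opposite parities, congruences and such comparisons reduce to
`A = B ^ (2 * j) + 4 ^ l` and `A ^ m = B ^ (2 * t + 1) + 4 ^ l` with `m` odd. The comparison of
sizes then gives `m > 8 * B`. By Thue's lemma every `A ^ j` has a multiple by a factor of size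
`O(√B)` that is a norm from `ℤ√(-B)`, and the pigeonhole principle on these factors produces
a generator `α` of norm `A ^ h` with `h < m`; but the second equation forces `m = h`.
-/

open Zsqrtd

lemma three_dvd_sq_sub_one {x : ℤ} (hx : ¬ (3 : ℤ) ∣ x) : (3 : ℤ) ∣ x ^ 2 - 1 := by
  rcases (by omega : x % 3 = 1 ∨ x % 3 = 2) with h | h <;>
    exact Int.dvd_of_emod_eq_zero (by simp [Int.sub_emod, pow_two, Int.mul_emod, h])

section PowersInZsqrtd

variable {d : ℤ} (α : ℤ√d)

lemma norm_eq_re_sq_sub : α.norm = α.re ^ 2 - d * α.im ^ 2 := by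
  rw [norm_def]; ring

lemma zsqrtd_norm_pow (n : ℕ) : (α ^ n).norm = α.norm ^ n :=
  map_pow normMonoidHom α n

lemma exists_re_im_pow_succ_eq (n : ℕ) : ∃ v w : ℤ,
    (α ^ (n + 1)).re = α.re ^ (n + 1) + d * α.im ^ 2 * v ∧
    (α ^ (n + 1)).im = α.im * ((n + 1) * α.re ^ n + d * α.im ^ 2 * w) := by
  induction n with
  | zero => exact ⟨0, 0, by simp, by simp⟩
  | succ n ih =>
    obtain ⟨v, w, hre, him⟩ := ih
    refine ⟨α.re * v + ((n + 1) * α.re ^ n + d * α.im ^ 2 * w), α.re * w + v, ?_, ?_⟩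
    · rw [pow_succ, re_mul, hre, him]; ring
    · rw [pow_succ, im_mul, hre, him]; push_cast; ring

lemma exists_re_im_pow_add_three_eq (n : ℕ) : ∃ v w : ℤ,
    (α ^ (n + 3)).re = α.re ^ (n + 3) + (n + 3).choose 2 * α.re ^ (n + 1) * (d * α.im ^ 2)
      + (d * α.im ^ 2) ^ 2 * v ∧
    (α ^ (n + 3)).im = α.im * ((n + 3) * α.re ^ (n + 2)
      + (n + 3).choose 3 * α.re ^ n * (d * α.im ^ 2) + (d * α.im ^ 2) ^ 2 * w) := by
  induction n with
  | zero =>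
    refine ⟨0, 0, ?_, ?_⟩ <;>
    · simp only [pow_succ, pow_zero, one_mul, re_mul, im_mul]
      norm_num [Nat.choose]; ring
  | succ n ih =>
    obtain ⟨v, w, hre, him⟩ := ih
    have hchoose_two : (n + 1 + 3).choose 2 = (n + 3) + (n + 3).choose 2 := by
      rw [show n + 1 + 3 = (n + 3) + 1 from rfl, Nat.choose_succ_succ', Nat.choose_one_right]
    have hchoose_three : (n + 1 + 3).choose 3 = (n + 3).choose 2 + (n + 3).choose 3 :=
      Nat.choose_succ_succ' (n + 3) 2
    refine ⟨α.re * v + (n + 3).choose 3 * α.re ^ n + (d * α.im ^ 2) * w, α.re * w + v, ?_, ?_⟩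
    · rw [hchoose_two, show n + 1 + 3 = (n + 3) + 1 from rfl, pow_succ, re_mul, hre, him]
      push_cast; ring
    · rw [hchoose_three, show n + 1 + 3 = (n + 3) + 1 from rfl, pow_succ, im_mul, hre, him]
      push_cast; ring

lemma exists_re_im_pow_two_mul_add_one_eq (n : ℕ) : ∃ v w : ℤ,
    (α ^ (2 * n + 1)).re = α.re * ((2 * n + 1) * (d * α.im ^ 2) ^ n + α.re ^ 2 * v) ∧
    (α ^ (2 * n + 1)).im = α.im * ((d * α.im ^ 2) ^ n + α.re ^ 2 * w) := by
  induction n with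
  | zero => exact ⟨0, 0, by simp, by simp⟩
  | succ n ih =>
    obtain ⟨v, w, hre, him⟩ := ih
    have hpow : α ^ (2 * (n + 1) + 1) = α ^ (2 * n + 1) * (α * α) := by ring
    refine ⟨(2 * n + 1) * (d * α.im ^ 2) ^ n + α.re ^ 2 * v + d * α.im ^ 2 * v
        + 2 * d * α.im ^ 2 * w,
      2 * ((2 * n + 1) * (d * α.im ^ 2) ^ n + α.re ^ 2 * v) + (d * α.im ^ 2) ^ n + α.re ^ 2 * w
        + d * α.im ^ 2 * w, ?_, ?_⟩
    · rw [hpow, re_mul, hre, him, re_mul, im_mul]; push_cast; ring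
    · rw [hpow, im_mul, hre, him, re_mul, im_mul]; ring

lemma im_dvd_im_pow (n : ℕ) : α.im ∣ (α ^ n).im := by
  cases n with
  | zero => simp
  | succ n =>
    obtain ⟨v, w, -, him⟩ := exists_re_im_pow_succ_eq α n
    exact Dvd.intro _ him.symm

lemma re_dvd_re_pow {n : ℕ} (hn : Odd n) : α.re ∣ (α ^ n).re := by
  obtain ⟨m, rfl⟩ := hn
  obtain ⟨v, w, hre, -⟩ := exists_re_im_pow_two_mul_add_one_eq α m
  exact Dvd.intro _ hre.symm

variable {α}

lemma exists_im_pow_eq_mul_not_dvd {p : ℤ} (hp : Prime p) (hd : p ∣ d) (hre : ¬ p ∣ α.re)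
    {n : ℕ} (hn : ¬ p ∣ n) : ∃ u, (α ^ n).im = α.im * u ∧ ¬ p ∣ u := by
  cases n with
  | zero => simp at hn
  | succ n =>
    obtain ⟨v, w, -, him⟩ := exists_re_im_pow_succ_eq α n
    refine ⟨_, him, fun hdvd => ?_⟩
    have hlead : p ∣ ((n : ℤ) + 1) * α.re ^ n :=
      (dvd_add_left ((hd.mul_right _).mul_right _)).mp hdvd
    rcases hp.dvd_or_dvd hlead with h | h
    · exact hn (by exact_mod_cast h)
    · exact hre (hp.dvd_of_dvd_pow h)

lemma exists_im_cube_eq_mul_not_nine_dvd (hre : ¬ (3 : ℤ) ∣ α.re) (hd : (3 : ℤ) ∣ d)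
    (hd' : ¬ (9 : ℤ) ∣ d + 3) : ∃ u, (α ^ 3).im = α.im * u ∧ ¬ (3 : ℤ) ^ 2 ∣ u := by
  obtain ⟨e, rfl⟩ := hd
  refine ⟨3 * α.re ^ 2 + 3 * e * α.im ^ 2, ?_, fun hdvd => ?_⟩
  · simp only [pow_succ, pow_zero, one_mul, re_mul, im_mul]; ring
  have hsum : (3 : ℤ) ∣ α.re ^ 2 + e * α.im ^ 2 := by
    obtain ⟨c, hc⟩ := hdvd
    exact ⟨c, by linarith⟩
  by_cases him : (3 : ℤ) ∣ α.im
  · have hre_sq : (3 : ℤ) ∣ α.re ^ 2 :=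
      (dvd_add_left ((dvd_pow him two_ne_zero).mul_left e)).mp hsum
    exact hre (Int.prime_three.dvd_of_dvd_pow hre_sq)
  · have hre_sq := three_dvd_sq_sub_one hre
    have him_sq := (three_dvd_sq_sub_one him).mul_left e
    rw [mul_sub, mul_one] at him_sq
    omega

lemma exists_im_pow_self_eq_mul_not_sq_dvd {p : ℕ} (hp : p.Prime) (hp2 : 2 < p)
    (hd : (p : ℤ) ∣ d) (hd' : p = 3 → ¬ (9 : ℤ) ∣ d + 3) (hre : ¬ (p : ℤ) ∣ α.re) :
    ∃ u, (α ^ p).im = α.im * u ∧ ¬ (p : ℤ) ^ 2 ∣ u := by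
  obtain rfl | hp3 := eq_or_ne p 3
  · exact exists_im_cube_eq_mul_not_nine_dvd hre hd (hd' rfl)
  have hpZ : Prime (p : ℤ) := Nat.prime_iff_prime_int.mp hp
  obtain ⟨n, rfl⟩ : ∃ n, p = n + 3 := ⟨p - 3, by omega⟩
  obtain ⟨v, w, -, him⟩ := exists_re_im_pow_add_three_eq α n
  refine ⟨_, him, fun hdvd => ?_⟩
  have hlast : ((n + 3 : ℕ) : ℤ) ^ 2 ∣ (d * α.im ^ 2) ^ 2 * w :=
    (pow_dvd_pow_of_dvd (hd.mul_right _) 2).mul_right _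
  have hmid : ((n + 3 : ℕ) : ℤ) ^ 2 ∣ (n + 3).choose 3 * α.re ^ n * (d * α.im ^ 2) := by
    rw [pow_two]
    refine mul_dvd_mul (Dvd.dvd.mul_right ?_ _) (hd.mul_right _)
    exact_mod_cast hp.dvd_choose_self three_ne_zero (by omega)
  have hlead : ((n + 3 : ℕ) : ℤ) * (n + 3 : ℕ) ∣ (n + 3 : ℕ) * α.re ^ (n + 2) := by
    have := (dvd_add_left hmid).mp ((dvd_add_left hlast).mp hdvd)
    rw [pow_two] at this
    exact_mod_cast this
  exact hre (hpZ.dvd_of_dvd_pow ((mul_dvd_mul_iff_left hpZ.ne_zero).mp hlead))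

lemma exists_re_pow_eq_mul_not_dvd {p : ℤ} (hp : Prime p) (hre : p ∣ α.re)
    (him : ¬ p ∣ d * α.im ^ 2) {n : ℕ} (hn : Odd n) (hpn : ¬ p ∣ n) :
    ∃ v, (α ^ n).re = α.re * v ∧ ¬ p ∣ v := by
  obtain ⟨m, rfl⟩ := hn
  obtain ⟨v, w, hpow, -⟩ := exists_re_im_pow_two_mul_add_one_eq α m
  refine ⟨_, hpow, fun hdvd => ?_⟩
  have hlead : p ∣ (2 * (m : ℤ) + 1) * (d * α.im ^ 2) ^ m :=
    (dvd_add_left ((dvd_pow hre two_ne_zero).mul_right _)).mp hdvd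
  rcases hp.dvd_or_dvd hlead with h | h
  · exact hpn (by exact_mod_cast h)
  · exact him (hp.dvd_of_dvd_pow h)

lemma exists_re_pow_self_eq_mul_not_sq_dvd {p : ℕ} (hp : p.Prime) (hp2 : 2 < p)
    (hre : (p : ℤ) ∣ α.re) (him : ¬ (p : ℤ) ∣ d * α.im ^ 2) :
    ∃ v, (α ^ p).re = α.re * v ∧ ¬ (p : ℤ) ^ 2 ∣ v := by
  have hpZ : Prime (p : ℤ) := Nat.prime_iff_prime_int.mp hp
  obtain ⟨m, hm⟩ := hp.odd_of_ne_two (by omega)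
  obtain ⟨v, w, hpow, -⟩ := exists_re_im_pow_two_mul_add_one_eq α m
  have hcast : (2 * m + 1 : ℤ) = p := by rw [hm]; push_cast; rfl
  rw [← hm, hcast] at hpow
  refine ⟨_, hpow, fun hdvd => ?_⟩
  have hlead : (p : ℤ) * p ∣ p * (d * α.im ^ 2) ^ m := by
    rw [← pow_two]
    exact (dvd_add_left ((pow_dvd_pow_of_dvd hre 2).mul_right _)).mp hdvd
  exact him (hpZ.dvd_of_dvd_pow ((mul_dvd_mul_iff_left hpZ.ne_zero).mp hlead))

lemma not_dvd_re_of_not_dvd_norm {p : ℤ} (hd : p ∣ d) (hp : ¬ p ∣ α.norm) : ¬ p ∣ α.re := by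
  intro h
  rw [norm_eq_re_sq_sub] at hp
  exact hp (dvd_sub (dvd_pow h two_ne_zero) (hd.mul_right _))

lemma norm_le_of_abs_re_im_pow_le (hd : d ≤ 0) {n : ℕ} (hn : 3 ≤ n)
    (hre : |(α ^ n).re| ≤ n * |α.re|) (him : |(α ^ n).im| ≤ n * |α.im|) : α.norm ≤ n := by
  have hsq : α.norm ^ n ≤ (n : ℤ) ^ 2 * α.norm := by
    rw [← zsqrtd_norm_pow, norm_eq_re_sq_sub, norm_eq_re_sq_sub]
    have h1 := pow_le_pow_left₀ (abs_nonneg _) hre 2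
    have h2 := pow_le_pow_left₀ (abs_nonneg _) him 2
    rw [mul_pow, sq_abs, sq_abs] at h1 h2
    nlinarith
  have hnonneg : 0 ≤ α.norm := norm_nonneg hd α
  by_contra! hlt
  have : (n : ℤ) ^ 2 * α.norm < α.norm ^ n :=
    calc (n : ℤ) ^ 2 * α.norm < α.norm ^ 2 * α.norm := by gcongr; omega
      _ = α.norm ^ 3 := by ring
      _ ≤ α.norm ^ n := pow_le_pow_right₀ (by omega) hn
  omega

end PowersInZsqrtd

section Divisors

lemma isUnit_of_dvd_prime_pow {p u : ℤ} (hp : Prime p) {t : ℕ} (hu : u ∣ p ^ t) (hpu : ¬ p ∣ u) :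
    IsUnit u :=
  ((hp.coprime_iff_not_dvd.mpr hpu).symm.pow_right).isUnit_of_dvd' dvd_rfl hu

lemma abs_le_of_dvd_prime_pow {p : ℕ} (hp : p.Prime) {u : ℤ} {t : ℕ} (hu : u ∣ (p : ℤ) ^ t)
    (hpu : ¬ (p : ℤ) ^ 2 ∣ u) : |u| ≤ p := by
  have hpZ : Prime (p : ℤ) := Nat.prime_iff_prime_int.mp hp
  obtain ⟨i, -, hi⟩ := (dvd_prime_pow hpZ t).mp hu
  have hi2 : i < 2 := by
    by_contra! h
    exact hpu ((pow_dvd_pow _ h).trans hi.symm.dvd)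
  rw [Int.abs_eq_natAbs, Int.associated_iff_natAbs.mp hi, Int.natAbs_pow, Int.natAbs_natCast]
  exact_mod_cast (Nat.pow_le_pow_right hp.pos (by omega)).trans_eq (pow_one p)

lemma dvd_of_odd_of_dvd_two_pow_mul {u x : ℤ} (hu : Odd u) {s : ℕ} (h : u ∣ 2 ^ s * x) : u ∣ x := by
  have hcop : IsCoprime u (2 ^ s) :=
    ((Int.prime_two.coprime_iff_not_dvd.mpr
      (mt even_iff_two_dvd.mpr (Int.not_even_iff_odd.mpr hu))).symm).pow_right
  exact hcop.dvd_of_dvd_mul_left h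

end Divisors

section NormGenerator

variable {d : ℤ}

lemma star_dvd_of_norm_dvd_im {β γ : ℤ√d} (hβ : β.norm ≠ 0) (hnorm : β.norm ∣ γ.norm)
    (him : β.norm ∣ (γ * β).im) : star β ∣ γ := by
  have hre : β.norm ∣ (γ * β).re := by
    rw [← Int.pow_dvd_pow_iff two_ne_zero]
    have hre_sq : (γ * β).re ^ 2 = γ.norm * β.norm + d * (γ * β).im ^ 2 := by
      rw [← norm_mul, norm_eq_re_sq_sub]; ring
    rw [hre_sq]
    refine dvd_add ?_ ((pow_dvd_pow_of_dvd him 2).mul_left d)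
    rw [pow_two]
    exact mul_dvd_mul_right hnorm _
  obtain ⟨δ, hδ⟩ := (intCast_dvd β.norm (γ * β)).mpr ⟨hre, him⟩
  refine ⟨δ, Zsqrtd.eq_of_smul_eq_smul_left hβ ?_⟩
  rw [norm_eq_mul_conj] at hδ ⊢
  linear_combination star β * hδ

lemma not_dvd_re_and_im {p : ℤ} (hp : Prime p) (hpd : ¬ p ∣ d) {γ : ℤ√d} (hnorm : p ∣ γ.norm)
    (hγ : ¬ (p : ℤ√d) ∣ γ) : ¬ p ∣ γ.re ∧ ¬ p ∣ γ.im := by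
  rw [intCast_dvd] at hγ
  rw [norm_eq_re_sq_sub] at hnorm
  refine ⟨fun hre => hγ ⟨hre, ?_⟩, fun him => hγ ⟨?_, him⟩⟩
  · have h : p ∣ d * γ.im ^ 2 := (dvd_sub_right (dvd_pow hre two_ne_zero)).mp hnorm
    exact hp.dvd_of_dvd_pow ((hp.dvd_or_dvd h).resolve_left hpd)
  · exact hp.dvd_of_dvd_pow
      ((dvd_sub_left ((dvd_pow him two_ne_zero).mul_left d)).mp hnorm)

lemma dvd_or_star_dvd_of_norm_eq_prime_pow {p : ℤ} (hp : Prime p) (hp2 : ¬ p ∣ 2) (hpd : ¬ p ∣ d)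
    {α γ : ℤ√d} {h m : ℕ} (hh : 0 < h) (hhm : h ≤ m) (hα : α.norm = p ^ h) (hγ : γ.norm = p ^ m)
    (hpα : ¬ (p : ℤ√d) ∣ α) (hpγ : ¬ (p : ℤ√d) ∣ γ) : α ∣ γ ∨ star α ∣ γ := by
  have hα0 : α.norm ≠ 0 := hα ▸ pow_ne_zero _ hp.ne_zero
  have hnorm : α.norm ∣ γ.norm := hα ▸ hγ ▸ pow_dvd_pow p hhm
  have hαre := (not_dvd_re_and_im hp hpd (hα ▸ dvd_pow_self p hh.ne') hpα).1
  have hγim := (not_dvd_re_and_im hp hpd (hγ ▸ dvd_pow_self p (by omega)) hpγ).2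
  have hprod : p ^ h ∣ (γ * α).im * (γ * star α).im := by
    have : (γ * α).im * (γ * star α).im = α.norm * γ.im ^ 2 - γ.norm * α.im ^ 2 := by
      simp only [im_mul, re_star, im_star, norm_eq_re_sq_sub]; ring
    rw [this, ← hα]
    exact dvd_sub (dvd_mul_right _ _) (hnorm.mul_right _)
  have hsum : ¬ p ∣ (γ * α).im + (γ * star α).im := by
    have : (γ * α).im + (γ * star α).im = 2 * (γ.im * α.re) := by
      simp only [im_mul, re_star, im_star]; ring
    rw [this]
    exact hp.not_dvd_mul hp2 (hp.not_dvd_mul hγim hαre)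
  by_cases h1 : p ∣ (γ * α).im
  · right
    have h2 : ¬ p ∣ (γ * star α).im := fun h2 => hsum (dvd_add h1 h2)
    refine star_dvd_of_norm_dvd_im hα0 hnorm (hα ▸ ?_)
    exact (hp.coprime_iff_not_dvd.mpr h2).pow_left.dvd_of_dvd_mul_right hprod
  · left
    rw [← star_star α]
    refine star_dvd_of_norm_dvd_im (by rwa [norm_conj]) (by rwa [norm_conj]) ?_
    rw [norm_conj, hα]
    exact (hp.coprime_iff_not_dvd.mpr h1).pow_left.dvd_of_dvd_mul_left hprod

lemma mul_eq_mul_pow_succ_or {R : Type*} [CommSemiring R] {p α β δ u : R} (hαβ : p ∣ α * β)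
    {q : ℕ} (hδ : δ = u * α ^ q ∨ δ = u * β ^ q) (hp : ¬ p ∣ α * δ) :
    α * δ = u * α ^ (q + 1) ∨ α * δ = u * β ^ (q + 1) := by
  rcases hδ with rfl | rfl
  · left; ring
  cases q with
  | zero => left; ring
  | succ q =>
    refine absurd (hαβ.mul_right (u * β ^ q)) ?_
    rwa [show α * β * (u * β ^ q) = α * (u * β ^ (q + 1)) by ring]

lemma exists_eq_unit_mul_pow_of_norm_eq {p : ℤ} (hp : Prime p) (hp2 : ¬ p ∣ 2) (hpd : ¬ p ∣ d)
    {α : ℤ√d} {h : ℕ} (hh : 0 < h) (hα : α.norm = p ^ h) (hpα : ¬ (p : ℤ√d) ∣ α)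
    (hmin : ∀ (i : ℕ) (β : ℤ√d), 0 < i → i < h → β.norm = p ^ i → (p : ℤ√d) ∣ β) (m : ℕ) :
    ∀ γ : ℤ√d, γ.norm = p ^ m → ¬ (p : ℤ√d) ∣ γ →
      ∃ (q : ℕ) (u : ℤ√d), m = h * q ∧ u.norm = 1 ∧ (γ = u * α ^ q ∨ γ = u * star α ^ q) := by
  induction m using Nat.strong_induction_on with
  | _ m ih =>
  intro γ hγ hpγ
  obtain rfl | hm := Nat.eq_zero_or_pos m
  · exact ⟨0, γ, rfl, by simpa using hγ, by simp⟩
  obtain hlt | hhm := lt_or_ge m h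
  · exact absurd (hmin m γ hm hlt hγ) hpγ
  have hp_mul_star : (p : ℤ√d) ∣ α * star α := by
    rw [← norm_eq_mul_conj, hα, intCast_dvd_intCast]
    exact dvd_pow_self p hh.ne'
  have quotient_pow {β δ : ℤ√d} (hβ : β.norm = p ^ h) (hγβ : γ = β * δ) :
      ∃ (q : ℕ) (u : ℤ√d), m = h * (q + 1) ∧ u.norm = 1 ∧
        (δ = u * α ^ q ∨ δ = u * star α ^ q) := by
    have hδ : δ.norm = p ^ (m - h) := by
      refine mul_left_cancel₀ (pow_ne_zero h hp.ne_zero) ?_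
      rw [← hβ, ← norm_mul, ← hγβ, hγ, hβ, ← pow_add, Nat.add_sub_cancel' hhm]
    obtain ⟨q, u, hq, hu, hδu⟩ :=
      ih (m - h) (by omega) δ hδ fun hpδ => hpγ (hγβ ▸ hpδ.mul_left β)
    exact ⟨q, u, by rw [mul_add_one, ← hq]; omega, hu, hδu⟩
  rcases dvd_or_star_dvd_of_norm_eq_prime_pow hp hp2 hpd hh hhm hα hγ hpα hpγ with
    ⟨δ, rfl⟩ | ⟨δ, rfl⟩
  · obtain ⟨q, u, hq, hu, hδ⟩ := quotient_pow hα rfl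
    exact ⟨q + 1, u, hq, hu, mul_eq_mul_pow_succ_or hp_mul_star hδ hpγ⟩
  · obtain ⟨q, u, hq, hu, hδ⟩ := quotient_pow (by rwa [norm_conj]) rfl
    exact ⟨q + 1, u, hq, hu,
      (mul_eq_mul_pow_succ_or (mul_comm α _ ▸ hp_mul_star) hδ.symm hpγ).symm⟩

lemma eq_one_or_eq_neg_one_of_norm_eq_one (hd : d < -1) {u : ℤ√d} (hu : u.norm = 1) :
    u = 1 ∨ u = -1 := by
  rw [norm_eq_re_sq_sub] at hu
  have him : u.im = 0 := by
    by_contra h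
    nlinarith [sq_nonneg u.re, Int.one_le_abs h, sq_abs u.im]
  have hre : u.re ^ 2 = 1 := by simpa [him] using hu
  rcases sq_eq_one_iff.mp hre with h | h
  · exact Or.inl (Zsqrtd.ext h him)
  · exact Or.inr (Zsqrtd.ext h (by simp [him]))

/-- The element `α` of norm `p ^ h` generates, up to conjugation and sign, the elements of
`p`-power norm in `ℤ√d` that are not divisible by `p`. Conjugation and sign are absorbed by
comparing only the absolute values of the coordinates. -/
structure IsNormGenerator (p : ℤ) (h : ℕ) (α : ℤ√d) : Prop where
  pos : 0 < h
  norm_eq : α.norm = p ^ h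
  exists_pow : ∀ (m : ℕ) (γ : ℤ√d), γ.norm = p ^ m → ¬ (p : ℤ√d) ∣ γ →
    ∃ q, m = h * q ∧ |γ.re| = |(α ^ q).re| ∧ |γ.im| = |(α ^ q).im|

lemma isNormGenerator_of_minimal (hd : d < -1) {p : ℤ} (hp : Prime p) (hp2 : ¬ p ∣ 2)
    (hpd : ¬ p ∣ d) {α : ℤ√d} {h : ℕ} (hh : 0 < h) (hα : α.norm = p ^ h)
    (hpα : ¬ (p : ℤ√d) ∣ α)
    (hmin : ∀ (i : ℕ) (β : ℤ√d), 0 < i → i < h → β.norm = p ^ i → (p : ℤ√d) ∣ β) :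
    IsNormGenerator p h α where
  pos := hh
  norm_eq := hα
  exists_pow m γ hγ hpγ := by
    obtain ⟨q, u, hq, hu, hγu⟩ :=
      exists_eq_unit_mul_pow_of_norm_eq hp hp2 hpd hh hα hpα hmin m γ hγ hpγ
    refine ⟨q, hq, ?_⟩
    rcases eq_one_or_eq_neg_one_of_norm_eq_one hd hu with rfl | rfl <;>
      rcases hγu with rfl | rfl <;> simp [← star_pow]

lemma isNormGenerator_of_norm_eq (hd : d < -1) {p : ℤ} (hp : Prime p) (hp2 : ¬ p ∣ 2)
    (hpd : ¬ p ∣ d) {α : ℤ√d} (hα : α.norm = p) : IsNormGenerator p 1 α := by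
  refine isNormGenerator_of_minimal hd hp hp2 hpd one_pos (by simpa using hα) ?_ (by omega)
  rintro ⟨β, rfl⟩
  rw [norm_mul, norm_intCast, mul_assoc] at hα
  exact hp.not_isUnit (.of_mul_eq_one _ (mul_left_cancel₀ hp.ne_zero (hα.trans (mul_one p).symm)))

lemma exists_isNormGenerator (hd : d < -1) {p : ℤ} (hp : Prime p) (hp2 : ¬ p ∣ 2)
    (hpd : ¬ p ∣ d) {γ : ℤ√d} {m : ℕ} (hm : 0 < m) (hγ : γ.norm = p ^ m)
    (hpγ : ¬ (p : ℤ√d) ∣ γ) : ∃ h ≤ m, ∃ α : ℤ√d, IsNormGenerator p h α := by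
  classical
  have hex : ∃ h, 0 < h ∧ ∃ α : ℤ√d, α.norm = p ^ h ∧ ¬ (p : ℤ√d) ∣ α := ⟨m, hm, γ, hγ, hpγ⟩
  obtain ⟨hh, α, hα, hpα⟩ := Nat.find_spec hex
  refine ⟨Nat.find hex, Nat.find_min' hex ⟨hm, γ, hγ, hpγ⟩, α,
    isNormGenerator_of_minimal hd hp hp2 hpd hh hα hpα fun i β hi hlt hβ => ?_⟩
  by_contra hpβ
  exact Nat.find_min hex hlt ⟨hi, β, hβ, hpβ⟩

end NormGenerator

section SameParity

lemma dvd_of_im_pow_eq_mul {d : ℤ} (hd : 2 ∣ d) {α : ℤ√d} (hre : ¬ 2 ∣ α.re) (him : α.im ≠ 0)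
    {n : ℕ} (hn : Odd n) {u x : ℤ} (hu : (α ^ n).im = α.im * u) {s : ℕ}
    (hx : (α ^ n).im ∣ 2 ^ s * x) : u ∣ x := by
  have hn2 : ¬ (2 : ℤ) ∣ n := by exact_mod_cast hn.not_two_dvd_nat
  obtain ⟨v, hv, hv2⟩ := exists_im_pow_eq_mul_not_dvd Int.prime_two hd hre hn2
  obtain rfl : u = v := mul_left_cancel₀ him (hu.symm.trans hv)
  refine dvd_of_odd_of_dvd_two_pow_mul ?_ ((Dvd.intro_left _ hu.symm).trans hx)
  rwa [← Int.not_even_iff_odd, even_iff_two_dvd]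

lemma re_sq_eq_or_re_sq_eq {P E y : ℤ} (hP : 0 ≤ P) (hE : 0 ≤ E) {β : ℤ√(-(P * E))}
    (hnorm : (β ^ 2).norm = (P * y ^ 2 + E) ^ 2) (him : |(β ^ 2).im| = 2 * y) :
    β.re ^ 2 = P * y ^ 2 ∨ β.re ^ 2 = E := by
  have hsum : β.re ^ 2 + P * E * β.im ^ 2 = P * y ^ 2 + E := by
    rw [zsqrtd_norm_pow] at hnorm
    have := (sq_eq_sq₀ (norm_nonneg (by nlinarith) β) (by positivity)).mp hnorm
    rw [← this, norm_eq_re_sq_sub]; ring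
  have hprod : (β.re * β.im) ^ 2 = y ^ 2 := by
    have h := congrArg (· ^ 2) him
    simp only [sq_abs, pow_two β, im_mul] at h
    linarith
  have hroots : (β.re ^ 2 - P * y ^ 2) * (β.re ^ 2 - E) = 0 := by
    linear_combination β.re ^ 2 * hsum - P * E * hprod
  exact (mul_eq_zero.mp hroots).imp sub_eq_zero.mp sub_eq_zero.mp

lemma pow_four_mul_sq_lt {n : ℕ} (hn : 3 ≤ n) {x : ℤ} (hx : 2 * n ≤ x) :
    (n : ℤ) ^ 4 * x ^ 2 < 16 * x ^ n := by
  obtain ⟨m, rfl⟩ : ∃ m, n = m + 2 := ⟨n - 2, by omega⟩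
  have hx0 : 0 < x := by omega
  rw [pow_add x, ← mul_assoc]
  refine mul_lt_mul_of_pos_right ?_ (by positivity)
  obtain hm | rfl | rfl | hm : m = 1 ∨ m = 2 ∨ m = 3 ∨ 4 ≤ m := by omega
  · subst hm; norm_num at *; omega
  · norm_num at *; nlinarith
  · have := pow_le_pow_left₀ (by norm_num) hx 3
    norm_num at *; omega
  · calc ((m + 2 : ℕ) : ℤ) ^ 4 ≤ x ^ 4 := pow_le_pow_left₀ (by positivity) (by omega) 4
      _ ≤ x ^ m := pow_le_pow_right₀ (by omega) hm
      _ < 16 * x ^ m := by linarith [pow_pos hx0 m]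

lemma false_of_im_pow_self_le {P E y : ℤ} {n : ℕ} (hn : 3 ≤ n) (hP : n ≤ P) (hE : 2 ≤ E)
    (hy : 0 < y) {β : ℤ√(-(P * E))} (hnorm : (β ^ n).norm = (P * y ^ 2 + E) ^ 2)
    (him : 2 * y ≤ n * |β.im|) : False := by
  have hP0 : 0 < P := by omega
  have hE0 : 0 < E := by omega
  have hPE : 0 < P * E := mul_pos hP0 hE0
  have him0 : 1 ≤ β.im ^ 2 := by
    have : β.im ≠ 0 := by rintro h; simp [h] at him; omega
    have : 0 < β.im ^ 2 := by positivity
    omega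
  have him_sq : (2 * y) ^ 2 ≤ n ^ 2 * β.im ^ 2 := by
    rw [← sq_abs β.im, ← mul_pow]
    exact pow_le_pow_left₀ (by positivity) him 2
  have him_norm : P * E * β.im ^ 2 ≤ β.norm := by
    rw [norm_eq_re_sq_sub]; linarith [sq_nonneg β.re]
  have hsum_le : P * y ^ 2 + E ≤ P * y ^ 2 * E := by
    have : 2 ≤ P * y ^ 2 := by nlinarith [sq_nonneg y, pow_pos hy 2]
    nlinarith
  have hsum_norm : 4 * (P * y ^ 2 + E) ≤ n ^ 2 * β.norm :=
    calc 4 * (P * y ^ 2 + E) ≤ P * E * (2 * y) ^ 2 := by linarith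
      _ ≤ P * E * (n ^ 2 * β.im ^ 2) := by gcongr
      _ = n ^ 2 * (P * E * β.im ^ 2) := by ring
      _ ≤ n ^ 2 * β.norm := by gcongr
  have hsq := pow_le_pow_left₀ (by positivity) hsum_norm 2
  rw [mul_pow, ← hnorm, zsqrtd_norm_pow] at hsq
  have := pow_four_mul_sq_lt hn (x := β.norm) (by nlinarith)
  linarith

lemma not_dvd_re_pow {d p : ℤ} (hp : Prime p) (hd : p ∣ d) {α : ℤ√d} (hα : ¬ p ∣ α.norm) (r : ℕ) :
    ¬ p ∣ (α ^ r).re :=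
  not_dvd_re_of_not_dvd_norm hd fun h => hα (hp.dvd_of_dvd_pow (zsqrtd_norm_pow α r ▸ h))

lemma two_pow_emod_three (k : ℕ) :
    Even k ∧ (2 : ℤ) ^ k % 3 = 1 ∨ Odd k ∧ (2 : ℤ) ^ k % 3 = 2 := by
  induction k with
  | zero => simp
  | succ k ih => rw [pow_succ, Nat.even_add_one, Nat.odd_add_one]; grind

lemma not_nine_dvd_neg_add_three {n k : ℕ} (hn : n = 1 → Odd k) :
    ¬ (9 : ℤ) ∣ -(3 ^ n * 2 ^ k) + 3 := by
  obtain rfl | rfl | hn2 : n = 0 ∨ n = 1 ∨ 2 ≤ n := by omega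
  · have := two_pow_emod_three k
    omega
  · have := two_pow_emod_three k
    have := hn rfl
    grind
  · have h9 : (9 : ℤ) ∣ 3 ^ n * 2 ^ k := (pow_dvd_pow 3 hn2).mul_right _
    omega

variable {B n k t q : ℕ} {α : ℤ√(-((B : ℤ) ^ n * 2 ^ k))}

lemma abs_im_pow_two_mul_ne (hB : B.Prime) (hn : 0 < n) (hk : 0 < k)
    (hα2 : ¬ 2 ∣ α.norm) (hαB : ¬ (B : ℤ) ∣ α.norm)
    (hnorm : (α ^ (2 * q)).norm = ((B : ℤ) ^ n * (B ^ t) ^ 2 + 2 ^ k) ^ 2) :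
    |(α ^ (2 * q)).im| ≠ 2 * (B : ℤ) ^ t := by
  have hBZ : Prime (B : ℤ) := Nat.prime_iff_prime_int.mp hB
  intro him
  rw [mul_comm 2 q, pow_mul] at hnorm him
  have hreB := not_dvd_re_pow hBZ ((dvd_pow_self _ hn.ne').mul_right _).neg_right hαB q
  have hre2 :=
    not_dvd_re_pow Int.prime_two ((dvd_pow_self _ hk.ne').mul_left _).neg_right hα2 q
  rcases re_sq_eq_or_re_sq_eq (by positivity) (by positivity) hnorm him with h | h
  · exact hreB (hBZ.dvd_of_dvd_pow (h ▸ (dvd_pow_self _ hn.ne').mul_right _))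
  · exact hre2 (Int.prime_two.dvd_of_dvd_pow (h ▸ dvd_pow_self _ hk.ne'))

lemma eq_zero_of_abs_im_pow_eq_of_not_dvd (hB : B.Prime) (hn : 0 < n) (hk : 0 < k)
    (hα2 : ¬ 2 ∣ α.norm) (hαB : ¬ (B : ℤ) ∣ α.norm) (hα : α.im ∣ 2) (hq : Odd q) (hBq : ¬ B ∣ q)
    (him : |(α ^ q).im| = 2 * (B : ℤ) ^ t) : t = 0 := by
  have hBZ : Prime (B : ℤ) := Nat.prime_iff_prime_int.mp hB
  have hdB : (B : ℤ) ∣ -((B : ℤ) ^ n * 2 ^ k) := ((dvd_pow_self _ hn.ne').mul_right _).neg_right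
  have hd2 : (2 : ℤ) ∣ -((B : ℤ) ^ n * 2 ^ k) := ((dvd_pow_self _ hk.ne').mul_left _).neg_right
  obtain ⟨u, hu, hBu⟩ := exists_im_pow_eq_mul_not_dvd hBZ hdB
    (not_dvd_re_of_not_dvd_norm hdB hαB) (mt Int.natCast_dvd_natCast.mp hBq)
  have hu_dvd : u ∣ (B : ℤ) ^ t := by
    refine dvd_of_im_pow_eq_mul hd2 (not_dvd_re_of_not_dvd_norm hd2 hα2)
      (by rintro h; simp [h] at hα) hq hu (s := 1) ?_
    rw [← abs_dvd, him, pow_one]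
  have him_dvd : 2 * (B : ℤ) ^ t ∣ 2 * 1 := by
    rw [← him, abs_dvd, hu, mul_one]
    exact (isUnit_of_dvd_prime_pow hBZ hu_dvd hBu).mul_right_dvd.mpr hα
  by_contra ht
  exact hBZ.not_isUnit (isUnit_of_dvd_one
    ((dvd_pow_self _ ht).trans ((mul_dvd_mul_iff_left two_ne_zero).mp him_dvd)))

lemma abs_im_pow_mul_prime_ne (hB : B.Prime) (hB2 : 2 < B) (hn : 0 < n) (hk : 0 < k)
    (hexc : B = 3 → n = 1 → Odd k) (hα2 : ¬ 2 ∣ α.norm) (hαB : ¬ (B : ℤ) ∣ α.norm)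
    (hnorm : (α ^ (q * B)).norm = ((B : ℤ) ^ n * (B ^ t) ^ 2 + 2 ^ k) ^ 2) :
    |(α ^ (q * B)).im| ≠ 2 * (B : ℤ) ^ t := by
  intro him
  have hBt : (0 : ℤ) < (B : ℤ) ^ t := by positivity
  have hdB : (B : ℤ) ∣ -((B : ℤ) ^ n * 2 ^ k) := ((dvd_pow_self _ hn.ne').mul_right _).neg_right
  have hd2 : (2 : ℤ) ∣ -((B : ℤ) ^ n * 2 ^ k) := ((dvd_pow_self _ hk.ne').mul_left _).neg_right
  rw [pow_mul] at hnorm him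
  obtain ⟨u, hu, hBu⟩ := exists_im_pow_self_eq_mul_not_sq_dvd hB hB2 hdB
    (by rintro rfl; exact not_nine_dvd_neg_add_three (hexc rfl))
    (not_dvd_re_pow (Nat.prime_iff_prime_int.mp hB) hdB hαB q)
  have hu_dvd : u ∣ (B : ℤ) ^ t := by
    refine dvd_of_im_pow_eq_mul hd2 (not_dvd_re_pow Int.prime_two hd2 hα2 q)
      (fun h => ?_) (hB.odd_of_ne_two hB2.ne') hu (s := 1) ?_
    · rw [hu, h, zero_mul, abs_zero] at him; omega
    · rw [← abs_dvd, him, pow_one]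
  refine false_of_im_pow_self_le hB2 ?_ ?_ hBt hnorm ?_
  · exact_mod_cast Nat.le_self_pow hn.ne' B
  · exact_mod_cast Nat.le_self_pow hk.ne' 2
  · rw [← him, hu, abs_mul, mul_comm]
    gcongr
    exact abs_le_of_dvd_prime_pow hB hu_dvd hBu

lemma eq_zero_of_abs_im_pow_eq (hB : B.Prime) (hB2 : 2 < B) (hn : 0 < n) (hk : 0 < k)
    (hexc : B = 3 → n = 1 → Odd k) (hα2 : ¬ 2 ∣ α.norm) (hαB : ¬ (B : ℤ) ∣ α.norm)
    (hα : α.im ∣ 2) (hnorm : (α ^ q).norm = ((B : ℤ) ^ n * (B ^ t) ^ 2 + 2 ^ k) ^ 2)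
    (him : |(α ^ q).im| = 2 * (B : ℤ) ^ t) : t = 0 := by
  obtain ⟨r, rfl⟩ | hq := (Nat.even_or_odd q).imp_left even_iff_two_dvd.mp
  · exact absurd him (abs_im_pow_two_mul_ne hB hn hk hα2 hαB hnorm)
  by_cases hBq : B ∣ q
  · obtain ⟨r, rfl⟩ := hBq
    rw [mul_comm B r] at hnorm him
    exact absurd him (abs_im_pow_mul_prime_ne hB hB2 hn hk hexc hα2 hαB hnorm)
  · exact eq_zero_of_abs_im_pow_eq_of_not_dvd hB hn hk hα2 hαB hα hq hBq him

lemma abs_re_cube_ne_two_pow {β : ℤ√(-3)} (hre : ¬ 3 ∣ β.re) (hre2 : 2 ∣ β.re) (him : ¬ 2 ∣ β.im)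
    (l : ℕ) : |(β ^ 3).re| ≠ 2 ^ l := by
  intro h
  have hre_cube : (β ^ 3).re = β.re * (β.re ^ 2 - 9 * β.im ^ 2) := by
    simp only [pow_succ, pow_zero, one_mul, re_mul, im_mul]; ring
  have hre_sq : 4 ∣ β.re ^ 2 := pow_dvd_pow_of_dvd hre2 2
  have him_sq := Int.eight_dvd_sq_sub_one_of_odd
    (Int.not_even_iff_odd.mp (mt even_iff_two_dvd.mp him))
  have hunit : IsUnit (β.re ^ 2 - 9 * β.im ^ 2) := by
    refine isUnit_of_dvd_prime_pow Int.prime_two (t := l) ?_ (by omega)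
    rw [← h, dvd_abs, hre_cube]
    exact dvd_mul_left _ _
  have := three_dvd_sq_sub_one hre
  rcases Int.isUnit_iff.mp hunit with h | h <;> omega

lemma eq_zero_of_abs_im_pow_eq_three_pow {α : ℤ√(-3)} {l : ℕ} (hα2 : ¬ 2 ∣ α.norm)
    (hα3 : ¬ 3 ∣ α.norm) (hα : α.im ∣ 1) (hre : |(α ^ q).re| = 2 ^ l)
    (him : |(α ^ q).im| = 3 ^ t) : t = 0 := by
  have hre3 := not_dvd_re_pow Int.prime_three (by norm_num) hα3
  by_cases hq : 3 ∣ q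
  · obtain ⟨r, rfl⟩ := hq
    rw [mul_comm, pow_mul] at hre him
    have him2 : ¬ 2 ∣ (α ^ r).im := fun h => by
      have : (2 : ℤ) ∣ 3 ^ t := him ▸ (dvd_abs _ _).mpr (h.trans (im_dvd_im_pow _ _))
      exact absurd (Int.prime_two.dvd_of_dvd_pow this) (by norm_num)
    have hre2 : 2 ∣ (α ^ r).re := by
      by_contra hre2
      have hre_sq := Int.eight_dvd_sq_sub_one_of_odd
        (Int.not_even_iff_odd.mp (mt even_iff_two_dvd.mp hre2))
      have him_sq := Int.eight_dvd_sq_sub_one_of_odd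
        (Int.not_even_iff_odd.mp (mt even_iff_two_dvd.mp him2))
      refine hα2 (Int.prime_two.dvd_of_dvd_pow (n := r) ?_)
      rw [← zsqrtd_norm_pow, norm_eq_re_sq_sub]
      omega
    exact absurd hre (abs_re_cube_ne_two_pow (hre3 r) hre2 him2 l)
  · obtain ⟨u, hu, hu3⟩ := exists_im_pow_eq_mul_not_dvd Int.prime_three (by norm_num)
      (not_dvd_re_of_not_dvd_norm (by norm_num) hα3) (mt Int.natCast_dvd_natCast.mp hq)
    have hu_dvd : u ∣ 3 ^ t := by
      rw [← him, dvd_abs, hu]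
      exact dvd_mul_left _ _
    have hdvd_one : (3 : ℤ) ^ t ∣ 1 := by
      rw [← him, abs_dvd, hu]
      exact (isUnit_of_dvd_prime_pow Int.prime_three hu_dvd hu3).mul_right_dvd.mpr hα
    by_contra ht
    exact Int.prime_three.not_isUnit (isUnit_of_dvd_one ((dvd_pow_self 3 ht).trans hdvd_one))

end SameParity

section UniquenessSameParity

lemma not_dvd_of_pow_eq_add_two_pow {p b : ℤ} (hp : Prime p) (hp2 : ¬ p ∣ 2) {m k : ℕ} (hm : m ≠ 0)
    (h : p ^ m = b + 2 ^ k) : ¬ p ∣ b := fun hb =>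
  hp2 (hp.dvd_of_dvd_pow ((dvd_add_right hb).mp (h ▸ dvd_pow_self p hm)))

lemma natCast_not_dvd_two {p : ℕ} (hp : 2 < p) : ¬ (p : ℤ) ∣ 2 := fun h => by
  have := Int.le_of_dvd two_pos h
  omega

lemma natCast_not_dvd_pow {p q : ℕ} (hp : p.Prime) (hq : q.Prime) (hpq : p ≠ q) (n : ℕ) :
    ¬ (p : ℤ) ∣ (q : ℤ) ^ n := fun h =>
  hpq ((Nat.prime_dvd_prime_iff_eq hp hq).mp (hp.dvd_of_dvd_pow (by exact_mod_cast h)))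

lemma exponent_ne_zero {A b : ℤ} {m k : ℕ} (hb : 0 < b) (h : A ^ m = b + 2 ^ k) : m ≠ 0 := by
  rintro rfl
  linarith [one_le_pow₀ (one_le_two (α := ℤ)) (n := k), pow_zero A]

variable {A B k n t m₁ m₂ : ℕ}

lemma eq_zero_of_pow_eq_three_pow_add (hA : A.Prime) (hA2 : 2 < A)
    (h₁ : (A : ℤ) ^ m₁ = 3 + 2 ^ (2 * k)) (h₂ : (A : ℤ) ^ m₂ = 3 ^ (1 + 2 * t) + 2 ^ (2 * k)) :
    t = 0 := by
  have hAZ : Prime (A : ℤ) := Nat.prime_iff_prime_int.mp hA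
  have hAZ2 := natCast_not_dvd_two hA2
  have hm₁ := exponent_ne_zero three_pos h₁
  have hm₂ := exponent_ne_zero (by positivity) h₂
  have hA3 : ¬ (A : ℤ) ∣ -3 := by
    rw [dvd_neg]
    exact not_dvd_of_pow_eq_add_two_pow hAZ hAZ2 hm₁ h₁
  have hprim (y : ℤ) : ¬ ((A : ℤ) : ℤ√(-3)) ∣ ⟨2 ^ k, y⟩ := fun h =>
    hAZ2 (hAZ.dvd_of_dvd_pow ((intCast_dvd _ _).mp h).1)
  have hnorm₁ : (⟨2 ^ k, 1⟩ : ℤ√(-3)).norm = (A : ℤ) ^ m₁ := by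
    rw [h₁, norm_eq_re_sq_sub]; ring
  have hnorm₂ : (⟨2 ^ k, 3 ^ t⟩ : ℤ√(-3)).norm = (A : ℤ) ^ m₂ := by
    rw [h₂, norm_eq_re_sq_sub]; ring
  obtain ⟨h, -, α, hα⟩ :=
    exists_isNormGenerator (by norm_num) hAZ hAZ2 hA3 (by omega) hnorm₁ (hprim 1)
  obtain ⟨q₁, -, -, him₁⟩ := hα.exists_pow _ _ hnorm₁ (hprim 1)
  obtain ⟨q, -, hre, him⟩ := hα.exists_pow _ _ hnorm₂ (hprim _)
  refine eq_zero_of_abs_im_pow_eq_three_pow ?_ ?_ ?_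
    (hre.symm.trans (abs_of_pos (by positivity))) (him.symm.trans (abs_of_pos (by positivity)))
  · rw [hα.norm_eq]
    exact_mod_cast natCast_not_dvd_pow Nat.prime_two hA hA2.ne h
  · rw [hα.norm_eq]
    exact_mod_cast natCast_not_dvd_pow Nat.prime_three hA (by rintro rfl; simp at hA3) h
  · rw [← abs_one, him₁, dvd_abs]
    exact im_dvd_im_pow _ _

lemma eq_zero_of_pow_eq_pow_add_of_pow_eq_pow_add (hA : A.Prime) (hB : B.Prime) (hA2 : 2 < A)
    (hB2 : 2 < B) (hk : 0 < k) (hn : 0 < n) (hexc : B = 3 → n = 1 → Odd k)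
    (h₁ : (A : ℤ) ^ m₁ = (B : ℤ) ^ n + 2 ^ k)
    (h₂ : (A : ℤ) ^ m₂ = (B : ℤ) ^ (n + 2 * t) + 2 ^ k) : t = 0 := by
  have hAZ : Prime (A : ℤ) := Nat.prime_iff_prime_int.mp hA
  have hAZ2 := natCast_not_dvd_two hA2
  have hm₁ := exponent_ne_zero (by positivity) h₁
  have hm₂ := exponent_ne_zero (by positivity) h₂
  have hAd : ¬ (A : ℤ) ∣ -((B : ℤ) ^ n * 2 ^ k) := by
    rw [dvd_neg]
    exact hAZ.not_dvd_mul (not_dvd_of_pow_eq_add_two_pow hAZ hAZ2 hm₁ h₁)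
      (mt hAZ.dvd_of_dvd_pow hAZ2)
  have hAB : A ≠ B := by
    rintro rfl
    exact not_dvd_of_pow_eq_add_two_pow hAZ hAZ2 hm₁ h₁ (dvd_pow_self _ hn.ne')
  have hd : -((B : ℤ) ^ n * 2 ^ k) < -1 := by
    have h2k : (2 : ℤ) ≤ 2 ^ k := by exact_mod_cast Nat.le_self_pow hk.ne' 2
    have hBn : (0 : ℤ) < (B : ℤ) ^ n := by positivity
    nlinarith
  have hprim {m N : ℕ} (hm : m ≠ 0) (h : (A : ℤ) ^ m = (B : ℤ) ^ N + 2 ^ k) (y : ℤ) :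
      ¬ ((A : ℤ) : ℤ√(-((B : ℤ) ^ n * 2 ^ k))) ∣ ⟨(B : ℤ) ^ N - 2 ^ k, y⟩ := fun hdvd => by
    have hsub := dvd_sub (h ▸ dvd_pow_self (A : ℤ) hm) ((intCast_dvd _ _).mp hdvd).1
    rw [show (B : ℤ) ^ N + 2 ^ k - (B ^ N - 2 ^ k) = 2 ^ (k + 1) by ring] at hsub
    exact hAZ2 (hAZ.dvd_of_dvd_pow hsub)
  have hnorm₁ : (⟨(B : ℤ) ^ n - 2 ^ k, 2⟩ : ℤ√(-((B : ℤ) ^ n * 2 ^ k))).norm = A ^ (m₁ * 2) := by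
    rw [pow_mul, h₁, norm_eq_re_sq_sub]; ring
  have hnorm₂ : (⟨(B : ℤ) ^ (n + 2 * t) - 2 ^ k, 2 * B ^ t⟩ : ℤ√(-((B : ℤ) ^ n * 2 ^ k))).norm
      = A ^ (m₂ * 2) := by
    rw [pow_mul, h₂, norm_eq_re_sq_sub]; ring
  obtain ⟨h, -, α, hα⟩ :=
    exists_isNormGenerator hd hAZ hAZ2 hAd (by omega) hnorm₁ (hprim hm₁ h₁ 2)
  obtain ⟨q₁, -, -, him₁⟩ := hα.exists_pow _ _ hnorm₁ (hprim hm₁ h₁ 2)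
  obtain ⟨q, hq, -, him⟩ := hα.exists_pow _ _ hnorm₂ (hprim hm₂ h₂ _)
  refine eq_zero_of_abs_im_pow_eq hB hB2 hn hk hexc ?_ ?_ ?_ ?_
    (him.symm.trans (abs_of_pos (by positivity)))
  · rw [hα.norm_eq]
    exact_mod_cast natCast_not_dvd_pow Nat.prime_two hA hA2.ne h
  · rw [hα.norm_eq]
    exact natCast_not_dvd_pow hB hA hAB.symm h
  · have hdvd : α.im ∣ |(α ^ q₁).im| := (dvd_abs _ _).mpr (im_dvd_im_pow α q₁)
    rwa [← him₁, abs_two] at hdvd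
  · rw [zsqrtd_norm_pow, hα.norm_eq, ← pow_mul, ← hq, pow_mul, h₂]; ring

lemma eq_zero_of_exponents_same_parity (hA : A.Prime) (hB : B.Prime) (hA2 : 2 < A)
    (hB2 : 2 < B) (hk : 0 < k) (hn : 0 < n)
    (h₁ : (A : ℤ) ^ m₁ = (B : ℤ) ^ n + 2 ^ k)
    (h₂ : (A : ℤ) ^ m₂ = (B : ℤ) ^ (n + 2 * t) + 2 ^ k) : t = 0 := by
  by_cases hexc : B = 3 → n = 1 → Odd k
  · exact eq_zero_of_pow_eq_pow_add_of_pow_eq_pow_add hA hB hA2 hB2 hk hn hexc h₁ h₂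
  · push Not at hexc
    obtain ⟨rfl, rfl, hkeven⟩ := hexc
    obtain ⟨l, rfl⟩ := even_iff_two_dvd.mp (Nat.not_odd_iff_even.mp hkeven)
    exact eq_zero_of_pow_eq_three_pow_add hA hA2 (by simpa using h₁) h₂

end UniquenessSameParity

section Congruences

lemma dvd_pow_two_mul_sub_one {M x : ℤ} (h : M ∣ x ^ 2 - 1) (n : ℕ) : M ∣ x ^ (2 * n) - 1 := by
  rw [pow_mul]
  exact h.trans (sub_one_dvd_pow_sub_one (x ^ 2) n)

lemma dvd_pow_two_mul_add_one_sub_self {M x : ℤ} (h : M ∣ x ^ 2 - 1) (n : ℕ) :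
    M ∣ x ^ (2 * n + 1) - x := by
  rw [pow_succ, ← sub_one_mul]
  exact (dvd_pow_two_mul_sub_one h n).mul_right x

lemma pow_emod_eight {x : ℤ} (hx : Odd x) (n : ℕ) :
    Even n ∧ x ^ n % 8 = 1 ∨ Odd n ∧ x ^ n % 8 = x % 8 := by
  have h8 := Int.eight_dvd_sq_sub_one_of_odd hx
  obtain ⟨m, rfl | rfl⟩ := Nat.even_or_odd' n
  · exact .inl ⟨even_two_mul m, by have := dvd_pow_two_mul_sub_one h8 m; omega⟩
  · exact .inr ⟨odd_two_mul_add_one m, by have := dvd_pow_two_mul_add_one_sub_self h8 m; omega⟩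

lemma two_pow_succ_dvd_sq_sub_one {x : ℤ} (hx : Odd x) {s : ℕ} (h : 2 ^ s ∣ x - 1) :
    2 ^ (s + 1) ∣ x ^ 2 - 1 := by
  rw [show x ^ 2 - 1 = (x - 1) * (x + 1) by ring, pow_succ]
  exact mul_dvd_mul h (even_iff_two_dvd.mp hx.add_one)

lemma two_pow_dvd_pow_two_pow_mul_sub_one {x : ℤ} (hx : Odd x) (f r : ℕ) :
    2 ^ (f + 3) ∣ x ^ (2 ^ (f + 1) * r) - 1 := by
  induction f with
  | zero =>
    rw [zero_add, pow_one]
    exact dvd_pow_two_mul_sub_one (Int.eight_dvd_sq_sub_one_of_odd hx) r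
  | succ f ih =>
    rw [show 2 ^ (f + 1 + 1) * r = 2 ^ (f + 1) * r * 2 by ring, pow_mul _ _ 2]
    exact two_pow_succ_dvd_sq_sub_one hx.pow ih

lemma even_of_two_pow_succ_dvd_pow_sub_one {x : ℤ} (hx : Odd x) {s n : ℕ} (h : 2 ^ s ∣ x - 1)
    (h' : ¬ 2 ^ (s + 1) ∣ x - 1) (hn : 2 ^ (s + 1) ∣ x ^ n - 1) : Even n := by
  obtain ⟨m, rfl | rfl⟩ := Nat.even_or_odd' n
  · exact even_two_mul m
  · have hsub := dvd_sub hn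
      (dvd_pow_two_mul_add_one_sub_self (two_pow_succ_dvd_sq_sub_one hx h) m)
    exact absurd (by simpa using hsub) h'

lemma eq_three_of_dvd_pow {p n : ℕ} (hp : p.Prime) (h : (3 : ℤ) ∣ (p : ℤ) ^ n) : p = 3 := by
  by_contra hp3
  exact natCast_not_dvd_pow Nat.prime_three hp (Ne.symm hp3) n (by exact_mod_cast h)

end Congruences

section DifferenceOfSquares

lemma eq_add_two_of_sq_eq_sq_add_two_pow {x y : ℤ} {k : ℕ} (hx : Odd x) (hy : Odd y)
    (hx0 : 0 < x) (hy0 : 0 < y) (h : x ^ 2 = y ^ 2 + 2 ^ k) :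
    x = y + 2 ∧ 2 ^ k = 4 * (y + 1) := by
  have hyx : y < x := by
    refine lt_of_pow_lt_pow_left₀ 2 hx0.le ?_
    rw [h]; exact lt_add_of_pos_right _ (by positivity)
  have hsub : x - y ∣ 2 ^ k := ⟨x + y, by linear_combination -h⟩
  have hadd : x + y ∣ 2 ^ k := ⟨x - y, by linear_combination -h⟩
  obtain ⟨u, hu⟩ : 2 ∣ x - y := even_iff_two_dvd.mp (hx.sub_odd hy)
  obtain ⟨v, hv⟩ : 2 ∣ x + y := even_iff_two_dvd.mp (hx.add_odd hy)
  have huv : ¬ 2 ∣ u ∨ ¬ 2 ∣ v := by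
    obtain ⟨c, rfl⟩ := hx
    omega
  have hxy : x = y + 2 := by
    rcases huv with hu2 | hv2
    · have := isUnit_of_dvd_prime_pow Int.prime_two ((Dvd.intro_left 2 hu.symm).trans hsub) hu2
      rcases Int.isUnit_iff.mp this with rfl | rfl <;> omega
    · have := isUnit_of_dvd_prime_pow Int.prime_two ((Dvd.intro_left 2 hv.symm).trans hadd) hv2
      rcases Int.isUnit_iff.mp this with rfl | rfl <;> omega
  exact ⟨hxy, by subst hxy; linear_combination -h⟩

lemma not_and_of_even_exponent {a b : ℤ} (ha : Odd a) (hb : Odd b) (ha0 : 0 < a) (hb1 : 1 < b)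
    {i j k m c : ℕ} (hj : j ≠ 0) (h₁ : a ^ (2 * i) = b ^ (2 * j) + 2 ^ k)
    (h₂ : a ^ m = b ^ (2 * c + 1) + 2 ^ k) : False := by
  obtain ⟨hxy, hk⟩ := eq_add_two_of_sq_eq_sq_add_two_pow (ha.pow (n := i)) (hb.pow (n := j))
    (by positivity) (by positivity) (by rw [← pow_mul', ← pow_mul', h₁])
  have hy1 : 1 < b ^ j := one_lt_pow₀ hb1 hj
  obtain ⟨n, rfl⟩ : ∃ n, k = n + 4 := by
    refine Nat.exists_eq_add_of_le' ?_
    by_contra! hk4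
    have := hb.pow (n := j)
    interval_cases k <;> omega
  rw [pow_add 2 n] at hk h₂
  have hai := pow_emod_eight ha i
  have hbj := pow_emod_eight hb j
  have ham : a ^ m % 8 = b % 8 := by
    have hbc := dvd_pow_two_mul_add_one_sub_self (Int.eight_dvd_sq_sub_one_of_odd hb) c
    omega
  have ham' := pow_emod_eight ha m
  have hi : Even i := by by_contra hi; simp [hi] at hai; omega
  obtain ⟨e, rfl⟩ := even_iff_two_dvd.mp hi
  obtain ⟨he, hn⟩ := eq_add_two_of_sq_eq_sq_add_two_pow (k := n + 2) (ha.pow (n := e)) odd_one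
    (by positivity) one_pos (by rw [← pow_mul', hxy, pow_add]; omega)
  have hae := pow_emod_eight ha e
  rw [pow_add] at hn
  omega

end DifferenceOfSquares

section FermatBase

variable {d : ℤ} {α : ℤ√d}

lemma odd_re_pow (hd : Even d) (hre : Odd α.re) (n : ℕ) : Odd (α ^ n).re := by
  cases n with
  | zero => simp
  | succ n =>
    obtain ⟨v, w, h, -⟩ := exists_re_im_pow_succ_eq α n
    rw [h, mul_assoc]
    exact hre.pow.add_even (hd.mul_right _)

lemma exists_im_pow_two_pow_mul_eq (hd : Even d) (hre : Odd α.re) {r : ℕ} (hr : Odd r) (f : ℕ) :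
    ∃ o, Odd o ∧ (α ^ (2 ^ f * r)).im = 2 ^ f * (α.im * o) := by
  induction f with
  | zero =>
    obtain ⟨s, rfl⟩ := hr
    obtain ⟨v, w, -, him⟩ := exists_re_im_pow_succ_eq α (2 * s)
    refine ⟨_, .add_even (.mul ?_ hre.pow) ((hd.mul_right _).mul_right w), by simpa using him⟩
    exact_mod_cast odd_two_mul_add_one s
  | succ f ih =>
    obtain ⟨o, ho, him⟩ := ih
    refine ⟨_, (odd_re_pow hd hre (2 ^ f * r)).mul ho, ?_⟩
    rw [show 2 ^ (f + 1) * r = 2 ^ f * r * 2 by ring, pow_mul, pow_two, im_mul, him]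
    ring

lemma im_pow_ne_one (hd : Even d) (hre : α.re = 1) (him : α.im = 1) {s : ℕ} (hs : s ≠ 0)
    (hs2 : Even s) : (α ^ (2 * s + 1)).im ≠ 1 := by
  intro h
  obtain ⟨f, r, hr, rfl⟩ := Nat.exists_eq_two_pow_mul_odd hs
  obtain ⟨g, rfl⟩ : ∃ g, f = g + 1 := Nat.exists_eq_succ_of_ne_zero <| by
    rintro rfl
    exact Nat.not_even_iff_odd.mpr hr (by simpa using hs2)
  have hre1 : Odd α.re := hre ▸ odd_one
  obtain ⟨o, ho, hy⟩ := exists_im_pow_two_pow_mul_eq hd hre1 hr (g + 1)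
  have hx := odd_re_pow hd hre1 (2 ^ (g + 1) * r)
  have hnorm := two_pow_dvd_pow_two_pow_mul_sub_one (x := α.norm) (by
    rw [norm_eq_re_sq_sub, hre, him]; simpa using odd_one.sub_even hd) g r
  rw [← zsqrtd_norm_pow, norm_eq_re_sq_sub] at hnorm
  rw [pow_succ, pow_mul', pow_two, im_mul, re_mul, im_mul, hre, him] at h
  set x := (α ^ (2 ^ (g + 1) * r)).re
  set y := (α ^ (2 ^ (g + 1) * r)).im
  rw [him, one_mul] at hy
  have hfac : 2 ^ (g + 2) * (o * (x + d * y)) = -(x ^ 2 - d * y ^ 2 - 1) := by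
    linear_combination h - 2 * (x + d * y) * hy
  have hdvd : 2 ^ (g + 2) * 2 ∣ 2 ^ (g + 2) * (o * (x + d * y)) := by
    rw [← pow_succ, hfac, dvd_neg]
    exact hnorm
  have hodd := ho.mul (hx.add_even (hd.mul_right y))
  exact Int.not_even_iff_odd.mpr hodd
    (even_iff_two_dvd.mpr ((mul_dvd_mul_iff_left (by positivity)).mp hdvd))

lemma im_pow_four_mul_add_one_emod_four (hd : Even d) (hre : α.re = 1) (him : α.im = 1) (n : ℕ) :
    (α ^ (4 * n + 1)).im % 4 = 1 := by
  have h4 : ((4 : ℤ) : ℤ√d) ∣ α ^ 4 - 1 := by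
    obtain ⟨c, rfl⟩ := hd
    rw [intCast_dvd]
    simp only [pow_succ, pow_zero, one_mul, re_sub, im_sub, re_mul, im_mul, re_one, im_one, hre,
      him]
    exact ⟨⟨3 * c + c ^ 2, by ring⟩, ⟨1 + 2 * c, by ring⟩⟩
  have hdvd : ((4 : ℤ) : ℤ√d) ∣ α ^ (4 * n + 1) - α := by
    rw [pow_succ, pow_mul, ← sub_one_mul]
    exact (h4.trans (sub_one_dvd_pow_sub_one _ n)).mul_right α
  have him_dvd := ((intCast_dvd _ _).mp hdvd).2
  rw [im_sub, him] at him_dvd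
  omega

lemma eq_one_of_one_add_two_pow_pow_eq {k q : ℕ} {y : ℤ} (hk : 0 < k)
    (hp : Prime (1 + 2 ^ k : ℤ)) (hq : q % 4 = 1) (h : (1 + 2 ^ k : ℤ) ^ q = y ^ 2 + 2 ^ k) :
    q = 1 := by
  have h2k : (2 : ℤ) ≤ 2 ^ k := by exact_mod_cast Nat.le_self_pow hk.ne' 2
  have hp_not_dvd : ¬ (1 + 2 ^ k : ℤ) ∣ -2 ^ k := fun hdvd => by
    have := Int.le_of_dvd (by positivity) ((dvd_neg).mp hdvd)
    omega
  have hgen : IsNormGenerator (1 + 2 ^ k) 1 (⟨1, 1⟩ : ℤ√(-2 ^ k)) := by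
    refine isNormGenerator_of_norm_eq (by omega) hp (fun hdvd => ?_) hp_not_dvd ?_
    · have := Int.le_of_dvd two_pos hdvd
      omega
    · rw [norm_eq_re_sq_sub]; ring
  obtain ⟨r, hr, -, him⟩ := hgen.exists_pow q ⟨y, 1⟩ (by rw [h, norm_eq_re_sq_sub]; ring)
    fun hdvd => hp.not_isUnit (isUnit_of_dvd_one ((intCast_dvd _ _).mp hdvd).2)
  obtain ⟨n, rfl⟩ : ∃ n, r = 2 * (2 * n) + 1 := ⟨q / 4, by omega⟩
  have hd : Even (-2 ^ k : ℤ) := ((even_two).pow_of_ne_zero hk.ne').neg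
  have h4 := im_pow_four_mul_add_one_emod_four (α := ⟨1, 1⟩) hd rfl rfl n
  rw [show 4 * n + 1 = 2 * (2 * n) + 1 by ring] at h4
  have hone : ((⟨1, 1⟩ : ℤ√(-2 ^ k)) ^ (2 * (2 * n) + 1)).im = 1 := by
    rcases (abs_eq one_pos.le).mp (him.symm.trans abs_one) with h | h <;> omega
  have hn : 2 * n = 0 := by
    by_contra hn
    exact im_pow_ne_one hd rfl rfl hn (even_two_mul n) hone
  omega

end FermatBase

section Parity

variable {A B : ℕ} {e i j k m c l : ℕ}

lemma eq_three_or_eq_three_of_odd_exponent (hA : A.Prime) (hB : B.Prime)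
    (h : (A : ℤ) ^ m = (B : ℤ) ^ (2 * j) + 2 ^ (2 * l + 1)) : A = 3 ∨ B = 3 := by
  by_contra! h3
  have hB3 : ¬ (3 : ℤ) ∣ B := fun hdvd => h3.2 (eq_three_of_dvd_pow hB (n := 1) (by simpa))
  have hsq := dvd_pow_two_mul_sub_one (three_dvd_sq_sub_one hB3) j
  have h2 := two_pow_emod_three (2 * l + 1)
  rw [← Nat.not_odd_iff_even] at h2
  simp only [odd_two_mul_add_one, not_true, false_and, true_and, false_or] at h2
  exact h3.1 (eq_three_of_dvd_pow hA (n := m) (by omega))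

lemma three_pow_ne_pow_add_two {b : ℤ} (hb : 16 ∣ b ^ 2 - 1) (hb1 : 1 < b) (hj : j ≠ 0) :
    3 ^ (2 * e + 1) ≠ b ^ (2 * j) + 2 := by
  intro h
  have he : Even e := by
    refine even_of_two_pow_succ_dvd_pow_sub_one (x := 9) (s := 3) (by decide) (by norm_num)
      (by norm_num) ?_
    have h16 := dvd_pow_two_mul_sub_one hb j
    have h9 : 9 ^ e * 3 = b ^ (2 * j) + 2 := by rw [← h, pow_succ, pow_mul]; norm_num
    omega
  obtain ⟨r, rfl⟩ := even_iff_two_dvd.mp he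
  have hq := eq_one_of_one_add_two_pow_pow_eq (k := 1) (q := 2 * (2 * r) + 1)
    (y := b ^ j) one_pos
    (by norm_num [Int.prime_three]) (by omega) (by rw [← pow_mul', pow_one, ← h]; norm_num)
  have hpow := one_lt_pow₀ hb1 (mul_ne_zero two_ne_zero hj)
  rw [hq] at h
  omega

lemma not_and_of_odd_two_exponent (hA : A.Prime) (hB : B.Prime) (hA2 : 2 < A) (hB2 : 2 < B)
    (hj : j ≠ 0) (h₁ : (A : ℤ) ^ (2 * e + 1) = (B : ℤ) ^ (2 * j) + 2 ^ (2 * l + 1))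
    (h₂ : (A : ℤ) ^ m = (B : ℤ) ^ (2 * c + 1) + 2 ^ (2 * l + 1)) : False := by
  have hAodd : Odd (A : ℤ) := by exact_mod_cast hA.odd_of_ne_two hA2.ne'
  have hBodd : Odd (B : ℤ) := by exact_mod_cast hB.odd_of_ne_two hB2.ne'
  have h3 := eq_three_or_eq_three_of_odd_exponent hA hB h₁
  have hAe := dvd_pow_two_mul_add_one_sub_self (Int.eight_dvd_sq_sub_one_of_odd hAodd) e
  have hAm := pow_emod_eight hAodd m
  have hBj := dvd_pow_two_mul_sub_one (Int.eight_dvd_sq_sub_one_of_odd hBodd) j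
  have hBc := dvd_pow_two_mul_add_one_sub_self (Int.eight_dvd_sq_sub_one_of_odd hBodd) c
  cases l with
  | zero =>
    have hB8 : (B : ℤ) % 8 = 1 ∨ (B : ℤ) % 8 = 7 := by
      rw [mul_zero, zero_add, pow_one] at h₁ h₂
      omega
    have hB16 : (16 : ℤ) ∣ (B : ℤ) ^ 2 - 1 := by
      obtain ⟨b, hb⟩ : ∃ b : ℤ, (B : ℤ) = 8 * b + 1 ∨ (B : ℤ) = 8 * b - 1 :=
        ⟨(B + 1) / 8, by omega⟩
      rcases hb with hb | hb <;> rw [hb]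
      · exact ⟨4 * b ^ 2 + b, by ring⟩
      · exact ⟨4 * b ^ 2 - b, by ring⟩
    obtain rfl : A = 3 := by omega
    exact three_pow_ne_pow_add_two hB16 (by omega) hj (by exact_mod_cast h₁)
  | succ l =>
    rw [show 2 * (l + 1) + 1 = 2 * l + 3 by ring, pow_add 2 (2 * l)] at h₁ h₂
    omega

lemma eq_two_pow_add_one_of_sq_eq (hB : B.Prime) (hB2 : 2 < B) {x : ℤ} (hx : 0 < x)
    (h : x ^ 2 = (B : ℤ) ^ m + 2 ^ (2 * l)) : x = 2 ^ l + 1 ∧ (B : ℤ) ^ m = 2 ^ (l + 1) + 1 := by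
  have hBZ : Prime (B : ℤ) := Nat.prime_iff_prime_int.mp hB
  have hfac : (x - 2 ^ l) * (x + 2 ^ l) = (B : ℤ) ^ m := by
    rw [pow_mul'] at h; linear_combination h
  have hsub : 0 < x - 2 ^ l := by
    have hpos : 0 < (x - 2 ^ l) * (x + 2 ^ l) := by rw [hfac]; positivity
    exact pos_of_mul_pos_left hpos (by positivity)
  have hunit : IsUnit (x - 2 ^ l) := by
    refine isUnit_of_dvd_prime_pow hBZ (Dvd.intro _ hfac) fun hdvd => ?_
    have hadd : ¬ (B : ℤ) ∣ x + 2 ^ l := fun hdvd' => by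
      have h2 := dvd_sub hdvd' hdvd
      rw [show x + 2 ^ l - (x - 2 ^ l) = 2 ^ (l + 1) by ring] at h2
      exact natCast_not_dvd_two hB2 (hBZ.dvd_of_dvd_pow h2)
    have := isUnit_of_dvd_prime_pow hBZ (Dvd.intro_left _ hfac) hadd
    have h1 := Int.isUnit_iff.mp this
    have : (0 : ℤ) < 2 ^ l := by positivity
    omega
  have hx_eq : x = 2 ^ l + 1 := by
    have h1 := Int.isUnit_iff.mp hunit
    omega
  exact ⟨hx_eq, by rw [← hfac, hx_eq]; ring⟩

lemma not_and_of_even_exponent_right (hA : A.Prime) (hB : B.Prime) (hA2 : 2 < A) (hB2 : 2 < B)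
    (hl : 0 < l) (h₁ : (A : ℤ) ^ (2 * e + 1) = (B : ℤ) ^ (2 * j) + 2 ^ (2 * l))
    (h₂ : (A : ℤ) ^ (2 * i) = (B : ℤ) ^ (2 * c + 1) + 2 ^ (2 * l)) : False := by
  have hAodd : Odd (A : ℤ) := by exact_mod_cast hA.odd_of_ne_two hA2.ne'
  have hBodd : Odd (B : ℤ) := by exact_mod_cast hB.odd_of_ne_two hB2.ne'
  obtain ⟨hAi, hBc⟩ := eq_two_pow_add_one_of_sq_eq hB hB2 (x := (A : ℤ) ^ i) (by positivity)
    (by rw [← pow_mul', h₂])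
  have h3 : A = 3 ∨ B = 3 := by
    rcases two_pow_emod_three l with ⟨-, hl3⟩ | ⟨-, hl3⟩
    · exact .inr (eq_three_of_dvd_pow hB (n := 2 * c + 1) (by rw [hBc, pow_succ]; omega))
    · exact .inl (eq_three_of_dvd_pow hA (n := i) (by omega))
  have hAe := dvd_pow_two_mul_add_one_sub_self (Int.eight_dvd_sq_sub_one_of_odd hAodd) e
  have hAi' := dvd_pow_two_mul_sub_one (Int.eight_dvd_sq_sub_one_of_odd hAodd) i
  have hBj := dvd_pow_two_mul_sub_one (Int.eight_dvd_sq_sub_one_of_odd hBodd) j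
  have hBc' := dvd_pow_two_mul_add_one_sub_self (Int.eight_dvd_sq_sub_one_of_odd hBodd) c
  have h4 : (4 : ℤ) ∣ 2 ^ (2 * l) := by
    rw [pow_mul]; exact dvd_pow_self _ hl.ne'
  omega

end Parity

section OddExponents

variable {e i j k c l : ℕ}

lemma two_pow_dvd_sub_one_of_odd_exponents {a b : ℤ} (ha : Odd a) (hb : Odd b)
    (h₁ : a ^ (2 * e + 1) = b ^ (2 * j) + 2 ^ k) (h₂ : a ^ (2 * i + 1) = b ^ (2 * c + 1) + 2 ^ k)
    {s : ℕ} (hs : s ≤ k + 1) : 2 ^ s ∣ b - 1 ∧ 2 ^ s ∣ a - 1 - 2 ^ k := by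
  induction s with
  | zero => simp
  | succ s ih =>
    obtain ⟨ihb, iha⟩ := ih (by omega)
    have ha_dvd : 2 ^ s ∣ a - 1 := (dvd_sub_left (pow_dvd_pow 2 (by omega))).mp iha
    have ha_sq := two_pow_succ_dvd_sq_sub_one ha ha_dvd
    have hb_sq := two_pow_succ_dvd_sq_sub_one hb ihb
    have hae := dvd_pow_two_mul_add_one_sub_self ha_sq e
    have hai := dvd_pow_two_mul_add_one_sub_self ha_sq i
    have hbj := dvd_pow_two_mul_sub_one hb_sq j
    have hbc := dvd_pow_two_mul_add_one_sub_self hb_sq c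
    have ha_succ : 2 ^ (s + 1) ∣ a - 1 - 2 ^ k := by
      have hdvd := dvd_sub hbj hae
      rwa [h₁, show b ^ (2 * j) - 1 - (b ^ (2 * j) + 2 ^ k - a) = a - 1 - 2 ^ k by ring] at hdvd
    refine ⟨?_, ha_succ⟩
    have hdvd := dvd_add (dvd_sub hai hbc) ha_succ
    rwa [h₂, show b ^ (2 * c + 1) + 2 ^ k - a - (b ^ (2 * c + 1) - b) + (a - 1 - 2 ^ k) = b - 1 by
      ring] at hdvd

lemma exists_eq_sq_add_four_mul_sq {p : ℕ} (hp : p.Prime) (hp4 : p % 4 = 1) :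
    ∃ x y : ℤ, ¬ 2 ∣ x ∧ (p : ℤ) = x ^ 2 + 4 * y ^ 2 := by
  have := Fact.mk hp
  obtain ⟨a, b, hab⟩ := Nat.Prime.sq_add_sq (p := p) (by omega)
  obtain ⟨x, rfl | rfl⟩ := Nat.even_or_odd' a <;> obtain ⟨y, rfl | rfl⟩ := Nat.even_or_odd' b
  · ring_nf at hab; omega
  · exact ⟨2 * y + 1, x, by omega, by rw [← hab]; push_cast; ring⟩
  · exact ⟨2 * x + 1, y, by omega, by rw [← hab]; push_cast; ring⟩
  · ring_nf at hab; omega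

lemma exists_eq_sq_add_two_pow {p : ℕ} (hp : p.Prime) (hp4 : p % 4 = 1) {b : ℤ}
    (h : (p : ℤ) ^ (2 * e + 1) = b ^ 2 + 2 ^ (2 * (l + 1))) :
    ∃ x : ℤ, (p : ℤ) = x ^ 2 + 2 ^ (2 * (l + 1)) := by
  have hpZ : Prime (p : ℤ) := Nat.prime_iff_prime_int.mp hp
  have hp2 := natCast_not_dvd_two (p := p) (by have := hp.two_le; omega)
  obtain ⟨x, y, hx, hxy⟩ := exists_eq_sq_add_four_mul_sq hp hp4
  have hnorm : (⟨x, y⟩ : ℤ√(-4)).norm = p := by rw [norm_eq_re_sq_sub, hxy]; ring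
  have hp4' : ¬ (p : ℤ) ∣ -4 := by
    rw [dvd_neg, show (4 : ℤ) = 2 ^ 2 by norm_num]
    exact mt hpZ.dvd_of_dvd_pow hp2
  obtain ⟨q, hq, -, him⟩ :=
    (isNormGenerator_of_norm_eq (by norm_num) hpZ hp2 hp4' hnorm).exists_pow (2 * e + 1)
      ⟨b, 2 ^ l⟩ (by rw [norm_eq_re_sq_sub, h]; ring)
      fun hdvd => hp2 (hpZ.dvd_of_dvd_pow ((intCast_dvd _ _).mp hdvd).2)
  rw [one_mul] at hq
  subst hq
  obtain ⟨u, hu, hu2⟩ := exists_im_pow_eq_mul_not_dvd (α := (⟨x, y⟩ : ℤ√(-4))) Int.prime_two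
    (by norm_num) hx (n := 2 * e + 1) (by omega)
  have hu_unit : IsUnit u := by
    refine isUnit_of_dvd_prime_pow Int.prime_two (t := l) ?_ hu2
    rw [← dvd_abs, him, dvd_abs, hu]
    exact dvd_mul_left _ _
  rw [hu, abs_mul, Int.isUnit_iff_abs_eq.mp hu_unit, mul_one] at him
  refine ⟨x, ?_⟩
  rw [hxy, ← sq_abs y, ← him, sq_abs]
  ring

section UnitImaginaryPart

variable {d : ℤ} {α : ℤ√d} {q t : ℕ} {B : ℕ}

lemma abs_re_pow_mul_prime_ne (hB : B.Prime) (hB2 : 2 < B) (hd : d < 0) (hBd : ¬ (B : ℤ) ∣ d)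
    (hBα : (B : ℤ) ∣ α.re) (him : |(α ^ B).im| = 1) : |(α ^ B).re| ≠ (B : ℤ) ^ t := by
  intro hre
  have hα_im : |α.im| = 1 := Int.isUnit_iff_abs_eq.mp <| isUnit_of_dvd_unit
    (im_dvd_im_pow α B) (Int.isUnit_iff_abs_eq.mpr him)
  have hα_sq : α.im ^ 2 = 1 := by rw [← sq_abs, hα_im, one_pow]
  obtain ⟨v, hv, hv_sq⟩ :=
    exists_re_pow_self_eq_mul_not_sq_dvd hB hB2 hBα (by rwa [hα_sq, mul_one])
  have hv_le : |v| ≤ B := by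
    refine abs_le_of_dvd_prime_pow hB (t := t) ?_ hv_sq
    rw [← hre, dvd_abs, hv]
    exact dvd_mul_left _ _
  have hα_re : α.re ≠ 0 := fun h => by
    rw [hv, h, zero_mul, abs_zero] at hre
    exact pow_ne_zero t (by exact_mod_cast hB.ne_zero) hre.symm
  have hnorm := norm_le_of_abs_re_im_pow_le (α := α) hd.le (n := B) hB2
    (by rw [hv, abs_mul, mul_comm]; gcongr) (by rw [him, hα_im, mul_one]; exact_mod_cast hB.one_le)
  have hB_le : (B : ℤ) ≤ |α.re| := Int.le_of_dvd (abs_pos.mpr hα_re) ((dvd_abs _ _).mpr hBα)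
  rw [norm_eq_re_sq_sub, hα_sq, ← sq_abs α.re] at hnorm
  nlinarith

lemma norm_pow_eq_norm_of_abs_re_im_eq (hB : B.Prime) (hB2 : 2 < B) (hd : d < 0)
    (hBd : ¬ (B : ℤ) ∣ d) (hBα : (B : ℤ) ∣ α.re) (hq : Odd q) (hre : |(α ^ q).re| = (B : ℤ) ^ t)
    (him : |(α ^ q).im| = 1) : (α ^ q).norm = α.norm := by
  have hα_im : |α.im| = 1 := Int.isUnit_iff_abs_eq.mp <| isUnit_of_dvd_unit
    (im_dvd_im_pow α q) (Int.isUnit_iff_abs_eq.mpr him)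
  have hα_sq : α.im ^ 2 = 1 := by rw [← sq_abs, hα_im, one_pow]
  by_cases hBq : B ∣ q
  · obtain ⟨r, rfl⟩ := hBq
    rw [mul_comm, pow_mul] at hre him
    exact absurd hre (abs_re_pow_mul_prime_ne hB hB2 hd hBd
      (hBα.trans (re_dvd_re_pow α (Nat.odd_mul.mp hq).2)) him)
  · have hBZ : Prime (B : ℤ) := Nat.prime_iff_prime_int.mp hB
    obtain ⟨v, hv, hBv⟩ := exists_re_pow_eq_mul_not_dvd hBZ hBα (by rwa [hα_sq, mul_one]) hq
      (mt Int.natCast_dvd_natCast.mp hBq)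
    have hv_unit : IsUnit v := by
      refine isUnit_of_dvd_prime_pow hBZ (t := t) ?_ hBv
      rw [← hre, dvd_abs, hv]
      exact dvd_mul_left _ _
    rw [norm_eq_re_sq_sub, norm_eq_re_sq_sub, hα_sq, ← sq_abs (α ^ q).im, him, hv, mul_pow,
      ← sq_abs v, Int.isUnit_iff_abs_eq.mp hv_unit]
    ring

end UnitImaginaryPart

lemma eq_one_of_one_add_two_pow_pow_eq_pow_add {b : ℤ} {q : ℕ} (hk : 2 ≤ k) (hb : Odd b)
    (hbk : 2 ^ (k + 1) ∣ b - 1) (hp : Prime (1 + 2 ^ k : ℤ)) (hq : Odd q)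
    (h : (1 + 2 ^ k : ℤ) ^ q = b ^ (2 * j) + 2 ^ k) : q = 1 := by
  obtain ⟨n, rfl⟩ : ∃ n, k = n + 2 := Nat.exists_eq_add_of_le' hk
  obtain ⟨r, rfl⟩ := hq
  set a : ℤ := 1 + 2 ^ (n + 2) with ha
  have ha_odd : Odd a := odd_one.add_even (even_two.pow_of_ne_zero (by omega))
  have ha_sq : a ^ 2 - 1 = 2 ^ (n + 3) * (2 * 2 ^ n + 1) := by rw [ha]; ring
  have hr : Even r := by
    refine even_of_two_pow_succ_dvd_pow_sub_one (ha_odd.pow (n := 2)) (s := n + 3)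
      (Dvd.intro _ ha_sq.symm) ?_ ?_
    · rw [ha_sq, pow_succ, mul_dvd_mul_iff_left (by positivity)]
      omega
    · have hbj := dvd_pow_two_mul_sub_one (two_pow_succ_dvd_sq_sub_one hb hbk) j
      rw [show b ^ (2 * j) - 1 = a * ((a ^ 2) ^ r - 1) by rw [← pow_mul]; linear_combination -h]
        at hbj
      exact (IsCoprime.pow_left (Int.isCoprime_two_left.mpr ha_odd)).dvd_of_dvd_mul_left hbj
  obtain ⟨s, rfl⟩ := even_iff_two_dvd.mp hr
  exact eq_one_of_one_add_two_pow_pow_eq (y := b ^ j) (by omega) hp (by omega)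
    (by rw [h, pow_mul'])

lemma eq_one_of_pow_eq_pow_add {A B q : ℕ} (hA : A.Prime) (hB : B.Prime) (hA2 : 2 < A)
    (hB2 : 2 < B) (hk : 2 ≤ k) (hBk : (2 : ℤ) ^ (k + 1) ∣ B - 1) (hq : Odd q) {x : ℤ}
    (hAx : (A : ℤ) = x ^ 2 + 2 ^ k) (h : (A : ℤ) ^ q = (B : ℤ) ^ (2 * j) + 2 ^ k) : q = 1 := by
  have hAZ : Prime (A : ℤ) := Nat.prime_iff_prime_int.mp hA
  have hBZ : Prime (B : ℤ) := Nat.prime_iff_prime_int.mp hB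
  have hA2k : ¬ (A : ℤ) ∣ -2 ^ k := by
    rw [dvd_neg]; exact mt hAZ.dvd_of_dvd_pow (natCast_not_dvd_two hA2)
  have hB2k : ¬ (B : ℤ) ∣ -2 ^ k := by
    rw [dvd_neg]; exact mt hBZ.dvd_of_dvd_pow (natCast_not_dvd_two hB2)
  have hd : (-2 ^ k : ℤ) < -1 := by
    have : (2 : ℤ) ≤ 2 ^ k := by exact_mod_cast Nat.le_self_pow (by omega) 2
    omega
  have hα : (⟨x, 1⟩ : ℤ√(-2 ^ k)).norm = A := by rw [norm_eq_re_sq_sub, hAx]; ring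
  obtain ⟨r, hr, hre, him⟩ :=
    (isNormGenerator_of_norm_eq hd hAZ (natCast_not_dvd_two hA2) hA2k hα).exists_pow q
      ⟨(B : ℤ) ^ j, 1⟩ (by rw [norm_eq_re_sq_sub, h]; ring)
      fun hdvd => hAZ.not_isUnit (isUnit_of_dvd_one ((intCast_dvd _ _).mp hdvd).2)
  rw [one_mul] at hr
  subst hr
  rw [abs_of_nonneg (by positivity)] at hre
  by_cases hBx : (B : ℤ) ∣ x
  · have hnorm := norm_pow_eq_norm_of_abs_re_im_eq (α := ⟨x, 1⟩) hB hB2 (by omega) hB2k hBx hq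
      hre.symm (by rw [← him, abs_one])
    rw [zsqrtd_norm_pow, hα] at hnorm
    exact Nat.pow_right_injective hA.two_le (by simpa using (by exact_mod_cast hnorm : A ^ q = A))
  · have hx : IsUnit x := by
      refine isUnit_of_dvd_prime_pow hBZ (t := j) ?_ hBx
      exact ((dvd_abs _ _).mpr (re_dvd_re_pow (⟨x, 1⟩ : ℤ√(-2 ^ k)) hq)).trans hre.symm.dvd
    rw [← sq_abs, Int.isUnit_iff_abs_eq.mp hx, one_pow] at hAx
    exact eq_one_of_one_add_two_pow_pow_eq_pow_add hk (by exact_mod_cast hB.odd_of_ne_two hB2.ne')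
      hBk (hAx ▸ hAZ) hq (hAx ▸ h)

end OddExponents

section ShortElements

variable {d M r : ℤ} {z w : ℤ√d}

lemma intCast_dvd_mul_star (hr : M ∣ r ^ 2 - d) (hz : M ∣ z.re - r * z.im)
    (hw : M ∣ w.re - r * w.im) : (M : ℤ√d) ∣ z * star w := by
  refine (intCast_dvd _ _).mpr ⟨?_, ?_⟩
  · have hre : (z * star w).re = (z.re - r * z.im) * w.re + r * z.im * (w.re - r * w.im) +
        (r ^ 2 - d) * (z.im * w.im) := by
      simp only [re_mul, re_star, im_star]; ring
    rw [hre]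
    exact dvd_add (dvd_add (hz.mul_right _) (hw.mul_left _)) (hr.mul_right _)
  · have him : (z * star w).im = z.im * (w.re - r * w.im) - (z.re - r * z.im) * w.im := by
      simp only [im_mul, re_star, im_star]; ring
    rw [him]
    exact dvd_sub (hw.mul_left _) (hz.mul_right _)

lemma exists_dvd_sub_mul_and_dvd_sq_sub (hM : 0 < M) (hz : IsCoprime M z.im) (hMz : M ∣ z.norm) :
    ∃ σ, 0 ≤ σ ∧ σ < M ∧ M ∣ z.re - σ * z.im ∧ M ∣ σ ^ 2 - d := by
  obtain ⟨a, b, hab⟩ := id hz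
  have hσ : M ∣ z.re - z.re * b % M * z.im :=
    ⟨z.re * a + z.re * b / M * z.im, by
      linear_combination -z.re * hab - z.im * Int.emod_add_mul_ediv (z.re * b) M⟩
  refine ⟨z.re * b % M, Int.emod_nonneg _ hM.ne', Int.emod_lt_of_pos _ hM, hσ, ?_⟩
  refine (hz.pow_right (n := 2)).dvd_of_dvd_mul_right ?_
  generalize z.re * b % M = σ at hσ
  rw [show (σ ^ 2 - d) * z.im ^ 2 = z.norm - (z.re - σ * z.im) * (z.re + σ * z.im) by
    rw [norm_eq_re_sq_sub]; ring]
  exact dvd_sub hMz (hσ.mul_right _)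

lemma dvd_of_same_residues {c σ : ℤ} (hcM : IsCoprime c M) (hz0 : z.norm ≠ 0)
    (hz : z.norm = c * M) (hr : M ∣ r ^ 2 - d) (hσ : c ∣ σ ^ 2 - d)
    (hzr : M ∣ z.re - r * z.im) (hwr : M ∣ w.re - r * w.im)
    (hzσ : c ∣ z.re - σ * z.im) (hwσ : c ∣ w.re - σ * w.im) : z ∣ w := by
  obtain ⟨hMre, hMim⟩ := (intCast_dvd _ _).mp (intCast_dvd_mul_star hr hwr hzr)
  obtain ⟨hcre, hcim⟩ := (intCast_dvd _ _).mp (intCast_dvd_mul_star hσ hwσ hzσ)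
  obtain ⟨γ, hγ⟩ : (z.norm : ℤ√d) ∣ w * star z :=
    (intCast_dvd _ _).mpr ⟨hz ▸ hcM.mul_dvd hcre hMre, hz ▸ hcM.mul_dvd hcim hMim⟩
  refine ⟨γ, Zsqrtd.eq_of_smul_eq_smul_left hz0 ?_⟩
  calc (z.norm : ℤ√d) * w = w * star z * z := by rw [norm_eq_mul_conj]; ring
    _ = z.norm * (z * γ) := by rw [hγ]; ring

-- The pigeonhole principle on a box of side lengths `√(M * s)` and `√(M / s)`.
lemma exists_ne_zero_dvd_sub_mul {M s : ℕ} (hM : 0 < M) (hs : 0 < s) (d r : ℤ) :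
    ∃ z : ℤ√d, z ≠ 0 ∧ (M : ℤ) ∣ z.re - r * z.im ∧ z.re ^ 2 ≤ M * s ∧ s * z.im ^ 2 ≤ M := by
  have : NeZero M := ⟨hM.ne'⟩
  set X := Nat.sqrt (M * s)
  set Y := Nat.sqrt (M / s)
  have hX : X ^ 2 ≤ M * s := Nat.sqrt_le' _
  have hY : s * Y ^ 2 ≤ M :=
    (Nat.mul_le_mul_left s (Nat.sqrt_le' (M / s))).trans (Nat.mul_div_le M s)
  have hX' : M * s < (X + 1) ^ 2 := Nat.lt_succ_sqrt' _
  have hY' : M < (Y + 1) ^ 2 * s := (Nat.div_lt_iff_lt_mul hs).mp (Nat.lt_succ_sqrt' _)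
  have hbox : M < (X + 1) * (Y + 1) := by
    refine lt_of_pow_lt_pow_left₀ 2 (Nat.zero_le _) (lt_of_mul_lt_mul_right ?_ (Nat.zero_le s))
    calc M ^ 2 * s = M * (M * s) := by ring
      _ < M * (X + 1) ^ 2 := by gcongr
      _ ≤ (Y + 1) ^ 2 * s * (X + 1) ^ 2 := by gcongr
      _ = ((X + 1) * (Y + 1)) ^ 2 * s := by ring
  let f : Fin (X + 1) × Fin (Y + 1) → ZMod M := fun p => ((p.1 - r * p.2 : ℤ) : ZMod M)
  obtain ⟨p, p', hne, hf⟩ := Fintype.exists_ne_map_eq_of_card_lt f (by simpa [ZMod.card] using hbox)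
  refine ⟨⟨p'.1 - p.1, p'.2 - p.2⟩, fun h => hne ?_, ?_, ?_, ?_⟩
  · obtain ⟨hre, him⟩ := Zsqrtd.ext_iff.mp h
    simp only [re_zero, im_zero] at hre him
    ext <;> omega
  · have := (ZMod.intCast_eq_intCast_iff_dvd_sub _ _ M).mp hf
    rwa [show (p'.1 - p.1 - r * (p'.2 - p.2) : ℤ) = p'.1 - r * p'.2 - (p.1 - r * p.2) by ring]
  · refine le_trans ?_ (by exact_mod_cast hX : (X : ℤ) ^ 2 ≤ M * s)
    exact sq_le_sq' (by dsimp only; omega) (by dsimp only; omega)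
  · refine le_trans ?_ (by exact_mod_cast hY : (s : ℤ) * (Y : ℤ) ^ 2 ≤ M)
    gcongr 1
    exact sq_le_sq' (by dsimp only; omega) (by dsimp only; omega)

lemma exists_norm_le_of_lt_sq {M s : ℕ} (hM : 0 < M) (hs : 0 < s)
    (hds : -d < (s + 1) ^ 2) (r : ℤ) :
    ∃ z : ℤ√d, z ≠ 0 ∧ (M : ℤ) ∣ z.re - r * z.im ∧ z.norm ≤ (2 * s + 2) * M := by
  obtain ⟨z, hz0, hz, hre, him⟩ := exists_ne_zero_dvd_sub_mul hM hs d r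
  refine ⟨z, hz0, hz, ?_⟩
  calc z.norm = z.re ^ 2 + -d * z.im ^ 2 := by rw [norm_eq_re_sq_sub]; ring
    _ ≤ M * s + (s + 2) * s * z.im ^ 2 := by gcongr; linarith
    _ = M * s + (s + 2) * (s * z.im ^ 2) := by ring
    _ ≤ M * s + (s + 2) * M := by gcongr
    _ = (2 * s + 2) * M := by ring

lemma not_intCast_dvd_of_norm_le {p C : ℤ} {j : ℕ} (hd : d < 0) (hC : 0 ≤ C) (hCp : C < p)
    (hr : p ^ j ∣ r ^ 2 - d) (hz0 : z ≠ 0) (hz : p ^ j ∣ z.re - r * z.im)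
    (hnorm : z.norm ≤ C * p ^ j) : ¬ (p : ℤ√d) ∣ z := by
  rintro ⟨w, rfl⟩
  have hw0 : 0 < w.norm := (norm_nonneg hd.le w).lt_of_ne'
    (mt (norm_eq_zero_iff hd w).mp (right_ne_zero_of_mul hz0))
  have hdvd : p ^ j ∣ p * w.norm := by
    rw [show p * w.norm = (p * w.re - r * (p * w.im)) * (w.re + r * w.im) +
      (r ^ 2 - d) * (p * w.im ^ 2) by rw [norm_eq_re_sq_sub]; ring]
    rw [re_smul, im_smul] at hz
    exact dvd_add (hz.mul_right _) (hr.mul_right _)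
  have hle := Int.le_of_dvd (mul_pos (by omega) hw0) hdvd
  rw [norm_mul, norm_intCast] at hnorm
  have hlt : C * (p * w.norm) < p * (p * w.norm) :=
    mul_lt_mul_of_pos_right hCp (mul_pos (by omega) hw0)
  nlinarith [mul_le_mul_of_nonneg_left hle hC]

lemma exists_isCoprime_norm_eq_mul_pow {p s j : ℕ} (hp : p.Prime) (hs : 0 < s)
    (hsp : 2 * s + 2 < p) (hd : d < 0) (hds : -d < (s + 1) ^ 2)
    (hr : (p : ℤ) ^ j ∣ r ^ 2 - d) :
    ∃ (z : ℤ√d) (c : ℤ), IsCoprime z.re z.im ∧ z.norm = c * (p : ℤ) ^ j ∧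
      (p : ℤ) ^ j ∣ z.re - r * z.im ∧ 0 < c ∧ c ≤ 2 * s + 2 := by
  have hpZ : Prime (p : ℤ) := Nat.prime_iff_prime_int.mp hp
  have hpj : (0 : ℤ) < (p : ℤ) ^ j := by have := hp.pos; positivity
  obtain ⟨y, hy0, hy, hnorm⟩ := exists_norm_le_of_lt_sq (pow_pos hp.pos j) hs hds r
  push_cast at hy hnorm
  have hpy := not_intCast_dvd_of_norm_le hd (by positivity) (by exact_mod_cast hsp) hr hy0 hy hnorm
  have hgcd := (gcd_pos_iff y).mpr hy0
  obtain ⟨z, hyz, hz⟩ := exists_coprime_of_gcd_pos hgcd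
  set g : ℤ := (Int.gcd y.re y.im : ℤ)
  have hg : 0 < g := Int.natCast_pos.mpr hgcd
  have hpg : IsCoprime ((p : ℤ) ^ j) g := by
    refine IsCoprime.pow_left (hpZ.coprime_iff_not_dvd.mpr fun h => hpy ?_)
    rw [hyz]
    exact ((intCast_dvd_intCast _ _).mpr h).mul_right _
  have hzr : (p : ℤ) ^ j ∣ z.re - r * z.im := by
    rw [hyz, re_smul, im_smul, mul_left_comm, ← mul_sub] at hy
    exact hpg.dvd_of_dvd_mul_left hy
  obtain ⟨c, hc⟩ : (p : ℤ) ^ j ∣ z.norm := by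
    rw [← intCast_dvd_intCast (d := d), norm_eq_mul_conj]
    exact intCast_dvd_mul_star hr hzr hzr
  rw [mul_comm] at hc
  have hz0 : 0 < z.norm := (norm_nonneg hd.le z).lt_of_ne' fun h =>
    hy0 (by rw [hyz, (norm_eq_zero_iff hd z).mp h, mul_zero])
  refine ⟨z, c, hz, hc, hzr, pos_of_mul_pos_left (hc ▸ hz0) hpj.le, ?_⟩
  refine le_of_mul_le_mul_right (hc ▸ le_trans ?_ hnorm) hpj
  rw [hyz, norm_mul, norm_intCast]
  exact le_mul_of_one_le_left hz0.le (Int.mul_pos hg hg)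

lemma exists_not_dvd_norm_eq_mul_pow {p s j : ℕ} (hp : p.Prime) (hs : 0 < s)
    (hsp : 2 * s + 2 < p) (hd : d < 0) (hds : -d < (s + 1) ^ 2)
    (hr : (p : ℤ) ^ j ∣ r ^ 2 - d) :
    ∃ (z : ℤ√d) (c σ : ℤ), ¬ ((p : ℤ) : ℤ√d) ∣ z ∧ z.norm = c * (p : ℤ) ^ j ∧
      (p : ℤ) ^ j ∣ z.re - r * z.im ∧ 0 < c ∧ c ≤ 2 * s + 2 ∧ 0 ≤ σ ∧ σ < c ∧
      c ∣ z.re - σ * z.im ∧ c ∣ σ ^ 2 - d := by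
  obtain ⟨z, c, hz, hc, hzr, hc0, hcs⟩ := exists_isCoprime_norm_eq_mul_pow hp hs hsp hd hds hr
  have hpz : ¬ ((p : ℤ) : ℤ√d) ∣ z := fun h =>
    (Nat.prime_iff_prime_int.mp hp).not_isUnit
      (hz.isUnit_of_dvd' ((intCast_dvd _ _).mp h).1 ((intCast_dvd _ _).mp h).2)
  have hcz : IsCoprime c z.im := by
    have : IsCoprime (z.re ^ 2 + z.im * (-d * z.im)) z.im := hz.pow_left.add_mul_left_left _
    rw [show z.re ^ 2 + z.im * (-d * z.im) = c * (p : ℤ) ^ j by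
      rw [← hc, norm_eq_re_sq_sub]; ring] at this
    exact this.of_mul_left_left
  obtain ⟨σ, hσ⟩ := exists_dvd_sub_mul_and_dvd_sq_sub hc0 hcz (Dvd.intro _ hc.symm)
  exact ⟨z, c, σ, hpz, hc, hzr, hc0, hcs, hσ⟩

lemma exists_primitive_norm_eq_pow_lt {p s m : ℕ} (hp : p.Prime) (hs : 0 < s)
    (hsp : 2 * s + 2 < p) (hd : d < 0) (hds : -d < (s + 1) ^ 2)
    (hr : (p : ℤ) ^ m ∣ r ^ 2 - d) (hm : (2 * s + 3) ^ 2 < m) :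
    ∃ h, 0 < h ∧ h < m ∧ ∃ γ : ℤ√d, γ.norm = (p : ℤ) ^ h ∧ ¬ ((p : ℤ) : ℤ√d) ∣ γ := by
  have hpZ : Prime (p : ℤ) := Nat.prime_iff_prime_int.mp hp
  have hrj (j : Fin m) : (p : ℤ) ^ (j : ℕ) ∣ r ^ 2 - d := (pow_dvd_pow _ j.isLt.le).trans hr
  choose z c σ hpz hnorm hzr hc0 hcs hσ0 hσc hzσ hσ using
    fun j : Fin m => exists_not_dvd_norm_eq_mul_pow hp hs hsp hd hds (hrj j)
  let f : Fin m → Fin (2 * s + 3) × Fin (2 * s + 3) := fun j =>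
    (⟨(c j).toNat, by grind⟩, ⟨(σ j).toNat, by grind⟩)
  obtain ⟨i, j, hne, hf⟩ := Fintype.exists_ne_map_eq_of_card_lt f (by simpa [sq] using hm)
  wlog hij : i < j generalizing i j
  · exact this j i hne.symm hf.symm (lt_of_le_of_ne (not_lt.mp hij) hne.symm)
  simp only [f, Prod.mk.injEq, Fin.mk.injEq] at hf
  have hc : c i = c j := by grind
  have hσ' : σ i = σ j := by grind
  have hcp : IsCoprime (c j) ((p : ℤ) ^ (i : ℕ)) := by
    refine IsCoprime.pow_right (hpZ.coprime_iff_not_dvd.mpr fun h => ?_).symm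
    have := Int.le_of_dvd (hc0 j) h
    have := hcs j
    omega
  have hpow_ne : (p : ℤ) ^ (i : ℕ) ≠ 0 := pow_ne_zero _ hpZ.ne_zero
  have hi_ne : (z i).norm ≠ 0 := hnorm i ▸ mul_ne_zero (hc0 i).ne' hpow_ne
  obtain ⟨γ, hγ⟩ : z i ∣ z j :=
    dvd_of_same_residues hcp hi_ne (hc ▸ hnorm i) (hrj i) (hσ j) (hzr i)
      ((pow_dvd_pow _ hij.le).trans (hzr j)) (hc ▸ hσ' ▸ hzσ i) (hzσ j)
  have hij' : (i : ℕ) < j := hij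
  refine ⟨j - i, by omega, by omega, γ, mul_left_cancel₀ hi_ne ?_, fun h => hpz j ?_⟩
  · rw [← norm_mul, ← hγ, hnorm, hnorm, hc, mul_assoc, ← pow_add, Nat.add_sub_cancel' hij'.le]
  · exact hγ ▸ h.mul_left _

lemma exists_isNormGenerator_lt {p s m : ℕ} (hp : p.Prime) (hs : 0 < s) (hsp : 2 * s + 2 < p)
    (hd : d < -1) (hds : -d < (s + 1) ^ 2) (hpd : ¬ (p : ℤ) ∣ d) (hm : (2 * s + 3) ^ 2 < m)
    (hz : z.norm = (p : ℤ) ^ m) (hpz : ¬ ((p : ℤ) : ℤ√d) ∣ z) :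
    ∃ h < m, ∃ α : ℤ√d, IsNormGenerator p h α := by
  have hpZ : Prime (p : ℤ) := Nat.prime_iff_prime_int.mp hp
  have hpim := (not_dvd_re_and_im hpZ hpd (hz ▸ dvd_pow_self _ (by omega)) hpz).2
  obtain ⟨r, -, -, -, hr⟩ := exists_dvd_sub_mul_and_dvd_sq_sub
    (pow_pos (by exact_mod_cast hp.pos) m) (hpZ.coprime_iff_not_dvd.mpr hpim).pow_left hz.symm.dvd
  obtain ⟨i, hi0, him, γ, hγ, hpγ⟩ :=
    exists_primitive_norm_eq_pow_lt hp hs hsp (by omega) hds hr hm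
  obtain ⟨h, hle, α, hα⟩ :=
    exists_isNormGenerator hd hpZ (natCast_not_dvd_two (by omega)) hpd hi0 hγ hpγ
  exact ⟨h, hle.trans_lt him, α, hα⟩

end ShortElements

section LinearExponent

variable {d : ℤ} {α : ℤ√d} {q l : ℕ}

lemma odd_im_of_odd_im_pow (him : Odd (α ^ q).im) : Odd α.im := by
  obtain ⟨c, hc⟩ := im_dvd_im_pow α q
  exact (Int.odd_mul.mp (hc ▸ him)).1

lemma even_re_of_even_re_pow (hd : Odd d) (hre : Even (α ^ q).re) (him : Odd (α ^ q).im) :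
    Even α.re := by
  have hα_im : Odd α.im := odd_im_of_odd_im_pow him
  have hq : q ≠ 0 := by rintro rfl; simp at him
  have hpow : Odd (α ^ q).norm := by
    rw [norm_eq_re_sq_sub]
    exact (hre.pow_of_ne_zero two_ne_zero).sub_odd (hd.mul him.pow)
  rw [zsqrtd_norm_pow, Int.odd_pow' hq, norm_eq_re_sq_sub] at hpow
  by_contra h
  exact Int.not_even_iff_odd.mpr hpow ((Int.not_even_iff_odd.mp h).pow.sub_odd (hd.mul hα_im.pow))

lemma abs_re_pow_eq_abs_re (hd : Odd d) (hα : Even α.re) (hq : Odd q) (him : Odd (α ^ q).im)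
    (hre : |(α ^ q).re| = 2 ^ l) : |(α ^ q).re| = |α.re| := by
  have hα_im : Odd α.im := odd_im_of_odd_im_pow him
  obtain ⟨v, hv, hv2⟩ := exists_re_pow_eq_mul_not_dvd Int.prime_two hα.two_dvd
    (Int.two_dvd_ne_zero.mpr (Int.odd_iff.mp (hd.mul hα_im.pow))) hq
    (by exact_mod_cast hq.not_two_dvd_nat)
  have hv_unit : IsUnit v := by
    refine isUnit_of_dvd_prime_pow Int.prime_two (t := l) ?_ hv2
    rw [← hre, dvd_abs, hv]
    exact dvd_mul_left _ _
  rw [hv, abs_mul, Int.isUnit_iff_abs_eq.mp hv_unit, mul_one]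

variable {B t : ℕ} {β : ℤ√(-(B : ℤ))}

lemma abs_im_pow_self_ne (hB : B.Prime) (hB3 : 3 < B) (hβ : β.re ≠ 0) (hBβ : ¬ (B : ℤ) ∣ β.re)
    (hre : |(β ^ B).re| = |β.re|) : |(β ^ B).im| ≠ (B : ℤ) ^ t := by
  intro him
  obtain ⟨u, hu, hu_sq⟩ := exists_im_pow_self_eq_mul_not_sq_dvd hB (by omega)
    (dvd_refl (B : ℤ)).neg_right (by omega) hBβ
  have hu_le : |u| ≤ B := by
    refine abs_le_of_dvd_prime_pow hB (t := t) ?_ hu_sq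
    rw [← him, dvd_abs, hu]
    exact dvd_mul_left _ _
  have hβ_im : β.im ≠ 0 := fun h => by
    rw [hu, h, zero_mul, abs_zero] at him
    exact pow_ne_zero t (by exact_mod_cast hB.ne_zero) him.symm
  have hnorm := norm_le_of_abs_re_im_pow_le (α := β) (by omega) (n := B) (by omega)
    (by rw [hre]; exact le_mul_of_one_le_left (abs_nonneg _) (by omega))
    (by rw [hu, abs_mul, mul_comm]; gcongr)
  rw [norm_eq_re_sq_sub] at hnorm
  have := sq_pos_of_ne_zero hβ
  have := sq_pos_of_ne_zero hβ_im
  nlinarith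

lemma eq_one_of_abs_im_pow_eq_of_not_dvd (hB : B.Prime) (hβ : β.re ≠ 0)
    (hBβ : ¬ (B : ℤ) ∣ β.re) (hBq : ¬ B ∣ q) (hre : |(β ^ q).re| = |β.re|)
    (him : |(β ^ q).im| = (B : ℤ) ^ t) : q = 1 := by
  have hBZ : Prime (B : ℤ) := Nat.prime_iff_prime_int.mp hB
  obtain ⟨u, hu, hBu⟩ := exists_im_pow_eq_mul_not_dvd hBZ (dvd_refl (B : ℤ)).neg_right hBβ
    (mt Int.natCast_dvd_natCast.mp hBq)
  have hu_unit : IsUnit u := by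
    refine isUnit_of_dvd_prime_pow hBZ (t := t) ?_ hBu
    rw [← him, dvd_abs, hu]
    exact dvd_mul_left _ _
  have hnorm : β.norm ^ q = β.norm := by
    rw [← zsqrtd_norm_pow, norm_eq_re_sq_sub, norm_eq_re_sq_sub, ← sq_abs (β ^ q).re, hre,
      sq_abs, hu, mul_pow, ← sq_abs u, Int.isUnit_iff_abs_eq.mp hu_unit, one_pow, mul_one]
  have hβ_im : β.im ≠ 0 := fun h => by
    rw [hu, h, zero_mul, abs_zero] at him
    exact pow_ne_zero t hBZ.ne_zero him.symm
  have hone : 1 < β.norm := by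
    have := hB.two_le
    rw [norm_eq_re_sq_sub]
    nlinarith [sq_pos_of_ne_zero hβ, sq_pos_of_ne_zero hβ_im]
  exact pow_right_injective₀ (by omega) hone.ne' (hnorm.trans (pow_one _).symm)

lemma eq_one_of_abs_re_im_pow_eq (hB : B.Prime) (hB3 : 3 < B) (hl : 0 < l) (hq : Odd q)
    (hre : |(β ^ q).re| = 2 ^ l) (him : |(β ^ q).im| = (B : ℤ) ^ t) : q = 1 := by
  have hBZ : Prime (B : ℤ) := Nat.prime_iff_prime_int.mp hB
  have hBodd : Odd (B : ℤ) := by exact_mod_cast hB.odd_of_ne_two (by omega)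
  have hB2l : ¬ (B : ℤ) ∣ 2 ^ l := mt hBZ.dvd_of_dvd_pow (natCast_not_dvd_two (by omega))
  have hpow_im : Odd (β ^ q).im := by rw [← odd_abs, him]; exact hBodd.pow
  have hpow_re : Even (β ^ q).re := by
    rw [← even_abs, hre]; exact even_two.pow_of_ne_zero hl.ne'
  have hβ_even : Even β.re := even_re_of_even_re_pow hBodd.neg hpow_re hpow_im
  by_cases hBq : B ∣ q
  · obtain ⟨r, rfl⟩ := hBq
    rw [mul_comm, pow_mul] at hre him hpow_im
    have hr_even : Even (β ^ r).re :=
      even_iff_two_dvd.mpr (hβ_even.two_dvd.trans (re_dvd_re_pow β (Nat.odd_mul.mp hq).2))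
    have hre' := abs_re_pow_eq_abs_re hBodd.neg hr_even (hB.odd_of_ne_two (by omega)) hpow_im hre
    refine absurd him (abs_im_pow_self_ne hB hB3 ?_ ?_ hre')
    · rw [← abs_pos, ← hre', hre]; positivity
    · rwa [← dvd_abs, ← hre', hre]
  · have hre' := abs_re_pow_eq_abs_re hBodd.neg hβ_even hq hpow_im hre
    refine eq_one_of_abs_im_pow_eq_of_not_dvd hB ?_ ?_ hBq hre' him
    · rw [← abs_pos, ← hre', hre]; positivity
    · rwa [← dvd_abs, ← hre', hre]

lemma eight_mul_lt_of_mul_pow_le_add_pow {b Q K : ℝ} {m : ℕ} (hb : 9 ≤ b) (hK : 0 ≤ K)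
    (hKb : 4 * K ≤ b) (hQ : b ^ 2 ≤ Q) (h : b * Q ^ m ≤ (Q + K) ^ m) : 8 * b < m := by
  by_contra! hm
  have hQ0 : 0 < Q := lt_of_lt_of_le (by positivity) hQ
  have hexponent : m * (K / Q) ≤ 2 := by
    rw [← mul_div_assoc, div_le_iff₀ hQ0]
    calc m * K ≤ 8 * b * K := by gcongr
      _ ≤ 2 * b ^ 2 := by nlinarith
      _ ≤ 2 * Q := by linarith
  have hle : b * Q ^ m ≤ Real.exp 2 * Q ^ m :=
    calc b * Q ^ m ≤ (Q + K) ^ m := h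
      _ = (K / Q + 1) ^ m * Q ^ m := by rw [← mul_pow]; congr 1; field_simp; ring
      _ ≤ Real.exp (K / Q) ^ m * Q ^ m := by gcongr; exact Real.add_one_le_exp _
      _ = Real.exp (m * (K / Q)) * Q ^ m := by rw [Real.exp_nat_mul]
      _ ≤ Real.exp 2 * Q ^ m := by gcongr
  have hexp : Real.exp 2 < 9 := by
    rw [show (2 : ℝ) = 1 + 1 by norm_num, Real.exp_add]
    nlinarith [Real.exp_one_lt_three, Real.exp_pos 1]
  linarith [le_of_mul_le_mul_right hle (by positivity)]

lemma eight_mul_lt_exponent {b K i m n : ℕ} (hb : 9 ≤ b) (hKb : 4 * K ≤ b) (hi : 0 < i)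
    (hm : m ≠ 0) (h : (b ^ (2 * i) + K) ^ m = b ^ (2 * n + 1) + K) : 8 * b < m := by
  have hle : b ^ (2 * i * m) ≤ b ^ (2 * n + 1) := by
    have hsum := pow_add_pow_le (Nat.zero_le (b ^ (2 * i))) (Nat.zero_le K) hm
    have hKm : K ≤ K ^ m := Nat.le_self_pow hm K
    rw [h, ← pow_mul] at hsum
    omega
  have hexp : 2 * i * m + 1 ≤ 2 * n + 1 := by
    have := (Nat.pow_le_pow_iff_right (by omega)).mp hle
    rw [mul_assoc] at this ⊢
    omega
  have hpow : b * (b ^ (2 * i)) ^ m ≤ (b ^ (2 * i) + K) ^ m := by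
    rw [h, ← pow_mul, ← pow_succ']
    exact (Nat.pow_le_pow_right (by omega) hexp).trans (Nat.le_add_right _ _)
  have hsq : b ^ 2 ≤ b ^ (2 * i) := Nat.pow_le_pow_right (by omega) (by omega)
  exact_mod_cast eight_mul_lt_of_mul_pow_le_add_pow (b := b) (Q := (b : ℝ) ^ (2 * i)) (K := K)
    (by exact_mod_cast hb) (by positivity) (by exact_mod_cast hKb) (by exact_mod_cast hsq)
    (by exact_mod_cast hpow)

lemma four_mul_two_pow_lt_of_dvd_sub_one {p l : ℕ} (hp : p.Prime) (hl : 0 < l)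
    (h : (2 : ℤ) ^ (2 * l + 1) ∣ p - 1) : 4 * 2 ^ (2 * l) < p := by
  obtain ⟨c, hc⟩ := h
  have hpow : (2 : ℤ) ^ (2 * l + 1) = 2 * 2 ^ (2 * l) := by ring
  have hpos : (2 : ℤ) ^ 2 ≤ 2 ^ (2 * l) := pow_le_pow_right₀ (by norm_num) (by omega)
  have hp2 := hp.two_le
  have hc0 : 0 < c :=
    pos_of_mul_pos_right (by omega : 0 < (2 : ℤ) ^ (2 * l + 1) * c) (by positivity)
  have hc1 : c ≠ 1 := by
    rintro rfl
    have hmod := two_pow_emod_three (2 * l + 1)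
    have hp3 := eq_three_of_dvd_pow hp (n := 1) (by rw [pow_one]; grind)
    subst hp3
    omega
  have : (2 : ℤ) ^ (2 * l + 1) * 2 ≤ 2 ^ (2 * l + 1) * c := by gcongr; omega
  zify
  omega

lemma not_and_of_linear_odd_exponent {A B j m t : ℕ} (hA : A.Prime) (hB : B.Prime) (hj : 0 < j)
    (hl : 0 < l) (hm : Odd m) (hBl : (2 : ℤ) ^ (2 * l + 1) ∣ B - 1)
    (h₁ : A = B ^ (2 * j) + 2 ^ (2 * l)) (h₂ : A ^ m = B ^ (2 * t + 1) + 2 ^ (2 * l)) : False := by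
  have hAZ : Prime (A : ℤ) := Nat.prime_iff_prime_int.mp hA
  have hBl' := four_mul_two_pow_lt_of_dvd_sub_one hB hl hBl
  have hl4 : 2 ^ 2 ≤ 2 ^ (2 * l) := Nat.pow_le_pow_right two_pos (by omega)
  have hsq : B ^ 2 ≤ B ^ (2 * j) := Nat.pow_le_pow_right hB.pos (by omega)
  have hAB : 2 * B + 2 < A := by nlinarith
  have hs := Nat.sqrt_le' B
  have hs' := Nat.lt_succ_sqrt' B
  have hs4 : 4 ≤ B.sqrt := Nat.le_sqrt.mpr (by omega)
  have hm_large : 8 * B < m :=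
    eight_mul_lt_exponent (by omega) hBl'.le hj hm.pos.ne' (h₁ ▸ h₂)
  have hAdvd : ¬ (A : ℤ) ∣ -(B : ℤ) := by
    rw [dvd_neg, Int.natCast_dvd_natCast]
    exact Nat.not_dvd_of_pos_of_lt hB.pos (by omega)
  have hz : (⟨2 ^ l, (B : ℤ) ^ t⟩ : ℤ√(-(B : ℤ))).norm = (A : ℤ) ^ m := by
    rw [norm_eq_re_sq_sub]
    zify at h₂
    rw [h₂]; ring
  have hAz : ¬ ((A : ℤ) : ℤ√(-(B : ℤ))) ∣ ⟨2 ^ l, (B : ℤ) ^ t⟩ := fun h =>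
    natCast_not_dvd_two (by omega) (hAZ.dvd_of_dvd_pow ((intCast_dvd _ _).mp h).1)
  obtain ⟨h, hlt, α, hα⟩ := exists_isNormGenerator_lt hA (s := B.sqrt) (by omega) (by nlinarith)
    (by omega) (by rw [neg_neg]; exact_mod_cast hs') hAdvd (by nlinarith) hz hAz
  obtain ⟨q, rfl, hre, him⟩ := hα.exists_pow m _ hz hAz
  rw [abs_of_nonneg (by positivity)] at hre him
  have hq := eq_one_of_abs_re_im_pow_eq hB (by omega) hl (Nat.odd_mul.mp hm).2 hre.symm him.symm
  rw [hq, mul_one] at hlt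
  exact hlt.false

end LinearExponent

section OppositeParity

variable {A B : ℕ} {k : ℕ}

lemma not_and_of_opposite_parity {i j m c : ℕ} (hA : A.Prime) (hB : B.Prime) (hA2 : 2 < A)
    (hB2 : 2 < B) (hk : 0 < k) (hj : j ≠ 0) (h₁ : (A : ℤ) ^ i = (B : ℤ) ^ (2 * j) + 2 ^ k)
    (h₂ : (A : ℤ) ^ m = (B : ℤ) ^ (2 * c + 1) + 2 ^ k) : False := by
  have hAodd : Odd (A : ℤ) := by exact_mod_cast hA.odd_of_ne_two hA2.ne'
  have hBodd : Odd (B : ℤ) := by exact_mod_cast hB.odd_of_ne_two hB2.ne'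
  obtain ⟨e, rfl | rfl⟩ := Nat.even_or_odd' i
  · exact not_and_of_even_exponent hAodd hBodd (by omega) (by omega) hj h₁ h₂
  obtain ⟨l, rfl | rfl⟩ := Nat.even_or_odd' k
  swap
  · exact not_and_of_odd_two_exponent hA hB hA2 hB2 hj h₁ h₂
  obtain ⟨g, rfl | rfl⟩ := Nat.even_or_odd' m
  · exact not_and_of_even_exponent_right hA hB hA2 hB2 (by omega) h₁ h₂
  obtain ⟨l, rfl⟩ : ∃ n, l = n + 1 := Nat.exists_eq_add_of_le' (by omega)
  have hBl := (two_pow_dvd_sub_one_of_odd_exponents hAodd hBodd h₁ h₂ le_rfl).1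
  have hA4 : A % 4 = 1 := by
    have hdvd := (two_pow_dvd_sub_one_of_odd_exponents hAodd hBodd h₁ h₂ (s := 2) (by omega)).2
    have hpow := pow_dvd_pow (2 : ℤ) (by omega : 2 ≤ 2 * (l + 1))
    omega
  obtain ⟨x, hx⟩ := exists_eq_sq_add_two_pow hA hA4 (by rwa [mul_comm 2 j, pow_mul] at h₁)
  have he := eq_one_of_pow_eq_pow_add hA hB hA2 hB2 (by omega) hBl ⟨e, rfl⟩ hx h₁
  rw [he, pow_one] at h₁
  exact not_and_of_linear_odd_exponent hA hB (by omega : 0 < j) l.succ_pos ⟨g, rfl⟩ hBl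
    (by exact_mod_cast h₁) (by exact_mod_cast h₂)

lemma exponent_right_unique {m₁ n₁ m₂ n₂ : ℕ} (hA : A.Prime) (hB : B.Prime) (hA2 : 2 < A)
    (hB2 : 2 < B) (hk : 0 < k) (hn₁ : 0 < n₁) (hn₂ : 0 < n₂)
    (h₁ : (A : ℤ) ^ m₁ = (B : ℤ) ^ n₁ + 2 ^ k) (h₂ : (A : ℤ) ^ m₂ = (B : ℤ) ^ n₂ + 2 ^ k) :
    n₁ = n₂ := by
  wlog hle : n₁ ≤ n₂ generalizing m₁ n₁ m₂ n₂
  · exact (this hn₂ hn₁ h₂ h₁ (le_of_not_ge hle)).symm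
  by_cases hparity : Even (n₂ - n₁)
  · obtain ⟨t, ht⟩ := even_iff_two_dvd.mp hparity
    obtain rfl : n₂ = n₁ + 2 * t := by omega
    rw [eq_zero_of_exponents_same_parity hA hB hA2 hB2 hk hn₁ h₁ h₂, mul_zero, add_zero]
  exfalso
  rcases Nat.even_or_odd' n₁ with ⟨a, rfl | rfl⟩ <;> rcases Nat.even_or_odd' n₂ with ⟨b, rfl | rfl⟩
  · exact hparity (by grind)
  · exact not_and_of_opposite_parity hA hB hA2 hB2 hk (by omega) h₁ h₂
  · exact not_and_of_opposite_parity hA hB hA2 hB2 hk (by omega) h₂ h₁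
  · exact hparity (by grind)

end OppositeParity

/-- Lemma 2.6: for distinct odd primes `A`, `B` and a fixed `k ≥ 1`, the equation
`A^m - B^n = 2^k` has at most one solution in positive integers `(m, n)`. -/
theorem stmt_11 (A B : ℕ) (hA : Nat.Prime A) (hB : Nat.Prime B)
    (hAodd : 2 < A) (hBodd : 2 < B) (hAB : A ≠ B) (k : ℕ) (hk : 0 < k)
    (m₁ n₁ m₂ n₂ : ℕ) (hm₁ : 0 < m₁) (hn₁ : 0 < n₁) (hm₂ : 0 < m₂) (hn₂ : 0 < n₂)
    (h1 : (A : ℤ) ^ m₁ - (B : ℤ) ^ n₁ = 2 ^ k)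
    (h2 : (A : ℤ) ^ m₂ - (B : ℤ) ^ n₂ = 2 ^ k) :
    (m₁, n₁) = (m₂, n₂) := by
  rw [sub_eq_iff_eq_add'] at h1 h2
  obtain rfl := exponent_right_unique hA hB hAodd hBodd hk hn₁ hn₂ h1 h2
  have hm : A ^ m₁ = A ^ m₂ := by exact_mod_cast h1.trans h2.symm
  rw [Nat.pow_right_injective hA.two_le hm]
end

section
/- Let $a$, $b$, $c$ be coprime positive integers with $\min\{a,b,c\} > 1$ and $c$ odd. Then the equation $a^x + b^y = c^z$ has at most two solutions in positive integers $(x,y,z)$. -/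
/-!
Write a solution as `P X² + Q Y² = c ^ z` with `P ∈ {1, a}`, `Q ∈ {1, b}` and `X`, `Y` powers of
`a`, `b`, and attach to it the number `X√P + Y√(-Q)` of norm `c ^ z`. Among all such numbers whose
coordinates satisfy `a ∣ P X`, `b ∣ Q Y` and whose ratio `Y / X` modulo `c` is a prescribed root
`τ` of `P + Q τ² = 0`, let `α` have the least norm exponent. A descent on this exponent shows that
every other one is, up to sign, an odd power of `α`. If a solution yields a proper odd power of `α`,
it yields an `r`-th power, `r` an odd prime, of some odd power `β` of `α`, and comparing the prime
divisors of the coordinates of `β ^ r` with those of `β` leaves only `10 + 3 ^ 7 = 13 ^ 3`. Hence,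
apart from that identity, two solutions with the same `P`, `Q` and the same `± τ` coincide.

Every solution satisfies `a ^ x / b ^ y = -1` in `(ℤ/c)ˣ`. The pairs `(x, y) ∈ ℤ²` on which this
quotient is `± 1` form a lattice `K`, and those where it is `-1` fill one nontrivial coset of an
index two subgroup containing `2K`, hence at most two classes modulo `2K`. Of three solutions, two
are therefore congruent modulo `2K`, which says precisely that they share `P`, `Q` and `± τ`.
-/

/-! ### Odd powers of `v₁√P + v₂√(-Q)` -/

/-- The norm `P v₁² + Q v₂²` of `α_v = v₁√P + v₂√(-Q)`. -/
def normForm (P Q : ℤ) (v : ℤ × ℤ) : ℤ := P * v.1 ^ 2 + Q * v.2 ^ 2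

/-- The coordinates of `α_v² α_w`, where a pair `v` encodes `α_v = v₁√P + v₂√(-Q)`. -/
def sqMul (P Q : ℤ) (v w : ℤ × ℤ) : ℤ × ℤ :=
  ((P * v.1 ^ 2 - Q * v.2 ^ 2) * w.1 - 2 * Q * v.1 * v.2 * w.2,
    (P * v.1 ^ 2 - Q * v.2 ^ 2) * w.2 + 2 * P * v.1 * v.2 * w.1)

/-- The coordinates of the conjugate of `α_v = v₁√P + v₂√(-Q)`. -/
def conjPair (v : ℤ × ℤ) : ℤ × ℤ := (v.1, -v.2)

/-- The coordinates of the odd power `α_v ^ (2k + 1)` of `α_v = v₁√P + v₂√(-Q)`. -/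
def oddPow (P Q : ℤ) (v : ℤ × ℤ) (k : ℕ) : ℤ × ℤ := (sqMul P Q v)^[k] v

/-- The cofactors `(F, G)` in `(√A + √(-B)) ^ (2k + 1) = F√A + G√(-B)`. -/
def oddCofactor (A B : ℤ) (k : ℕ) : ℤ × ℤ := oddPow A B (1, 1) k

section OddPowers

variable {P Q : ℤ}

theorem normForm_sqMul (v w : ℤ × ℤ) :
    normForm P Q (sqMul P Q v w) = normForm P Q v ^ 2 * normForm P Q w := by
  simp only [normForm, sqMul]
  ring

theorem normForm_conjPair (v : ℤ × ℤ) : normForm P Q (conjPair v) = normForm P Q v := by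
  simp only [normForm, conjPair, neg_sq]

theorem sqMul_conjPair (v w : ℤ × ℤ) :
    sqMul P Q v (sqMul P Q (conjPair v) w) = normForm P Q v ^ 2 • w := by
  ext <;> simp only [sqMul, conjPair, normForm, Prod.smul_fst, Prod.smul_snd, smul_eq_mul] <;> ring

theorem sqMul_smul (v w : ℤ × ℤ) (n : ℤ) : sqMul P Q v (n • w) = n • sqMul P Q v w := by
  ext <;> simp only [sqMul, Prod.smul_fst, Prod.smul_snd, smul_eq_mul] <;> ring

theorem sqMul_neg (v w : ℤ × ℤ) : sqMul P Q v (-w) = -sqMul P Q v w := by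
  simpa using sqMul_smul v w (-1)

theorem sqMul_sqMul (v w z : ℤ × ℤ) :
    sqMul P Q (sqMul P Q v w) z = sqMul P Q v (sqMul P Q v (sqMul P Q w z)) := by
  ext <;> simp only [sqMul] <;> ring

theorem oddPow_succ (v : ℤ × ℤ) (k : ℕ) : oddPow P Q v (k + 1) = sqMul P Q v (oddPow P Q v k) :=
  Function.iterate_succ_apply' _ _ _

theorem sqMul_oddPow (v w : ℤ × ℤ) (i : ℕ) :
    sqMul P Q (oddPow P Q v i) w = (sqMul P Q v)^[2 * i + 1] w := by
  induction i generalizing w with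
  | zero => rfl
  | succ i ih =>
    rw [oddPow_succ, sqMul_sqMul, ih]
    simp only [← Function.iterate_succ_apply']
    rfl

theorem oddPow_oddPow (v : ℤ × ℤ) (i k : ℕ) :
    oddPow P Q (oddPow P Q v i) k = oddPow P Q v ((2 * i + 1) * k + i) := by
  have hstep : sqMul P Q (oddPow P Q v i) = (sqMul P Q v)^[2 * i + 1] :=
    funext fun w ↦ sqMul_oddPow v w i
  rw [oddPow, hstep, ← Function.iterate_mul, oddPow, oddPow, Function.iterate_add_apply]

theorem normForm_oddPow (v : ℤ × ℤ) (k : ℕ) :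
    normForm P Q (oddPow P Q v k) = normForm P Q v ^ (2 * k + 1) := by
  induction k with
  | zero => simp [oddPow]
  | succ k ih => rw [oddPow_succ, normForm_sqMul, ih]; ring

theorem oddPow_eq_mul_oddCofactor (v : ℤ × ℤ) (k : ℕ) :
    oddPow P Q v k =
      (v.1 * (oddCofactor (P * v.1 ^ 2) (Q * v.2 ^ 2) k).1,
        v.2 * (oddCofactor (P * v.1 ^ 2) (Q * v.2 ^ 2) k).2) := by
  induction k with
  | zero => simp [oddCofactor, oddPow]
  | succ k ih =>
    rw [oddPow_succ, ih, oddCofactor, oddCofactor, oddPow_succ]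
    ext <;> simp only [sqMul] <;> ring

theorem dvd_mul_oddPow_fst {m : ℤ} {v : ℤ × ℤ} (k : ℕ) (hm : m ∣ P * v.1) :
    m ∣ P * (oddPow P Q v k).1 := by
  rw [oddPow_eq_mul_oddCofactor, ← mul_assoc]
  exact hm.mul_right _

theorem dvd_mul_oddPow_snd {m : ℤ} {v : ℤ × ℤ} (k : ℕ) (hm : m ∣ Q * v.2) :
    m ∣ Q * (oddPow P Q v k).2 := by
  rw [oddPow_eq_mul_oddCofactor, ← mul_assoc]
  exact hm.mul_right _

end OddPowers

section OddCofactor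

variable (A B : ℤ) (k : ℕ)

theorem oddCofactor_zero : oddCofactor A B 0 = (1, 1) := rfl

theorem oddCofactor_succ :
    oddCofactor A B (k + 1) =
      ((A - B) * (oddCofactor A B k).1 - 2 * B * (oddCofactor A B k).2,
        (A - B) * (oddCofactor A B k).2 + 2 * A * (oddCofactor A B k).1) := by
  rw [oddCofactor, oddPow_succ, ← oddCofactor]
  simp only [sqMul, one_pow, mul_one]

theorem norm_oddCofactor :
    A * (oddCofactor A B k).1 ^ 2 + B * (oddCofactor A B k).2 ^ 2 = (A + B) ^ (2 * k + 1) := by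
  simpa [normForm, oddCofactor] using normForm_oddPow (P := A) (Q := B) (1, 1) k

theorem oddCofactor_comm :
    oddCofactor B A k = (-1 : ℤ) ^ k • (oddCofactor A B k).swap := by
  induction k with
  | zero => simp [oddCofactor_zero]
  | succ k ih =>
    rw [oddCofactor_succ, ih, oddCofactor_succ]
    ext <;> simp only [Prod.smul_fst, Prod.smul_snd, smul_eq_mul, Prod.fst_swap, Prod.snd_swap] <;>
      ring

theorem oddCofactor_modEq_sq :
    A * (oddCofactor A B k).1 ≡ A ^ (k + 1) - (2 * k + 1).choose 2 * A ^ k * B [ZMOD B ^ 2] ∧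
      A * (oddCofactor A B k).2 ≡
        (2 * k + 1 : ℕ) * A ^ (k + 1) - (2 * k + 1).choose 3 * A ^ k * B [ZMOD B ^ 2] := by
  induction k with
  | zero => simp [oddCofactor_zero, Nat.choose_eq_zero_of_lt]
  | succ k ih =>
    obtain ⟨f, hf⟩ := ih.1.dvd
    obtain ⟨g, hg⟩ := ih.2.dvd
    have hchoose₂ : (2 * (k + 1) + 1).choose 2 = (2 * k + 1).choose 2 + (4 * k + 3) := by
      rw [show 2 * (k + 1) + 1 = 2 * k + 1 + 1 + 1 by ring]
      simp only [Nat.choose_succ_succ' _ 1, Nat.choose_one_right]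
      ring
    have hchoose₃ : (2 * (k + 1) + 1).choose 3 =
        (2 * k + 1).choose 3 + 2 * (2 * k + 1).choose 2 + (2 * k + 1) := by
      rw [show 2 * (k + 1) + 1 = 2 * k + 1 + 1 + 1 by ring]
      simp only [Nat.choose_succ_succ' _ 1, Nat.choose_succ_succ' _ 2, Nat.choose_one_right]
      ring
    rw [oddCofactor_succ, hchoose₂, hchoose₃, Int.modEq_iff_dvd, Int.modEq_iff_dvd]
    push_cast at hg ⊢
    constructor
    · use (A - B) * f - 2 * B * g - A ^ k * ((2 * k + 1).choose 2 + 2 * (2 * k + 1).choose 3)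
      linear_combination (A - B) * hf - 2 * B * hg
    · use (A - B) * g + 2 * A * f - A ^ k * (2 * k + 1).choose 3
      linear_combination (A - B) * hg + 2 * A * hf

end OddCofactor

/-! ### Odd powers with prime exponent -/

section PrimeExponent

variable {A B : ℤ} {k : ℕ}

theorem exists_prime_dvd_of_sq_ne_one {n : ℤ} (hn : n ^ 2 ≠ 1) :
    ∃ p : ℕ, p.Prime ∧ (p : ℤ) ∣ n := by
  have hn' : n.natAbs ≠ 1 := fun h ↦ hn (by rw [← Int.natAbs_sq, h]; rfl)
  obtain ⟨p, hp, hpn⟩ := Nat.exists_prime_and_dvd hn'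
  exact ⟨p, hp, Int.natCast_dvd.2 hpn⟩

theorem dvd_of_prime_dvd_of_mul_sq_eq_pow {p b y : ℕ} {m n : ℤ} (hp : p.Prime)
    (hpn : (p : ℤ) ∣ n) (h : m * n ^ 2 = b ^ y) : (p : ℤ) ∣ b :=
  (Nat.prime_iff_prime_int.1 hp).dvd_of_dvd_pow
    (h ▸ (hpn.trans (dvd_pow_self n two_ne_zero)).mul_left m)

theorem dvd_two_mul_add_one_of_dvd_oddCofactor_snd {q : ℕ} (hq : q.Prime) (hAB : IsCoprime A B)
    (hqB : (q : ℤ) ∣ B) (hqG : (q : ℤ) ∣ (oddCofactor A B k).2) : q ∣ 2 * k + 1 := by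
  have hq' : Prime (q : ℤ) := Nat.prime_iff_prime_int.1 hq
  have hmod := (hqB.trans (dvd_pow_self B two_ne_zero)).trans (oddCofactor_modEq_sq A B k).2.dvd
  have hdvd : (q : ℤ) ∣ (2 * k + 1 : ℕ) * A ^ (k + 1) := by
    simpa only [sub_add_cancel] using
      (hmod.add (hqG.mul_left A)).add (hqB.mul_left ((2 * k + 1).choose 3 * A ^ k))
  refine Int.natCast_dvd_natCast.1 ((hq'.dvd_or_dvd hdvd).resolve_right fun hqA ↦ ?_)
  exact hq'.not_isUnit (hAB.isUnit_of_dvd' (hq'.dvd_of_dvd_pow hqA) hqB)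

theorem dvd_two_mul_add_one_of_dvd_oddCofactor_fst {q : ℕ} (hq : q.Prime) (hAB : IsCoprime A B)
    (hqA : (q : ℤ) ∣ A) (hqF : (q : ℤ) ∣ (oddCofactor A B k).1) : q ∣ 2 * k + 1 := by
  refine dvd_two_mul_add_one_of_dvd_oddCofactor_snd hq hAB.symm hqA ?_
  rw [oddCofactor_comm]
  exact hqF.mul_left _

theorem not_sq_dvd_oddCofactor_snd (hr : (2 * k + 1).Prime) (hr₃ : 3 < 2 * k + 1)
    (hAB : IsCoprime A B) (hrB : ((2 * k + 1 : ℕ) : ℤ) ∣ B) :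
    ¬((2 * k + 1 : ℕ) : ℤ) ^ 2 ∣ (oddCofactor A B k).2 := by
  intro hrG
  set r := 2 * k + 1
  have hr' : Prime (r : ℤ) := Nat.prime_iff_prime_int.1 hr
  have hchoose : (r : ℤ) ∣ r.choose 3 :=
    Int.natCast_dvd_natCast.2 (hr.dvd_choose_self three_ne_zero hr₃)
  have hmod : (r : ℤ) ^ 2 ∣ r * A ^ (k + 1) - r.choose 3 * A ^ k * B - A * (oddCofactor A B k).2 :=
    (pow_dvd_pow_of_dvd hrB 2).trans (oddCofactor_modEq_sq A B k).2.dvd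
  have hchooseB : (r : ℤ) ^ 2 ∣ r.choose 3 * A ^ k * B := by
    rw [sq]
    exact mul_dvd_mul (hchoose.mul_right _) hrB
  have hdvd : (r : ℤ) * r ∣ r * A ^ (k + 1) := by
    simpa only [sub_add_cancel, sq] using (hmod.add (hrG.mul_left A)).add hchooseB
  have hrA : (r : ℤ) ∣ A :=
    hr'.dvd_of_dvd_pow ((mul_dvd_mul_iff_left hr'.ne_zero).1 hdvd)
  exact hr'.not_isUnit (hAB.isUnit_of_dvd' hrA hrB)

theorem oddCofactor_snd_natAbs_eq_pow (hr : (2 * k + 1).Prime) (hA : 0 < A) (hB : 0 < B)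
    (hAB : IsCoprime A B) (hF : (oddCofactor A B k).1 ^ 2 = 1)
    (hG : ∀ q : ℕ, q.Prime → (q : ℤ) ∣ (oddCofactor A B k).2 → (q : ℤ) ∣ B) :
    ∃ j ≠ 0, (oddCofactor A B k).2.natAbs = (2 * k + 1) ^ j := by
  have hnorm := norm_oddCofactor A B k
  have hlt : A + B < (A + B) ^ (2 * k + 1) :=
    lt_self_pow₀ (by lia) hr.one_lt
  rw [hF, mul_one] at hnorm
  have hG₀ : (oddCofactor A B k).2.natAbs ≠ 0 := by
    rw [Int.natAbs_ne_zero]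
    intro h₀
    rw [h₀] at hnorm
    lia
  have hpow := Nat.eq_prime_pow_of_unique_prime_dvd hG₀ fun {q} hq hqG ↦ by
    have hqG' := Int.natCast_dvd.2 hqG
    exact (Nat.prime_dvd_prime_iff_eq hq hr).1
      (dvd_two_mul_add_one_of_dvd_oddCofactor_snd hq hAB (hG q hq hqG') hqG')
  refine ⟨_, fun hj ↦ ?_, hpow⟩
  rw [hj, pow_zero] at hpow
  rw [← Int.natAbs_sq, hpow] at hnorm
  push_cast at hnorm
  lia

theorem add_mul_sq_lt_add_pow {r : ℕ} (hr : 3 ≤ r) (hA : 0 < A) (hB : 0 < B)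
    (hrB : (r : ℤ) ∣ B) : A + B * r ^ 2 < (A + B) ^ r := by
  have hr' : (r : ℤ) ≤ B := Int.le_of_dvd hB hrB
  calc A + B * r ^ 2 < (A + B) ^ 3 := by
        nlinarith [mul_pos hA hB, mul_pos hA hA, pow_pos hA 3, mul_pos (mul_pos hA hA) hB,
          pow_le_pow_left₀ (by positivity) hr' 2]
    _ ≤ (A + B) ^ r := pow_le_pow_right₀ (by lia) hr

theorem eq_one_of_oddCofactor_fst_sq_eq_one (hr : (2 * k + 1).Prime) (hA : 0 < A) (hB : 0 < B)
    (hAB : IsCoprime A B) (hF : (oddCofactor A B k).1 ^ 2 = 1)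
    (hG : ∀ q : ℕ, q.Prime → (q : ℤ) ∣ (oddCofactor A B k).2 → (q : ℤ) ∣ B) : k = 1 := by
  obtain ⟨j, hj, hGj⟩ := oddCofactor_snd_natAbs_eq_pow hr hA hB hAB hF hG
  have hrG : ((2 * k + 1 : ℕ) : ℤ) ∣ (oddCofactor A B k).2 :=
    Int.natCast_dvd.2 (hGj ▸ dvd_pow_self _ hj)
  have hrB := hG _ hr hrG
  by_contra hk
  have hr₃ : 3 < 2 * k + 1 := by have := hr.two_le; lia
  have hj₁ : j = 1 := by
    by_contra hj₁
    refine not_sq_dvd_oddCofactor_snd hr hr₃ hAB hrB ?_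
    rw [← Nat.cast_pow, Int.natCast_dvd, hGj]
    exact pow_dvd_pow _ (by lia)
  have hnorm := norm_oddCofactor A B k
  rw [hF, mul_one, ← Int.natAbs_sq, hGj, hj₁, pow_one] at hnorm
  exact (add_mul_sq_lt_add_pow hr₃.le hA hB hrB).ne hnorm

theorem eq_of_pow_eq_three_pow_mul {b y E i : ℕ} (hE : 0 < E)
    (hEi : 8 * E + 1 = 3 ^ i ∨ 8 * E = 3 ^ i + 1) (hb : b ∣ 3 * E)
    (hy : b ^ y = 3 ^ (2 * i + 3) * E) : E = 1 ∧ i = 2 ∧ b = 3 ∧ y = 7 := by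
  have hi : i ≠ 0 := by rintro rfl; lia
  have hcopE : Nat.Coprime 3 E := by
    refine (Nat.Prime.coprime_iff_not_dvd Nat.prime_three).2 fun h ↦ ?_
    have := dvd_pow_self 3 hi
    lia
  obtain ⟨d, rfl⟩ : 3 ∣ b :=
    Nat.prime_three.dvd_of_dvd_pow (hy ▸ (dvd_pow_self 3 (by lia)).mul_right E)
  have hdE : d ∣ E := Nat.dvd_of_mul_dvd_mul_left three_pos hb
  have hcopd : Nat.Coprime 3 d := hcopE.coprime_dvd_right hdE
  rw [mul_pow] at hy
  obtain rfl : y = 2 * i + 3 := by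
    apply le_antisymm <;> refine (Nat.pow_dvd_pow_iff_le_right (by norm_num : 1 < 3)).1 ?_
    · exact (hcopE.pow_left y).dvd_of_dvd_mul_right (hy ▸ dvd_mul_right _ _)
    · exact (hcopd.pow _ _).dvd_of_dvd_mul_right (hy.symm ▸ dvd_mul_right _ _)
  have hEd : d ^ (2 * i + 3) = E := Nat.eq_of_mul_eq_mul_left (by positivity) hy
  have hd : d < 2 := by
    by_contra! hd
    have hlarge : 8 * 4 ^ i ≤ E := calc
      8 * 4 ^ i = 2 ^ (2 * i + 3) := by rw [pow_add, pow_mul]; ring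
      _ ≤ E := hEd ▸ Nat.pow_le_pow_left hd _
    have : 3 ^ i ≤ 4 ^ i := Nat.pow_le_pow_left (by norm_num) i
    lia
  obtain rfl : d = 1 := by
    have := Nat.pos_of_dvd_of_pos hdE hE
    lia
  rw [one_pow] at hEd
  obtain rfl : i = 2 := by
    have h3 : 3 ∣ 3 ^ i := dvd_pow_self 3 hi
    exact Nat.pow_right_injective (by norm_num : 2 ≤ 3) (by lia : 3 ^ i = 3 ^ 2)
  exact ⟨hEd.symm, rfl, rfl, rfl⟩

theorem exists_eq_three_mul_of_sub_three_mul_sq_eq_one {j : ℕ} (hB : 0 < B)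
    (h3B : 3 ∣ B) (hF : (A - 3 * B) ^ 2 = 1) (hG : (3 * A - B).natAbs = 3 ^ j) (hj : j ≠ 0) :
    ∃ E i : ℕ, 0 < E ∧ B = 3 * E ∧ A = E + 3 ^ i ∧ j = i + 1 ∧
      (8 * E + 1 = 3 ^ i ∨ 8 * E = 3 ^ i + 1) := by
  obtain ⟨i, rfl⟩ := Nat.exists_eq_succ_of_ne_zero hj
  obtain ⟨E, rfl⟩ := h3B
  lift E to ℕ using by lia
  have hF' := sq_eq_one_iff.1 hF
  have hG' : 3 * A - 3 * E = 3 ^ i * 3 := by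
    zify at hG
    rwa [abs_of_pos (by lia)] at hG
  refine ⟨E, i, by lia, rfl, by lia, rfl, ?_⟩
  zify
  lia

theorem eq_of_oddCofactor_fst_sq_eq_one {b y : ℕ} (hr : (2 * k + 1).Prime) (hA : 0 < A)
    (hB : 0 < B) (hAB : IsCoprime A B) (hbB : (b : ℤ) ∣ B) (hF : (oddCofactor A B k).1 ^ 2 = 1)
    (hG : B * (oddCofactor A B k).2 ^ 2 = b ^ y) : A = 10 ∧ B = 3 ∧ b = 3 ∧ y = 7 := by
  have hGB : ∀ q : ℕ, q.Prime → (q : ℤ) ∣ (oddCofactor A B k).2 → (q : ℤ) ∣ B := fun q hq hqG ↦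
    (dvd_of_prime_dvd_of_mul_sq_eq_pow hq hqG hG).trans hbB
  obtain ⟨j, hj, hGj⟩ := oddCofactor_snd_natAbs_eq_pow hr hA hB hAB hF hGB
  obtain rfl := eq_one_of_oddCofactor_fst_sq_eq_one hr hA hB hAB hF hGB
  have h3B : 3 ∣ B := hGB 3 hr (Int.natCast_dvd.2 (hGj ▸ dvd_pow_self 3 hj))
  have hcubic : oddCofactor A B 1 = (A - 3 * B, 3 * A - B) := by
    rw [oddCofactor_succ, oddCofactor_zero]
    ext <;> ring
  rw [hcubic] at hF hGj hG
  obtain ⟨E, i, hE, rfl, rfl, rfl, hEi⟩ :=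
    exists_eq_three_mul_of_sub_three_mul_sq_eq_one hB h3B hF hGj hj
  have hy : b ^ y = 3 ^ (2 * i + 3) * E := by
    rw [← Int.natAbs_sq, hGj] at hG
    zify
    rw [← hG]
    push_cast
    ring
  obtain ⟨rfl, rfl, hb, hy⟩ := eq_of_pow_eq_three_pow_mul hE hEi (by exact_mod_cast hbB) hy
  exact ⟨by norm_num, by norm_num, hb, hy⟩

theorem oddCofactor_fst_or_snd_sq_eq_one {a b x y : ℕ} (hr : (2 * k + 1).Prime)
    (hAB : IsCoprime A B) (haA : (a : ℤ) ∣ A) (hbB : (b : ℤ) ∣ B)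
    (hF : A * (oddCofactor A B k).1 ^ 2 = a ^ x) (hG : B * (oddCofactor A B k).2 ^ 2 = b ^ y) :
    (oddCofactor A B k).1 ^ 2 = 1 ∨ (oddCofactor A B k).2 ^ 2 = 1 := by
  by_contra! h
  obtain ⟨p, hp, hpF⟩ := exists_prime_dvd_of_sq_ne_one h.1
  obtain ⟨q, hq, hqG⟩ := exists_prime_dvd_of_sq_ne_one h.2
  have hpA := (dvd_of_prime_dvd_of_mul_sq_eq_pow hp hpF hF).trans haA
  have hqB := (dvd_of_prime_dvd_of_mul_sq_eq_pow hq hqG hG).trans hbB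
  obtain rfl := (Nat.prime_dvd_prime_iff_eq hp hr).1
    (dvd_two_mul_add_one_of_dvd_oddCofactor_fst hp hAB hpA hpF)
  obtain rfl := (Nat.prime_dvd_prime_iff_eq hq hr).1
    (dvd_two_mul_add_one_of_dvd_oddCofactor_snd hq hAB hqB hqG)
  exact (Nat.prime_iff_prime_int.1 hr).not_isUnit (hAB.isUnit_of_dvd' hpA hqB)

theorem eq_of_mul_oddCofactor_sq_eq_pow {a b x y : ℕ} (hr : (2 * k + 1).Prime) (hA : 0 < A)
    (hB : 0 < B) (hAB : IsCoprime A B) (haA : (a : ℤ) ∣ A) (hbB : (b : ℤ) ∣ B)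
    (hF : A * (oddCofactor A B k).1 ^ 2 = a ^ x) (hG : B * (oddCofactor A B k).2 ^ 2 = b ^ y) :
    (A = 10 ∧ B = 3 ∧ b = 3 ∧ y = 7 ∧ a ^ x = 10) ∨
      (A = 3 ∧ B = 10 ∧ a = 3 ∧ x = 7 ∧ b ^ y = 10) := by
  rcases oddCofactor_fst_or_snd_sq_eq_one hr hAB haA hbB hF hG with h | h
  · obtain ⟨rfl, rfl, hb, hy⟩ := eq_of_oddCofactor_fst_sq_eq_one hr hA hB hAB hbB h hG
    rw [h] at hF
    exact .inl ⟨rfl, rfl, hb, hy, by exact_mod_cast hF.symm⟩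
  · have hswap : (oddCofactor B A k).1 ^ 2 = (oddCofactor A B k).2 ^ 2 ∧
        (oddCofactor B A k).2 ^ 2 = (oddCofactor A B k).1 ^ 2 := by
      rw [oddCofactor_comm]
      simp [mul_pow, ← pow_mul]
    obtain ⟨rfl, rfl, ha, hx⟩ := eq_of_oddCofactor_fst_sq_eq_one hr hB hA hAB.symm haA
      (hswap.1.trans h) (hswap.2.symm ▸ hF)
    rw [h] at hG
    exact .inr ⟨rfl, rfl, ha, hx, by exact_mod_cast hG.symm⟩

end PrimeExponent

/-! ### Descent to a generator -/

/-- The standing assumptions of the descent: `(1, τ)` is a zero of `P X² + Q Y²` modulo `c`, and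
`m`, `n` are the non-units by which `P X` and `Q Y` are required to be divisible. -/
structure DescentData (P Q : ℤ) (c : ℕ) (τ : ZMod c) (m n : ℤ) : Prop where
  P_pos : 0 < P
  Q_pos : 0 < Q
  one_lt : 1 < c
  isUnit_two : IsUnit (2 : ZMod c)
  isUnit_P : IsUnit (P : ZMod c)
  isUnit_Q : IsUnit (Q : ZMod c)
  root : (P : ZMod c) + Q * τ ^ 2 = 0
  not_isUnit_left : ¬IsUnit m
  not_isUnit_right : ¬IsUnit n

/-- The pair `v` represents `c ^ N` by the form `P X² + Q Y²`, it is proportional to `(1, τ)`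
modulo `c`, and its coordinates satisfy the divisibilities by `m` and `n`. -/
structure IsAlignedRep (P Q : ℤ) (c : ℕ) (τ : ZMod c) (m n : ℤ) (v : ℤ × ℤ) (N : ℕ) : Prop where
  pos : 0 < N
  norm : normForm P Q v = (c : ℤ) ^ N
  align : (v.2 : ZMod c) = τ * v.1
  isUnit : IsUnit (v.1 : ZMod c)
  dvd_fst : m ∣ P * v.1
  dvd_snd : n ∣ Q * v.2

section Descent

variable {P Q : ℤ} {c : ℕ} {τ : ZMod c} {m n : ℤ} {v w : ℤ × ℤ} {g N M : ℕ}

namespace DescentData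

variable (D : DescentData P Q c τ m n)
include D

theorem isUnit_τ : IsUnit τ := by
  have h : (Q : ZMod c) * τ * τ = -P := by linear_combination D.root
  exact isUnit_of_mul_isUnit_right (h ▸ D.isUnit_P.neg)

theorem pow_ne_zero (M : ℕ) : (c : ℤ) ^ M ≠ 0 := by
  have := D.one_lt
  positivity

theorem isAlignedRep_of_isUnit_add (hN : 0 < N) (hnorm : normForm P Q v = (c : ℤ) ^ N)
    (hv : IsUnit ((v.2 : ZMod c) + τ * v.1)) (hm : m ∣ P * v.1) (hn : n ∣ Q * v.2) :
    IsAlignedRep P Q c τ m n v N := by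
  have hnorm₀ : (P : ZMod c) * v.1 ^ 2 + Q * v.2 ^ 2 = 0 := by
    have h := congrArg (Int.cast : ℤ → ZMod c) hnorm
    push_cast [normForm] at h
    rwa [ZMod.natCast_self, zero_pow hN.ne'] at h
  have halign : (v.2 : ZMod c) = τ * v.1 := by
    have hmul : (Q * ((v.2 : ZMod c) + τ * v.1)) * (v.2 - τ * v.1) = 0 := by
      linear_combination hnorm₀ - (v.1 : ZMod c) ^ 2 * D.root
    exact sub_eq_zero.1 ((D.isUnit_Q.mul hv).mul_right_eq_zero.1 hmul)
  refine ⟨hN, hnorm, halign, ?_, hm, hn⟩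
  rw [halign, ← two_mul] at hv
  exact isUnit_of_mul_isUnit_right (isUnit_of_mul_isUnit_right hv)

section

variable (hv : IsAlignedRep P Q c τ m n v g)
include hv

theorem isCoprime_left : IsCoprime (c : ℤ) m := by
  refine IsCoprime.of_isCoprime_of_dvd_right ?_ hv.dvd_fst
  rw [← ZMod.coe_int_isUnit_iff_isCoprime]
  push_cast
  exact D.isUnit_P.mul hv.isUnit

theorem isCoprime_right : IsCoprime (c : ℤ) n := by
  refine IsCoprime.of_isCoprime_of_dvd_right ?_ hv.dvd_snd
  rw [← ZMod.coe_int_isUnit_iff_isCoprime]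
  push_cast
  exact D.isUnit_Q.mul (hv.align ▸ D.isUnit_τ.mul hv.isUnit)

variable (hw : IsAlignedRep P Q c τ m n w N)
include hw

theorem isUnit_sqMul_snd : IsUnit ((sqMul P Q v w).2 : ZMod c) := by
  have h : ((sqMul P Q v w).2 : ZMod c) = 2 * 2 * P * τ * v.1 ^ 2 * w.1 := by
    push_cast [sqMul]
    rw [hv.align, hw.align]
    linear_combination -(v.1 : ZMod c) ^ 2 * τ * w.1 * D.root
  rw [h]
  exact ((((D.isUnit_two.mul D.isUnit_two).mul D.isUnit_P).mul D.isUnit_τ).mul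
    (hv.isUnit.pow 2)).mul hw.isUnit

theorem pow_dvd_sqMul_conjPair_snd (hMg : M ≤ 2 * g) (hMN : M ≤ N) :
    (c : ℤ) ^ M ∣ (sqMul P Q (conjPair v) w).2 := by
  have hcop : IsCoprime ((c : ℤ) ^ M) (sqMul P Q v w).2 :=
    ((ZMod.coe_int_isUnit_iff_isCoprime _ _).1 (D.isUnit_sqMul_snd hv hw)).pow_left
  refine hcop.dvd_of_dvd_mul_right ?_
  have hprod : (sqMul P Q (conjPair v) w).2 * (sqMul P Q v w).2 =
      w.2 ^ 2 * normForm P Q v ^ 2 - P * (2 * v.1 * v.2) ^ 2 * normForm P Q w := by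
    simp only [sqMul, conjPair, normForm]
    ring
  rw [hprod, hv.norm, hw.norm, ← pow_mul, mul_comm g]
  exact dvd_sub (dvd_mul_of_dvd_right (pow_dvd_pow _ hMg) _)
    (dvd_mul_of_dvd_right (pow_dvd_pow _ hMN) _)

theorem pow_dvd_sqMul_conjPair_fst (hMg : M ≤ 2 * g) (hMN : M ≤ N) :
    (c : ℤ) ^ M ∣ (sqMul P Q (conjPair v) w).1 := by
  have hsnd := pow_dvd_pow_of_dvd (D.pow_dvd_sqMul_conjPair_snd hv hw hMg hMN) 2
  have hnorm := normForm_sqMul (P := P) (Q := Q) (conjPair v) w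
  rw [normForm_conjPair, hv.norm, hw.norm, ← pow_mul, ← pow_add, normForm] at hnorm
  have hcop : IsCoprime (((c : ℤ) ^ M) ^ 2) P :=
    ((ZMod.coe_int_isUnit_iff_isCoprime _ _).1 D.isUnit_P).pow_left.pow_left
  refine (Int.pow_dvd_pow_iff two_ne_zero).1 (hcop.dvd_of_dvd_mul_left ?_)
  rw [eq_sub_of_add_eq hnorm, ← pow_mul]
  exact dvd_sub (pow_dvd_pow _ (by lia)) (dvd_mul_of_dvd_right (pow_mul (c : ℤ) M 2 ▸ hsnd) _)

theorem exists_sqMul_conjPair_eq_smul (hMg : M ≤ 2 * g) (hMN : M ≤ N) :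
    ∃ u : ℤ × ℤ, sqMul P Q (conjPair v) w = (c : ℤ) ^ M • u ∧
      normForm P Q u = (c : ℤ) ^ (2 * g + N - 2 * M) ∧ m ∣ P * u.1 ∧ n ∣ Q * u.2 := by
  obtain ⟨U, hU⟩ := D.pow_dvd_sqMul_conjPair_fst hv hw hMg hMN
  obtain ⟨V, hV⟩ := D.pow_dvd_sqMul_conjPair_snd hv hw hMg hMN
  refine ⟨(U, V), Prod.ext hU hV, ?_, ?_, ?_⟩
  · have hnorm := normForm_sqMul (P := P) (Q := Q) (conjPair v) w
    rw [normForm_conjPair, hv.norm, hw.norm, ← pow_mul, ← pow_add, normForm, hU, hV] at hnorm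
    refine mul_left_cancel₀ (D.pow_ne_zero (2 * M)) ?_
    rw [← pow_add, normForm, show 2 * M + (2 * g + N - 2 * M) = g * 2 + N by lia, ← hnorm]
    ring
  · refine (D.isCoprime_left hv).symm.pow_right.dvd_of_dvd_mul_left (y := (c : ℤ) ^ M) ?_
    have h : (c : ℤ) ^ M * (P * U) =
        P * w.1 * (P * v.1 ^ 2 - Q * v.2 ^ 2) + P * v.1 * (2 * Q * v.2 * w.2) := by
      rw [mul_left_comm, ← hU]
      simp only [sqMul, conjPair]
      ring
    rw [h]
    exact dvd_add (hw.dvd_fst.mul_right _) (hv.dvd_fst.mul_right _)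
  · refine (D.isCoprime_right hv).symm.pow_right.dvd_of_dvd_mul_left (y := (c : ℤ) ^ M) ?_
    have h : (c : ℤ) ^ M * (Q * V) =
        Q * w.2 * (P * v.1 ^ 2 - Q * v.2 ^ 2) - Q * v.2 * (2 * P * v.1 * w.1) := by
      rw [mul_left_comm, ← hV]
      simp only [sqMul, conjPair]
      ring
    rw [h]
    exact dvd_sub (hw.dvd_snd.mul_right _) (hv.dvd_snd.mul_right _)

theorem exists_eq_sqMul (hN : 2 * g < N) :
    ∃ u, IsAlignedRep P Q c τ m n u (N - 2 * g) ∧ w = sqMul P Q v u := by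
  obtain ⟨u, hu, hnorm, hm, hn⟩ := D.exists_sqMul_conjPair_eq_smul hv hw le_rfl hN.le
  have hwu : w = sqMul P Q v u := by
    refine smul_right_injective (ℤ × ℤ) (D.pow_ne_zero (2 * g)) ?_
    dsimp only
    rw [← sqMul_smul, ← hu, sqMul_conjPair, hv.norm, ← pow_mul, mul_comm g]
  refine ⟨u, D.isAlignedRep_of_isUnit_add (by lia) ?_ ?_ hm hn, hwu⟩
  · rw [hnorm]
    congr 1
    lia
  · have h : (w.1 : ZMod c) = -2 * Q * τ * v.1 ^ 2 * (u.2 + τ * u.1) := by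
      rw [hwu]
      push_cast [sqMul]
      rw [hv.align]
      linear_combination (v.1 : ZMod c) ^ 2 * u.1 * D.root
    exact isUnit_of_mul_isUnit_right (h ▸ hw.isUnit)

theorem exists_isAlignedRep_sub (hN : N < 2 * g) :
    ∃ u, IsAlignedRep P Q c τ m n u (2 * g - N) := by
  obtain ⟨u, hu, hnorm, hm, hn⟩ := D.exists_sqMul_conjPair_eq_smul hv hw hN.le le_rfl
  refine ⟨conjPair u, D.isAlignedRep_of_isUnit_add (by lia) ?_ ?_ hm ?_⟩
  · rw [normForm_conjPair, hnorm]
    congr 1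
    lia
  · have hfst : P * v.1 ^ 2 - Q * v.2 ^ 2 = P * u.1 * w.1 + Q * u.2 * w.2 := by
      refine mul_left_cancel₀ (D.pow_ne_zero N) ?_
      have hu₁ := congrArg Prod.fst hu
      have hu₂ := congrArg Prod.snd hu
      have hw' := hw.norm
      simp only [sqMul, conjPair, normForm, Prod.smul_fst, Prod.smul_snd, smul_eq_mul]
        at hu₁ hu₂ hw'
      linear_combination P * w.1 * hu₁ + Q * w.2 * hu₂ - (P * v.1 ^ 2 - Q * v.2 ^ 2) * hw'
    have hfst' := congrArg (Int.cast : ℤ → ZMod c) hfst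
    push_cast at hfst'
    rw [hv.align, hw.align] at hfst'
    have h : 2 * P * (v.1 : ZMod c) ^ 2 =
        -Q * τ * w.1 * (((conjPair u).2 : ℤ) + τ * (conjPair u).1) := by
      push_cast [conjPair]
      linear_combination hfst' + ((v.1 : ZMod c) ^ 2 + u.1 * w.1) * D.root
    exact isUnit_of_mul_isUnit_right (h ▸ (D.isUnit_two.mul D.isUnit_P).mul (hv.isUnit.pow 2))
  · simpa [conjPair] using hn

theorem ne_two_mul : N ≠ 2 * g := by
  rintro rfl
  obtain ⟨u, -, hnorm, hm, hn⟩ := D.exists_sqMul_conjPair_eq_smul hv hw le_rfl le_rfl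
  rw [show 2 * g + 2 * g - 2 * (2 * g) = 0 by lia, pow_zero, normForm] at hnorm
  have hP : 0 ≤ P * u.1 ^ 2 := mul_nonneg D.P_pos.le (sq_nonneg _)
  have hQ : 0 ≤ Q * u.2 ^ 2 := mul_nonneg D.Q_pos.le (sq_nonneg _)
  have hone : P * u.1 * u.1 = 1 ∨ Q * u.2 * u.2 = 1 := by
    rw [mul_assoc, mul_assoc, ← sq, ← sq]
    lia
  rcases hone with h | h
  · exact D.not_isUnit_left (isUnit_of_dvd_one (h ▸ hm.mul_right _))
  · exact D.not_isUnit_right (isUnit_of_dvd_one (h ▸ hn.mul_right _))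

end

section EqualExponent

variable (hv : IsAlignedRep P Q c τ m n v g) (hw : IsAlignedRep P Q c τ m n w g)
include hv hw

theorem pow_dvd_cross : (c : ℤ) ^ g ∣ v.1 * w.2 - w.1 * v.2 := by
  have hunit : IsUnit ((Q * (v.1 * w.2 + w.1 * v.2) : ℤ) : ZMod c) := by
    have h : ((Q * (v.1 * w.2 + w.1 * v.2) : ℤ) : ZMod c) = Q * (2 * τ * v.1 * w.1) := by
      push_cast
      rw [hv.align, hw.align]
      ring
    rw [h]
    exact D.isUnit_Q.mul (((D.isUnit_two.mul D.isUnit_τ).mul hv.isUnit).mul hw.isUnit)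
  refine IsCoprime.dvd_of_dvd_mul_right
    ((ZMod.coe_int_isUnit_iff_isCoprime _ _).1 hunit).pow_left ⟨v.1 ^ 2 - w.1 ^ 2, ?_⟩
  have hnv := hv.norm
  have hnw := hw.norm
  simp only [normForm] at hnv hnw
  linear_combination v.1 ^ 2 * hnw - w.1 ^ 2 * hnv

theorem cross_eq_zero : v.1 * w.2 - w.1 * v.2 = 0 := by
  obtain ⟨s, hs⟩ := D.pow_dvd_cross hv hw
  by_contra hne
  have hs₀ : s ≠ 0 := by
    rintro rfl
    exact hne (by rw [hs, mul_zero])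
  have hident : (P * v.1 * w.1 + Q * v.2 * w.2) ^ 2 + P * Q * (v.1 * w.2 - w.1 * v.2) ^ 2 =
      ((c : ℤ) ^ g) ^ 2 := by
    rw [sq ((c : ℤ) ^ g)]
    nth_rw 1 [← hv.norm]
    rw [← hw.norm]
    simp only [normForm]
    ring
  have hpolar : P * v.1 * w.1 + Q * v.2 * w.2 = 0 := by
    have hone : 1 ≤ P * Q * s ^ 2 :=
      Int.add_one_le_of_lt (mul_pos (mul_pos D.P_pos D.Q_pos) (by positivity))
    rw [hs, mul_pow] at hident
    refine pow_eq_zero_iff two_ne_zero |>.1 (le_antisymm ?_ (sq_nonneg _))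
    linarith [mul_le_mul_of_nonneg_left hone (sq_nonneg ((c : ℤ) ^ g))]
  rw [hpolar, zero_pow two_ne_zero, zero_add, ← pow_mul] at hident
  have hm : m ∣ (c : ℤ) ^ (g * 2) := by
    rw [← hident, sq, ← mul_assoc, show P * Q * (v.1 * w.2 - w.1 * v.2) =
      P * v.1 * (Q * w.2) - P * w.1 * (Q * v.2) by ring]
    exact (dvd_sub (hv.dvd_fst.mul_right _) (hw.dvd_fst.mul_right _)).mul_right _
  exact D.not_isUnit_left ((D.isCoprime_left hv).pow_left.isUnit_of_dvd' hm dvd_rfl)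

theorem eq_or_eq_neg : w = v ∨ w = -v := by
  have hcross := D.cross_eq_zero hv hw
  have hnv := hv.norm
  have hnw := hw.norm
  simp only [normForm] at hnv hnw
  have hsmul : (c : ℤ) ^ g • w = (P * v.1 * w.1 + Q * v.2 * w.2) • v := by
    ext <;> simp only [Prod.smul_fst, Prod.smul_snd, smul_eq_mul]
    · linear_combination -w.1 * hnv - Q * v.2 * hcross
    · linear_combination -w.2 * hnv + P * v.1 * hcross
  have hpolar : (P * v.1 * w.1 + Q * v.2 * w.2) ^ 2 = ((c : ℤ) ^ g) ^ 2 := by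
    linear_combination (c : ℤ) ^ g * hnw + (P * w.1 ^ 2 + Q * w.2 ^ 2) * hnv -
      P * Q * (v.1 * w.2 - w.1 * v.2) * hcross
  have hinj := smul_right_injective (ℤ × ℤ) (D.pow_ne_zero g)
  rcases sq_eq_sq_iff_eq_or_eq_neg.1 hpolar with h | h
  · exact .inl (hinj (by dsimp only; rw [hsmul, h]))
  · exact .inr (hinj (by dsimp only; rw [hsmul, h, neg_smul, smul_neg]))

end EqualExponent

end DescentData

theorem DescentData.exists_generator (D : DescentData P Q c τ m n)
    (hv : IsAlignedRep P Q c τ m n v N) :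
    ∃ w g, IsAlignedRep P Q c τ m n w g ∧ ∀ u K, IsAlignedRep P Q c τ m n u K →
      ∃ j, u = oddPow P Q w j ∨ u = -oddPow P Q w j := by
  classical
  have hex : ∃ g w, IsAlignedRep P Q c τ m n w g := ⟨N, v, hv⟩
  obtain ⟨w, hw⟩ := Nat.find_spec hex
  have hmin : ∀ K u, IsAlignedRep P Q c τ m n u K → Nat.find hex ≤ K :=
    fun K u hu ↦ Nat.find_min' hex ⟨u, hu⟩
  set g := Nat.find hex
  refine ⟨w, g, hw, fun u K ↦ ?_⟩
  induction K using Nat.strong_induction_on generalizing u with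
  | _ K ih =>
    intro hu
    have hg := hw.pos
    have hgK := hmin K u hu
    rcases lt_trichotomy K (2 * g) with hK | hK | hK
    · obtain ⟨u', hu'⟩ := D.exists_isAlignedRep_sub hw hu hK
      have hgK' := hmin _ u' hu'
      obtain rfl : K = g := by lia
      exact ⟨0, D.eq_or_eq_neg hw hu⟩
    · exact absurd hK (D.ne_two_mul hw hu)
    · obtain ⟨u', hu', rfl⟩ := D.exists_eq_sqMul hw hu hK
      obtain ⟨j, rfl | rfl⟩ := ih (K - 2 * g) (by lia) u' hu'
      · exact ⟨j + 1, .inl (oddPow_succ _ _).symm⟩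
      · exact ⟨j + 1, .inr (by rw [sqMul_neg, oddPow_succ])⟩

end Descent

/-! ### The exceptional identity -/

/-- `(a, b, c)` and the exponents `x, y` come from `10 + 3 ^ 7 = 13 ^ 3`, or from the same identity
with the summands exchanged. -/
def IsExceptional (a b c x y : ℕ) : Prop :=
  (a = 10 ∧ b = 3 ∧ c = 13 ∧ x = 1 ∧ y = 7) ∨ (a = 3 ∧ b = 10 ∧ c = 13 ∧ x = 7 ∧ y = 1)

theorem eq_and_eq_one_of_pow_eq_of_squarefree {d k s : ℕ} (hs : Squarefree s) (hs₁ : s ≠ 1)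
    (h : d ^ k = s) : d = s ∧ k = 1 := by
  subst h
  have hk : k ≠ 0 := by
    rintro rfl
    exact hs₁ (pow_zero d)
  have hd : d ≠ 1 := by
    rintro rfl
    exact hs₁ (one_pow k)
  obtain ⟨-, rfl⟩ := (Nat.squarefree_pow_iff hd hk).1 hs
  exact ⟨(pow_one d).symm, rfl⟩

theorem isExceptional_of_mul_oddCofactor_sq {A B : ℤ} {a b c x y k N : ℕ}
    (hr : (2 * k + 1).Prime) (hA : 0 < A) (hB : 0 < B) (hAB : IsCoprime A B)
    (haA : (a : ℤ) ∣ A) (hbB : (b : ℤ) ∣ B) (hF : A * (oddCofactor A B k).1 ^ 2 = a ^ x)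
    (hG : B * (oddCofactor A B k).2 ^ 2 = b ^ y) (hc : A + B = c ^ N) :
    IsExceptional a b c x y := by
  have h₁₀ : Squarefree 10 := (Nat.squarefree_mul (by norm_num : Nat.Coprime 2 5)).2
    ⟨Nat.prime_two.prime.squarefree, Nat.prime_five.prime.squarefree⟩
  have h₁₃ : Squarefree 13 := (by norm_num : Nat.Prime 13).prime.squarefree
  have hc₁₃ : c ^ N = 13 → c = 13 := fun h ↦
    (eq_and_eq_one_of_pow_eq_of_squarefree h₁₃ (by norm_num) h).1
  rcases eq_of_mul_oddCofactor_sq_eq_pow hr hA hB hAB haA hbB hF hG with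
    ⟨rfl, rfl, rfl, rfl, ha⟩ | ⟨rfl, rfl, rfl, rfl, hb⟩
  · obtain ⟨rfl, rfl⟩ := eq_and_eq_one_of_pow_eq_of_squarefree h₁₀ (by norm_num) ha
    exact .inl ⟨rfl, rfl, hc₁₃ (by exact_mod_cast hc.symm), rfl, rfl⟩
  · obtain ⟨rfl, rfl⟩ := eq_and_eq_one_of_pow_eq_of_squarefree h₁₀ (by norm_num) hb
    exact .inr ⟨rfl, rfl, hc₁₃ (by exact_mod_cast hc.symm), rfl, rfl⟩

theorem isExceptional_of_mul_oddPow_sq {P Q : ℤ} {a b c x y j N : ℕ} {v : ℤ × ℤ}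
    (ha : 0 < a) (hb : 0 < b) (hab : Nat.Coprime a b)
    (hnorm : normForm P Q v = (c : ℤ) ^ N) (hav : (a : ℤ) ∣ P * v.1) (hbv : (b : ℤ) ∣ Q * v.2)
    (hj : j ≠ 0) (hx : P * (oddPow P Q v j).1 ^ 2 = a ^ x)
    (hy : Q * (oddPow P Q v j).2 ^ 2 = b ^ y) : IsExceptional a b c x y := by
  obtain ⟨r, hr, i', hi'⟩ := Nat.exists_prime_and_dvd (n := 2 * j + 1) (by lia)
  obtain ⟨hr_odd, hi_odd⟩ := Nat.odd_mul.1 (hi' ▸ odd_two_mul_add_one j)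
  obtain ⟨k, rfl⟩ := hr_odd
  obtain ⟨i, rfl⟩ := hi_odd
  have hj_eq : j = (2 * i + 1) * k + i := by lia
  set u := oddPow P Q v i
  set A := P * u.1 ^ 2
  set B := Q * u.2 ^ 2
  have hpow : oddPow P Q v j = (u.1 * (oddCofactor A B k).1, u.2 * (oddCofactor A B k).2) := by
    rw [hj_eq, ← oddPow_oddPow, oddPow_eq_mul_oddCofactor]
  rw [hpow, mul_pow, ← mul_assoc] at hx hy
  have haA : (a : ℤ) ∣ A := by
    rw [show A = P * u.1 * u.1 by ring]
    exact (dvd_mul_oddPow_fst i hav).mul_right _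
  have hbB : (b : ℤ) ∣ B := by
    rw [show B = Q * u.2 * u.2 by ring]
    exact (dvd_mul_oddPow_snd i hbv).mul_right _
  have hA : 0 < A := pos_of_mul_pos_left (b := (oddCofactor A B k).1 ^ 2)
    (hx ▸ by positivity) (sq_nonneg _)
  have hB : 0 < B := pos_of_mul_pos_left (b := (oddCofactor A B k).2 ^ 2)
    (hy ▸ by positivity) (sq_nonneg _)
  have hAB : IsCoprime A B :=
    ((Nat.isCoprime_iff_coprime.2 hab).pow (m := x) (n := y)).of_isCoprime_of_dvd_left
      (Dvd.intro _ hx) |>.of_isCoprime_of_dvd_right (Dvd.intro _ hy)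
  refine isExceptional_of_mul_oddCofactor_sq (N := N * (2 * i + 1)) hr hA hB hAB haA hbB hx hy ?_
  rw [pow_mul, ← hnorm, ← normForm_oddPow, normForm]

theorem isExceptional_or_mul_sq_eq_pow {P Q : ℤ} {a b c x y j N : ℕ} {τ : ZMod c} {v w : ℤ × ℤ}
    (ha : 0 < a) (hb : 0 < b) (hab : Nat.Coprime a b) (hw : IsAlignedRep P Q c τ a b w N)
    (hv : v = oddPow P Q w j ∨ v = -oddPow P Q w j) (hx : P * v.1 ^ 2 = a ^ x)
    (hy : Q * v.2 ^ 2 = b ^ y) :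
    IsExceptional a b c x y ∨ (P * w.1 ^ 2 = a ^ x ∧ Q * w.2 ^ 2 = b ^ y) := by
  have hxw : P * (oddPow P Q w j).1 ^ 2 = a ^ x := by
    rcases hv with rfl | rfl <;> simpa using hx
  have hyw : Q * (oddPow P Q w j).2 ^ 2 = b ^ y := by
    rcases hv with rfl | rfl <;> simpa using hy
  rcases eq_or_ne j 0 with rfl | hj
  · exact .inr ⟨hxw, hyw⟩
  · exact .inl (isExceptional_of_mul_oddPow_sq ha hb hab hw.norm hw.dvd_fst hw.dvd_snd hj hxw hyw)

/-! ### Parity classes in a plane lattice -/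

section Parity

variable {M A : Type*} [AddCommGroup M] [Module.Free ℤ M] [Module.Finite ℤ M] [AddCommGroup A]
  {e : A} (hM : Module.finrank ℤ M ≤ 2) (he : e ≠ 0) (he₂ : 2 • e = 0)
include hM he he₂

theorem exists_eq_add_two_nsmul_of_forall_eq_zero_or_eq (f : M →+ A)
    (hf : ∀ u, f u = 0 ∨ f u = e) (s : Fin 3 → M) (hs : ∀ i, f (s i) = e) :
    ∃ i j, i ≠ j ∧ ∃ u, s i = s j + 2 • u := by
  let φ : ModN M 2 →+ A := ModN.liftEquiv.symm ⟨f, fun u ↦ by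
    rcases hf u with h | h <;> simp [h, he₂]⟩
  have hφ : ∀ i, φ (ModN.mkQ 2 (s i)) = e := hs
  have hker : Nat.card φ.ker ≤ 2 := by
    have hcard : Nat.card (ModN M 2) ≤ 4 := by
      rw [ModN.natCard_eq]
      exact Nat.pow_le_pow_right two_pos hM
    have hindex : 1 < φ.ker.index := by
      refine AddSubgroup.one_lt_index_of_ne_top fun htop ↦ he ?_
      rw [← hφ 0, ← AddMonoidHom.mem_ker, htop]
      trivial
    have := φ.ker.card_mul_index
    nlinarith
  have hdiff : ∀ i, ModN.mkQ 2 (s i) - ModN.mkQ 2 (s 0) ∈ φ.ker := fun i ↦ by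
    rw [AddMonoidHom.mem_ker, map_sub, hφ, hφ, sub_self]
  obtain ⟨i, j, h, hij⟩ := Function.not_injective_iff.1
    fun hinj : Function.Injective fun i ↦ (⟨_, hdiff i⟩ : φ.ker) ↦ by
      have := Nat.card_le_card_of_injective _ hinj
      rw [Nat.card_fin] at this
      lia
  obtain ⟨u, hu⟩ := (Submodule.Quotient.eq _).1 (sub_left_injective (congrArg Subtype.val h))
  refine ⟨i, j, hij, u, ?_⟩
  rw [← sub_eq_iff_eq_add', ← hu]
  exact natCast_zsmul u 2

theorem exists_eq_add_two_nsmul_of_map_eq (f : M →ₗ[ℤ] A) (s : Fin 3 → M)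
    (hs : ∀ i, f (s i) = e) :
    ∃ i j, i ≠ j ∧ ∃ u, s i = s j + 2 • u ∧ (f u = 0 ∨ f u = e) := by
  let K : Submodule ℤ M := (Submodule.span ℤ {e}).comap f
  have hK : ∀ u : K, f u = 0 ∨ f u = e := by
    rintro ⟨u, hu⟩
    obtain ⟨k, hk⟩ := Submodule.mem_span_singleton.1 hu
    have heven (l : ℤ) : (2 * l) • e = 0 := by
      rw [mul_comm, mul_smul, ofNat_zsmul, he₂, smul_zero]
    obtain ⟨l, rfl | rfl⟩ := Int.even_or_odd' k
    · exact .inl (hk ▸ heven l)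
    · exact .inr (by rw [← hk, add_smul, heven, zero_add, one_smul])
  have hsK : ∀ i, s i ∈ K := fun i ↦ by
    rw [Submodule.mem_comap, hs]
    exact Submodule.mem_span_singleton_self e
  obtain ⟨i, j, hij, u, hu⟩ := exists_eq_add_two_nsmul_of_forall_eq_zero_or_eq
    ((Submodule.finrank_le K).trans hM) he he₂ (f.domRestrict K).toAddMonoidHom hK
    (fun i ↦ ⟨s i, hsK i⟩) hs
  exact ⟨i, j, hij, u, congrArg Subtype.val hu, hK u⟩

end Parity

/-! ### Solutions of `a ^ x + b ^ y = c ^ z` -/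

/-- The hypotheses on the bases of the equation `a ^ x + b ^ y = c ^ z`. -/
structure IsAdmissible (a b c : ℕ) : Prop where
  coprime_ab : Nat.Coprime a b
  coprime_ac : Nat.Coprime a c
  coprime_bc : Nat.Coprime b c
  one_lt_a : 1 < a
  one_lt_b : 1 < b
  one_lt_c : 1 < c
  odd_c : Odd c

/-- The triple `s = (x, y, z)` is a solution of `a ^ x + b ^ y = c ^ z` in positive integers. -/
structure IsSolution (a b c : ℕ) (s : ℕ × ℕ × ℕ) : Prop where
  x_pos : 0 < s.1
  y_pos : 0 < s.2.1
  z_pos : 0 < s.2.2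
  eq : a ^ s.1 + b ^ s.2.1 = c ^ s.2.2

/-- The solutions `s` and `t` are governed by the same descent: they are represented by the same
form `P X² + Q Y²`, with `P ∈ {1, a}` and `Q ∈ {1, b}`, and the representing pairs are proportional
modulo `c` up to the sign of `Y`. -/
structure IsCompatible (a b c : ℕ) (s t : ℕ × ℕ × ℕ) : Prop where
  x_mod_two : s.1 % 2 = t.1 % 2
  y_mod_two : s.2.1 % 2 = t.2.1 % 2
  cross : (a : ZMod c) ^ (s.1 / 2) * b ^ (t.2.1 / 2) = a ^ (t.1 / 2) * b ^ (s.2.1 / 2) ∨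
    (a : ZMod c) ^ (s.1 / 2) * b ^ (t.2.1 / 2) = -(a ^ (t.1 / 2) * b ^ (s.2.1 / 2))

section Solutions

variable {a b c : ℕ} {s t : ℕ × ℕ × ℕ}

theorem pow_mod_two_mul_pow_div_two_sq {R : Type*} [Monoid R] (a : R) (x : ℕ) :
    a ^ (x % 2) * (a ^ (x / 2)) ^ 2 = a ^ x := by
  rw [← pow_mul, ← pow_add, mul_comm, Nat.mod_add_div]

theorem dvd_pow_mod_two_mul_pow_div_two {R : Type*} [Monoid R] (a : R) {x : ℕ} (hx : 0 < x) :
    a ∣ a ^ (x % 2) * a ^ (x / 2) := by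
  rw [← pow_add]
  exact dvd_pow_self a (by lia)

theorem IsSolution.ext (hc : 1 < c) (hs : IsSolution a b c s) (ht : IsSolution a b c t)
    (hx : s.1 = t.1) (hy : s.2.1 = t.2.1) : s = t := by
  refine Prod.ext hx (Prod.ext hy (Nat.pow_right_injective hc ?_))
  dsimp only
  rw [← hs.eq, ← ht.eq, hx, hy]

theorem IsSolution.pow_add_pow_eq_zero (hs : IsSolution a b c s) :
    (a : ZMod c) ^ s.1 + b ^ s.2.1 = 0 := by
  have h := congrArg (Nat.cast : ℕ → ZMod c) hs.eq
  push_cast at h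
  rwa [ZMod.natCast_self, zero_pow hs.z_pos.ne'] at h

/-- The homomorphism `(p, q) ↦ α ^ p / β ^ q`, written additively so that it is `ℤ`-linear on the
lattice of exponents. -/
def zpowDiv {G : Type*} [CommGroup G] (α β : G) : ℤ × ℤ →ₗ[ℤ] Additive G :=
  (LinearMap.toSpanSingleton ℤ _ (.ofMul α)).coprod (-LinearMap.toSpanSingleton ℤ _ (.ofMul β))

theorem zpowDiv_apply {G : Type*} [CommGroup G] (α β : G) (p q : ℤ) :
    zpowDiv α β (p, q) = .ofMul (α ^ p / β ^ q) := by
  simp [zpowDiv, sub_eq_add_neg]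

theorem pow_mul_pow_eq_of_zpowDiv_eq {G : Type*} [CommGroup G] {α β ε : G} {i i' j j' : ℕ}
    {p q : ℤ} (hi : (i : ℤ) = i' + p) (hj : (j : ℤ) = j' + q)
    (h : zpowDiv α β (p, q) = .ofMul ε) : α ^ i * β ^ j' = ε * (α ^ i' * β ^ j) := by
  rw [zpowDiv_apply, Additive.ofMul.apply_eq_iff_eq, div_eq_iff_eq_mul] at h
  rw [← zpow_natCast, ← zpow_natCast, ← zpow_natCast, ← zpow_natCast, hi, hj, zpow_add, zpow_add, h]
  ac_rfl

theorem IsSolution.zpowDiv_eq (hs : IsSolution a b c s) {α β : (ZMod c)ˣ} (hα : (α : ZMod c) = a)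
    (hβ : (β : ZMod c) = b) : zpowDiv α β (s.1, s.2.1) = .ofMul (-1) := by
  rw [zpowDiv_apply, zpow_natCast, zpow_natCast]
  refine congrArg _ (div_eq_iff_eq_mul.2 (Units.ext ?_))
  push_cast
  rw [hα, hβ, neg_one_mul]
  exact eq_neg_of_add_eq_zero_left hs.pow_add_pow_eq_zero

theorem odd_of_ten_pow_add_three_pow_eq {x y z : ℕ} (hz : 0 < z)
    (h : 10 ^ x + 3 ^ y = 13 ^ z) : Odd x ∧ Odd y := by
  -- Both bases have order dividing `6` modulo `7` and modulo `13`.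
  have h₁₃ : (10 : ZMod 13) ^ (x % 6) + 3 ^ (y % 6) = 0 := by
    rw [← pow_eq_pow_mod x (by decide), ← pow_eq_pow_mod y (by decide)]
    have := congrArg (Nat.cast : ℕ → ZMod 13) h
    push_cast at this
    rw [this, show (13 : ZMod 13) = 0 from rfl, zero_pow hz.ne']
  have h₇ : (10 : ZMod 7) ^ (x % 6) + 3 ^ (y % 6) ≠ 0 := by
    rw [← pow_eq_pow_mod x (by decide), ← pow_eq_pow_mod y (by decide)]
    have := congrArg (Nat.cast : ℕ → ZMod 7) h
    push_cast at this
    rw [this]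
    have h₀ : (13 : ZMod 7) ≠ 0 := by decide
    have : Fact (Nat.Prime 7) := ⟨by norm_num⟩
    exact pow_ne_zero z h₀
  have hodd : ∀ i < 6, ∀ j < 6, (10 : ZMod 13) ^ i + 3 ^ j = 0 → (10 : ZMod 7) ^ i + 3 ^ j ≠ 0 →
      i % 2 = 1 ∧ j % 2 = 1 := by decide
  have := hodd _ (Nat.mod_lt x (by norm_num)) _ (Nat.mod_lt y (by norm_num)) h₁₃ h₇
  rw [Nat.odd_iff, Nat.odd_iff]
  lia

theorem IsExceptional.odd_of_isSolution {x y : ℕ} (h : IsExceptional a b c x y)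
    (hs : IsSolution a b c s) : Odd s.1 ∧ Odd s.2.1 := by
  rcases h with ⟨rfl, rfl, rfl, -, -⟩ | ⟨rfl, rfl, rfl, -, -⟩
  · exact odd_of_ten_pow_add_three_pow_eq hs.z_pos hs.eq
  · exact (odd_of_ten_pow_add_three_pow_eq hs.z_pos ((add_comm _ _).trans hs.eq)).symm

theorem IsExceptional.eq_of_isSolution (hs : IsExceptional a b c s.1 s.2.1)
    (ht : IsExceptional a b c t.1 t.2.1) (hs' : IsSolution a b c s) (ht' : IsSolution a b c t) :
    s = t := by
  rw [IsExceptional] at hs ht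
  exact hs'.ext (by lia) ht' (by lia) (by lia)

namespace IsAdmissible

variable (h : IsAdmissible a b c)
include h

theorem isUnit_a : IsUnit (a : ZMod c) := (ZMod.isUnit_iff_coprime a c).2 h.coprime_ac

theorem isUnit_b : IsUnit (b : ZMod c) := (ZMod.isUnit_iff_coprime b c).2 h.coprime_bc

theorem descentData (hs : IsSolution a b c s) {τ : ZMod c}
    (hτ : (b : ZMod c) ^ (s.2.1 / 2) = τ * a ^ (s.1 / 2)) :
    DescentData (a ^ (s.1 % 2)) (b ^ (s.2.1 % 2)) c τ a b where
  P_pos := by have := h.one_lt_a; positivity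
  Q_pos := by have := h.one_lt_b; positivity
  one_lt := h.one_lt_c
  isUnit_two := by
    exact_mod_cast (ZMod.isUnit_iff_coprime 2 c).2 (Nat.coprime_two_left.2 h.odd_c)
  isUnit_P := by push_cast; exact h.isUnit_a.pow _
  isUnit_Q := by push_cast; exact h.isUnit_b.pow _
  root := by
    have heq := hs.pow_add_pow_eq_zero
    push_cast
    rw [← pow_mod_two_mul_pow_div_two_sq (a : ZMod c),
      ← pow_mod_two_mul_pow_div_two_sq (b : ZMod c), hτ] at heq
    refine ((h.isUnit_a.pow (s.1 / 2)).pow 2).mul_right_eq_zero.1 ?_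
    rw [← heq]
    ring
  not_isUnit_left := by
    rw [Int.ofNat_isUnit, Nat.isUnit_iff]
    exact h.one_lt_a.ne'
  not_isUnit_right := by
    rw [Int.ofNat_isUnit, Nat.isUnit_iff]
    exact h.one_lt_b.ne'

theorem isAlignedRep (hs : IsSolution a b c s) {τ : ZMod c} {ε : ℤ} (hε : ε ^ 2 = 1)
    (hτ : (ε * b ^ (s.2.1 / 2) : ZMod c) = τ * a ^ (s.1 / 2)) :
    IsAlignedRep (a ^ (s.1 % 2)) (b ^ (s.2.1 % 2)) c τ a b
      (a ^ (s.1 / 2), ε * b ^ (s.2.1 / 2)) s.2.2 where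
  pos := hs.z_pos
  norm := by
    rw [normForm, mul_pow ε, hε, one_mul, pow_mod_two_mul_pow_div_two_sq,
      pow_mod_two_mul_pow_div_two_sq]
    exact_mod_cast hs.eq
  align := by push_cast; exact hτ
  isUnit := by push_cast; exact h.isUnit_a.pow _
  dvd_fst := dvd_pow_mod_two_mul_pow_div_two _ hs.x_pos
  dvd_snd := by
    rw [mul_left_comm]
    exact (dvd_pow_mod_two_mul_pow_div_two _ hs.y_pos).mul_left ε

theorem exists_isAlignedRep (hs : IsSolution a b c s) (ht : IsSolution a b c t)
    (hst : IsCompatible a b c s t) :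
    ∃ (τ : ZMod c) (ε : ℤ), ε ^ 2 = 1 ∧
      DescentData (a ^ (s.1 % 2)) (b ^ (s.2.1 % 2)) c τ a b ∧
      IsAlignedRep (a ^ (s.1 % 2)) (b ^ (s.2.1 % 2)) c τ a b
        (a ^ (s.1 / 2), b ^ (s.2.1 / 2)) s.2.2 ∧
      IsAlignedRep (a ^ (s.1 % 2)) (b ^ (s.2.1 % 2)) c τ a b
        (a ^ (t.1 / 2), ε * b ^ (t.2.1 / 2)) t.2.2 := by
  obtain ⟨τ, hτ⟩ := (h.isUnit_a.pow (s.1 / 2)).dvd (a := (b : ZMod c) ^ (s.2.1 / 2))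
  rw [mul_comm] at hτ
  obtain ⟨ε, hε, hcross⟩ : ∃ ε : ℤ, ε ^ 2 = 1 ∧ (a : ZMod c) ^ (s.1 / 2) * b ^ (t.2.1 / 2) =
      ε * (a ^ (t.1 / 2) * b ^ (s.2.1 / 2)) := by
    rcases hst.cross with hc | hc
    · exact ⟨1, one_pow 2, by simpa using hc⟩
    · exact ⟨-1, by norm_num, by simpa using hc⟩
  have hε' : (ε : ZMod c) ^ 2 = 1 := by exact_mod_cast congrArg (Int.cast : ℤ → ZMod c) hε
  refine ⟨τ, ε, hε, h.descentData hs hτ, ?_, ?_⟩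
  · simpa using h.isAlignedRep hs (one_pow 2) (by simpa using hτ)
  · rw [hst.x_mod_two, hst.y_mod_two]
    refine h.isAlignedRep ht hε ((h.isUnit_a.pow (s.1 / 2)).mul_left_cancel ?_)
    linear_combination (ε : ZMod c) * hcross + a ^ (t.1 / 2) * b ^ (s.2.1 / 2) * hε' +
      a ^ (t.1 / 2) * hτ

theorem eq_or_isExceptional (hs : IsSolution a b c s) (ht : IsSolution a b c t)
    (hst : IsCompatible a b c s t) :
    s = t ∨ IsExceptional a b c s.1 s.2.1 ∨ IsExceptional a b c t.1 t.2.1 := by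
  obtain ⟨τ, ε, hε, D, hsrep, htrep⟩ := h.exists_isAlignedRep hs ht hst
  obtain ⟨w, g, hw, hgen⟩ := D.exists_generator hsrep
  have ha := pow_mod_two_mul_pow_div_two_sq (a : ℤ)
  have hb := pow_mod_two_mul_pow_div_two_sq (b : ℤ)
  have hbε : (b : ℤ) ^ (s.2.1 % 2) * (ε * b ^ (t.2.1 / 2)) ^ 2 = b ^ t.2.1 := by
    rw [mul_pow, hε, one_mul, hst.y_mod_two, hb]
  have hpow {u : ℤ × ℤ} {K x y : ℕ} (hu : IsAlignedRep _ _ c τ a b u K) :=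
    (hgen u K hu).elim fun _ ↦ isExceptional_or_mul_sq_eq_pow (x := x) (y := y)
      (zero_lt_one.trans h.one_lt_a) (zero_lt_one.trans h.one_lt_b) h.coprime_ab hw
  rcases hpow hsrep (ha s.1) (hb s.2.1) with hs' | ⟨hsx, hsy⟩
  · exact .inr (.inl hs')
  rcases hpow htrep (hst.x_mod_two ▸ ha t.1) hbε with ht' | ⟨htx, hty⟩
  · exact .inr (.inr ht')
  refine .inl (hs.ext h.one_lt_c ht (Nat.pow_right_injective h.one_lt_a ?_)
    (Nat.pow_right_injective h.one_lt_b ?_))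
  · exact_mod_cast hsx.symm.trans htx
  · exact_mod_cast hsy.symm.trans hty

theorem isCompatible_of_prime (hc : c.Prime) (hs : IsSolution a b c s) (ht : IsSolution a b c t)
    (hx : s.1 % 2 = t.1 % 2) (hy : s.2.1 % 2 = t.2.1 % 2) : IsCompatible a b c s t := by
  have : Fact c.Prime := ⟨hc⟩
  refine ⟨hx, hy, sq_eq_sq_iff_eq_or_eq_neg.1 ?_⟩
  refine ((h.isUnit_a.pow (s.1 % 2)).mul (h.isUnit_b.pow (s.2.1 % 2))).mul_left_cancel ?_
  have hmul (x y : ℕ) :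
      (a : ZMod c) ^ (x % 2) * b ^ (y % 2) * (a ^ (x / 2) * b ^ (y / 2)) ^ 2 = a ^ x * b ^ y := by
    rw [mul_pow, mul_mul_mul_comm, pow_mod_two_mul_pow_div_two_sq, pow_mod_two_mul_pow_div_two_sq]
  have hcross : (a : ZMod c) ^ s.1 * b ^ t.2.1 = a ^ t.1 * b ^ s.2.1 := by
    linear_combination (b : ZMod c) ^ t.2.1 * hs.pow_add_pow_eq_zero -
      (b : ZMod c) ^ s.2.1 * ht.pow_add_pow_eq_zero
  have hst := hmul s.1 t.2.1
  have hts := hmul t.1 s.2.1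
  rw [← hy] at hst
  rw [← hx] at hts
  rw [hst, hts, hcross]

theorem isCompatible_of_isExceptional {x y : ℕ} (hexc : IsExceptional a b c x y)
    (hs : IsSolution a b c s) (ht : IsSolution a b c t) : IsCompatible a b c s t := by
  obtain ⟨hsx, hsy⟩ := hexc.odd_of_isSolution hs
  obtain ⟨htx, hty⟩ := hexc.odd_of_isSolution ht
  rw [Nat.odd_iff] at hsx hsy htx hty
  have hc : c = 13 := by rcases hexc with hexc | hexc <;> exact hexc.2.2.1
  exact h.isCompatible_of_prime (hc ▸ by norm_num) hs ht (hsx.trans htx.symm) (hsy.trans hty.symm)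

theorem exists_isCompatible (s : Fin 3 → ℕ × ℕ × ℕ) (hs : ∀ i, IsSolution a b c (s i)) :
    ∃ i j, i ≠ j ∧ IsCompatible a b c (s i) (s j) := by
  obtain ⟨α, hα⟩ := h.isUnit_a
  obtain ⟨β, hβ⟩ := h.isUnit_b
  have hne : Additive.ofMul (-1 : (ZMod c)ˣ) ≠ 0 := fun hone ↦ by
    have : Fact (2 < c) := ⟨by have := h.one_lt_c; have := h.odd_c; grind⟩
    exact ZMod.neg_one_ne_one (congrArg Units.val (ofMul_eq_zero.1 hone))
  have htwo : 2 • Additive.ofMul (-1 : (ZMod c)ˣ) = 0 := by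
    rw [← ofMul_pow, neg_one_sq, ofMul_one]
  obtain ⟨i, j, hij, ⟨p, q⟩, hpq, hu⟩ := exists_eq_add_two_nsmul_of_map_eq (by simp) hne htwo
    (zpowDiv α β) (fun i ↦ ((s i).1, (s i).2.1)) fun i ↦ (hs i).zpowDiv_eq hα hβ
  have hp : ((s i).1 : ℤ) = (s j).1 + 2 * p := by simpa using congrArg Prod.fst hpq
  have hq : ((s i).2.1 : ℤ) = (s j).2.1 + 2 * q := by simpa using congrArg Prod.snd hpq
  have hcross {ε : (ZMod c)ˣ} (hε : zpowDiv α β (p, q) = .ofMul ε) :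
      (a : ZMod c) ^ ((s i).1 / 2) * b ^ ((s j).2.1 / 2) =
        ε * (a ^ ((s j).1 / 2) * b ^ ((s i).2.1 / 2)) := by
    rw [← hα, ← hβ]
    exact_mod_cast congrArg Units.val
      (pow_mul_pow_eq_of_zpowDiv_eq (by lia) (by lia) hε)
  refine ⟨i, j, hij, by lia, by lia, hu.imp (fun hu ↦ ?_) fun hu ↦ ?_⟩
  · simpa using hcross (ε := 1) hu
  · simpa using hcross hu

theorem exists_ne_and_eq (s : Fin 3 → ℕ × ℕ × ℕ) (hs : ∀ i, IsSolution a b c (s i)) :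
    ∃ i j, i ≠ j ∧ s i = s j := by
  by_cases hexc : ∃ k, IsExceptional a b c (s k).1 (s k).2.1
  · obtain ⟨k, hk⟩ := hexc
    have hne : ∀ k : Fin 3, k ≠ k + 1 ∧ k ≠ k + 2 ∧ k + 1 ≠ k + 2 := by decide
    rcases h.eq_or_isExceptional (hs _) (hs _)
      (h.isCompatible_of_isExceptional hk (hs (k + 1)) (hs (k + 2))) with heq | hk' | hk'
    · exact ⟨_, _, (hne k).2.2, heq⟩
    · exact ⟨_, _, (hne k).1, hk.eq_of_isSolution hk' (hs _) (hs _)⟩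
    · exact ⟨_, _, (hne k).2.1, hk.eq_of_isSolution hk' (hs _) (hs _)⟩
  · obtain ⟨i, j, hij, hcomp⟩ := h.exists_isCompatible s hs
    push Not at hexc
    exact ⟨i, j, hij, (h.eq_or_isExceptional (hs i) (hs j) hcomp).resolve_right
      (not_or.2 ⟨hexc i, hexc j⟩)⟩

end IsAdmissible

end Solutions

/-- Lemma 2.8: for coprime `a, b, c > 1` with `c` odd, the equation
`a^x + b^y = c^z` has at most two solutions in positive integers. -/
theorem stmt_13 (a b c : ℕ) (hab : Nat.Coprime a b) (hac : Nat.Coprime a c)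
    (hbc : Nat.Coprime b c) (ha1 : 1 < a) (hb1 : 1 < b) (hc1 : 1 < c)
    (hcodd : Odd c)
    (s₁ s₂ s₃ : ℕ × ℕ × ℕ)
    (h₁ : 0 < s₁.1 ∧ 0 < s₁.2.1 ∧ 0 < s₁.2.2 ∧ a ^ s₁.1 + b ^ s₁.2.1 = c ^ s₁.2.2)
    (h₂ : 0 < s₂.1 ∧ 0 < s₂.2.1 ∧ 0 < s₂.2.2 ∧ a ^ s₂.1 + b ^ s₂.2.1 = c ^ s₂.2.2)
    (h₃ : 0 < s₃.1 ∧ 0 < s₃.2.1 ∧ 0 < s₃.2.2 ∧ a ^ s₃.1 + b ^ s₃.2.1 = c ^ s₃.2.2) :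
    s₁ = s₂ ∨ s₁ = s₃ ∨ s₂ = s₃ := by
  have hadm : IsAdmissible a b c := ⟨hab, hac, hbc, ha1, hb1, hc1, hcodd⟩
  have hsol {s : ℕ × ℕ × ℕ}
      (hs : 0 < s.1 ∧ 0 < s.2.1 ∧ 0 < s.2.2 ∧ a ^ s.1 + b ^ s.2.1 = c ^ s.2.2) :
      IsSolution a b c s := ⟨hs.1, hs.2.1, hs.2.2.1, hs.2.2.2⟩
  obtain ⟨i, j, hij, heq⟩ := hadm.exists_ne_and_eq ![s₁, s₂, s₃] <|
    Fin.forall_fin_succ.2 ⟨hsol h₁, Fin.forall_fin_two.2 ⟨hsol h₂, hsol h₃⟩⟩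
  fin_cases i <;> fin_cases j <;> simp_all
end

section
/- Let $a$, $b$, $c$ be distinct primes with $a < b$ and $\max\{a,b,c\} < 100$. If $(a,b,c)$ is not one of $(2,3,5)$, $(2,3,11)$, $(2,5,3)$, $(2,7,3)$, $(3,5,2)$, $(3,13,2)$, then the equation $a^x + b^y = c^z$ has at most one solution in positive integers $(x,y,z)$. -/
/-!
By parity, one of the three primes is `2`. Exponents are bounded by a congruence sieve: modulo `m`,
a geometric progression runs through a cycle, so splitting the exponents into residue classes along
the three cycles leaves only the triples of classes whose residues satisfy the equation modulo `m`.
A modulus is worth using only if it creates at most `m` triples, since heuristically each of them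
survives with probability `1 / m`.

The sieve excludes solutions in which the exponent of `2` exceeds `9`. Once the power of `2` is a
constant `d = 2 ^ k`, let `d + p ^ Y = q ^ Z` be the largest small solution. A larger one would have
the form `d + p ^ (Y + 1) * p ^ i = q ^ (Z + 1) * q ^ j`, which the sieve refutes with the help of
the modulus `q ^ (Z + 1)` and of primes congruent to `1` modulo `q ^ Z`. What remains is a finite
search.
-/

namespace ExponentialSieve

/-- Call by value: the kernel reduces the `match` only after normalizing `n` to a literal, so that
`f` receives a numeral instead of an unevaluated term. -/
def force {α : Type} (n : ℕ) (f : ℕ → α) : α :=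
  match n + 1 with
  | 0 => f 0
  | i + 1 => f i

theorem force_eq {α : Type} (n : ℕ) (f : ℕ → α) : force n f = f n := rfl

/-- Bounded universal quantification; the bare recursor is what the kernel evaluates fastest. -/
def allBelow (n : ℕ) (p : ℕ → Bool) : Bool :=
  n.rec true fun i ih => p i && ih

theorem allBelow_iff {n : ℕ} {p : ℕ → Bool} : allBelow n p = true ↔ ∀ i < n, p i = true := by
  induction n with
  | zero => simp [allBelow]
  | succ n ih =>
    rw [Nat.forall_lt_succ_right, ← ih, and_comm, ← Bool.and_eq_true]
    rfl

/-- The power `b ^ e` modulo `m`; the exponent is written in base `1024` to keep the intermediate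
powers small. -/
def powMod (m b e : ℕ) : ℕ :=
  b ^ (e % 1024) * (b ^ 1024 % m) ^ (e / 1024) % m

theorem powMod_eq (m b e : ℕ) : powMod m b e = b ^ e % m := by
  conv_rhs => rw [← Nat.mod_add_div e 1024, pow_add, pow_mul]
  exact Nat.ModEq.mul_left _ ((Nat.mod_modEq _ m).pow _)

/-- The least `n` with `1 ≤ n ≤ m` and `v * g ^ n % m = v`, or `0` if there is none. -/
def returnTime (m g v : ℕ) : ℕ :=
  m.rec 0 fun i ih => bif v * g ^ (m - i) % m == v then m - i else ih

theorem mul_pow_returnTime_mod {m g v : ℕ} (h : returnTime m g v ≠ 0) :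
    v * g ^ returnTime m g v % m = v := by
  suffices ∀ n : ℕ,
      let r : ℕ := n.rec 0 fun i ih => bif v * g ^ (m - i) % m == v then m - i else ih
      r ≠ 0 → v * g ^ r % m = v from this m h
  intro n
  induction n with
  | zero => exact absurd rfl
  | succ i ih =>
    cases hi : v * g ^ (m - i) % m == v with
    | true => simpa only [hi, cond_true] using fun _ => beq_iff_eq.mp hi
    | false => simpa only [hi, cond_false] using ih

/-- The geometric progression `n ↦ coeff * base ^ (offset + step * n)`, whose exponents form a
residue class. -/
structure GeomProg where
  coeff : ℕ
  base : ℕ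
  offset : ℕ
  step : ℕ

namespace GeomProg

variable (P : GeomProg) (m : ℕ)

/-- The term of index `n`. -/
def term (n : ℕ) : ℕ :=
  P.coeff * P.base ^ (P.offset + P.step * n)

/-- The subprogression formed by the terms whose index is `i` modulo `n`. -/
def thin (n i : ℕ) : GeomProg :=
  ⟨P.coeff, P.base, P.offset + P.step * i, P.step * n⟩

theorem term_thin (n i k : ℕ) : (P.thin n i).term k = P.term (i + n * k) := by
  simp only [term, thin]
  ring_nf

/-- Call by value for all parameters of a progression, see `ExponentialSieve.force`. -/
def forced {α : Type} (f : GeomProg → α) : α :=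
  force P.coeff fun A => force P.base fun a => force P.offset fun r => force P.step fun s =>
    f ⟨A, a, r, s⟩

theorem forced_eq {α : Type} (f : GeomProg → α) : P.forced f = f P := rfl

/-- The first term modulo `m`. -/
def start : ℕ := P.coeff * powMod m P.base P.offset % m

/-- The common ratio modulo `m`. -/
def ratio : ℕ := powMod m P.base P.step

/-- The length of the cycle through which the terms run modulo `m`, or `0` if they do not return to
the first one. -/
def period : ℕ := returnTime m (P.ratio m) (P.start m)

theorem term_modEq (n : ℕ) : P.term n ≡ P.start m * P.ratio m ^ n [MOD m] := by
  simp only [term, start, ratio, powMod_eq, pow_add, pow_mul, ← mul_assoc]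
  exact .mul (((Nat.mod_modEq _ m).trans (.mul_left _ (Nat.mod_modEq _ m))).symm)
    ((Nat.mod_modEq _ m).symm.pow n)

variable {P m}

theorem term_modEq_of_period_ne_zero (h : P.period m ≠ 0) (n : ℕ) :
    P.term n ≡ P.start m * P.ratio m ^ (n % P.period m) [MOD m] := by
  have return_modEq : P.start m * P.ratio m ^ P.period m ≡ P.start m [MOD m] := by
    conv_rhs => rw [← mul_pow_returnTime_mod h]
    exact (Nat.mod_modEq _ m).symm
  have cycle : ∀ k, P.start m * (P.ratio m ^ P.period m) ^ k ≡ P.start m [MOD m] := by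
    intro k
    induction k with
    | zero => simpa using Nat.ModEq.refl _
    | succ k ih => simpa only [pow_succ', ← mul_assoc] using (return_modEq.mul_right _).trans ih
  refine (P.term_modEq m n).trans ?_
  conv_lhs => rw [← Nat.div_add_mod n (P.period m), pow_add, pow_mul, ← mul_assoc]
  exact (cycle _).mul_right _

/-- The data of the cycle of `P` modulo `m`, evaluated and passed on. -/
def withCycle {α : Type} (P : GeomProg) (m : ℕ) (f : ℕ → ℕ → ℕ → α) : α :=
  force (P.start m) fun u => force (P.ratio m) fun g => force (returnTime m g u) fun n => f u g n

theorem withCycle_eq {α : Type} (f : ℕ → ℕ → ℕ → α) :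
    P.withCycle m f = f (P.start m) (P.ratio m) (P.period m) := rfl

end GeomProg

/-- Refutes `P.term i + Q.term j = R.term k`, running through the moduli of a list. A modulus for
which a period is missing or the number of triples of residue classes exceeds `m` is skipped. -/
def refutes : List ℕ → GeomProg → GeomProg → GeomProg → Bool
  | [], _, _, _ => false
  | m :: l, P, Q, R =>
    force m fun m =>
    P.withCycle m fun u f a => Q.withCycle m fun v g b => R.withCycle m fun w h c =>
      bif a * b * c == 0 || decide (m < a * b * c) then refutes l P Q R else
        allBelow a fun i => allBelow b fun j => force ((u * f ^ i + v * g ^ j) % m) fun s =>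
          allBelow c fun k => bif w * h ^ k % m == s then
            (P.thin a i).forced fun P' => (Q.thin b j).forced fun Q' =>
              (R.thin c k).forced fun R' => refutes l P' Q' R'
          else true

theorem refutes_cons {m : ℕ} {l : List ℕ} {P Q R : GeomProg} (h : refutes (m :: l) P Q R = true) :
    refutes l P Q R = true ∨
      (P.period m ≠ 0 ∧ Q.period m ≠ 0 ∧ R.period m ≠ 0) ∧
        ∀ i < P.period m, ∀ j < Q.period m, ∀ k < R.period m,
          P.start m * P.ratio m ^ i + Q.start m * Q.ratio m ^ j ≡
              R.start m * R.ratio m ^ k [MOD m] →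
            refutes l (P.thin (P.period m) i) (Q.thin (Q.period m) j) (R.thin (R.period m) k) =
              true := by
  simp only [refutes, force_eq, GeomProg.withCycle_eq, GeomProg.forced_eq] at h
  by_cases skipped :
      (P.period m * Q.period m * R.period m == 0 ||
        decide (m < P.period m * Q.period m * R.period m)) = true
  · rw [skipped, cond_true] at h
    exact .inl h
  · rw [Bool.not_eq_true] at skipped
    rw [skipped, cond_false] at h
    simp only [allBelow_iff] at h
    simp only [Bool.or_eq_false_iff, beq_eq_false_iff_ne, mul_ne_zero_iff, and_assoc] at skipped
    refine .inr ⟨⟨skipped.1, skipped.2.1, skipped.2.2.1⟩, fun i hi j hj k hk hm => ?_⟩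
    have := h i hi j hj k hk
    rwa [beq_iff_eq.mpr hm.symm, cond_true] at this

theorem term_add_term_ne_of_refutes {l : List ℕ} {P Q R : GeomProg} (h : refutes l P Q R = true)
    (x y z : ℕ) : P.term x + Q.term y ≠ R.term z := by
  induction l generalizing P Q R x y z with
  | nil => simp [refutes] at h
  | cons m l ih =>
    rcases refutes_cons h with h | ⟨⟨hP, hQ, hR⟩, h⟩
    · exact ih h x y z
    · intro solution
      have residues := ((GeomProg.term_modEq_of_period_ne_zero hP x).add
        (GeomProg.term_modEq_of_period_ne_zero hQ y)).symm
      rw [solution] at residues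
      refine ih (h _ (Nat.mod_lt x hP.bot_lt) _ (Nat.mod_lt y hQ.bot_lt) _ (Nat.mod_lt z hR.bot_lt)
        (residues.trans (GeomProg.term_modEq_of_period_ne_zero hR z)))
        (x / P.period m) (y / Q.period m) (z / R.period m) ?_
      simpa only [GeomProg.term_thin, Nat.mod_add_div] using solution

/-- Refutes `A * a ^ x + B * b ^ y = C * c ^ z` for all natural numbers `x`, `y`, `z`. -/
def sieve (l : List ℕ) (A a B b C c : ℕ) : Bool :=
  GeomProg.forced ⟨A, a, 0, 1⟩ fun P => GeomProg.forced ⟨B, b, 0, 1⟩ fun Q =>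
    GeomProg.forced ⟨C, c, 0, 1⟩ fun R => refutes l P Q R

theorem ne_of_sieve {l : List ℕ} {A a B b C c : ℕ} (h : sieve l A a B b C c = true) (x y z : ℕ) :
    A * a ^ x + B * b ^ y ≠ C * c ^ z := by
  simpa only [GeomProg.term, zero_add, one_mul] using term_add_term_ne_of_refutes h x y z

theorem pow_add_pow_ne_of_sieve {l : List ℕ} {a b c i j k x y z : ℕ}
    (h : sieve l (a ^ i) a (b ^ j) b (c ^ k) c = true) (hx : i ≤ x) (hy : j ≤ y) (hz : k ≤ z) :
    a ^ x + b ^ y ≠ c ^ z := by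
  simpa only [← pow_add, Nat.add_sub_cancel' hx, Nat.add_sub_cancel' hy, Nat.add_sub_cancel' hz]
    using ne_of_sieve h (x - i) (y - j) (z - k)

/-- For a prime `p`, the power `q ^ Z` in the largest solution of `d + p ^ Y = q ^ Z` with `Y ≤ 4`
and `1 ≤ Z ≤ 4`, or `1` if there is none. A truncated difference `q ^ z - d = 0` does not divide
`p ^ 4`. -/
def lastPower (d p q : ℕ) : ℕ :=
  q ^ Nat.findGreatest (fun z => q ^ z - d ∣ p ^ 4) 4

/-- Moduli for an equation whose right-hand side is `N * q` times a power of `q`, where `N` is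
itself a power of `q`. If `2 * j * N + 1` is prime, its multiplicative group has order divisible by
`N`, so that a class of exponents modulo `N` can be detected. Primality is replaced by a Fermat
test: every modulus is valid. -/
def auxiliaryModuli (N q : ℕ) : List ℕ :=
  N * q :: ((List.range' 1 21).map fun j => 2 * j * N + 1).filter fun m => powMod m 2 (m - 1) == 1

/-- Moduli found by computer search; together with `auxiliaryModuli` they suffice for all the primes
below `100`. -/
def moduli : List ℕ := [24, 80, 63, 13, 64, 17, 193, 41, 11, 97, 256, 257, 1024, 769]

/-- Refutes all solutions of `d + p ^ y = q ^ z` beyond the one recorded by `lastPower d p q`. In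
that solution `p ^ Y = N - d`; if there is none, `N = p ^ 0 = 1`. -/
def refutesBeyondLast (d p q : ℕ) : Bool :=
  force (lastPower d p q) fun N =>
    sieve (moduli ++ auxiliaryModuli N q) d 1 (max (N - d) 1 * p) p (N * q) q

theorem lastPower_spec {d p q : ℕ} (hp : p.Prime) :
    ∃ Y ≤ 4, ∃ Z ≤ 4, lastPower d p q = q ^ Z ∧ max (q ^ Z - d) 1 = p ^ Y ∧
      (Y = 0 ∧ Z = 0 ∨ d + p ^ Y = q ^ Z) := by
  set Z := Nat.findGreatest (fun z => q ^ z - d ∣ p ^ 4) 4 with hZ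
  have hZ4 : Z ≤ 4 := Nat.findGreatest_le 4
  by_cases hZ0 : Z = 0
  · refine ⟨0, by simp, Z, hZ4, rfl, ?_, .inl ⟨rfl, hZ0⟩⟩
    simpa only [hZ0, pow_zero, max_eq_right_iff] using Nat.sub_le 1 d
  · have difference_dvd : q ^ Z - d ∣ p ^ 4 :=
      Nat.findGreatest_of_ne_zero (P := fun z => q ^ z - d ∣ p ^ 4) hZ.symm hZ0
    obtain ⟨Y, hY4, hY⟩ := (Nat.dvd_prime_pow hp).mp difference_dvd
    have hpY : 0 < p ^ Y := pow_pos hp.pos Y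
    exact ⟨Y, hY4, Z, hZ4, rfl, by omega, .inr (by omega)⟩

theorem exponents_le_four {d p q : ℕ} (hp : p.Prime) (hq : 1 < q)
    (h : refutesBeyondLast d p q = true) {y z : ℕ} (hy : 0 < y) (solution : d + p ^ y = q ^ z) :
    y ≤ 4 ∧ z ≤ 4 := by
  obtain ⟨Y, hY4, Z, hZ4, hN, hD, hlast⟩ := lastPower_spec (d := d) (q := q) hp
  rw [refutesBeyondLast, force_eq, hN, hD, ← pow_succ, ← pow_succ] at h
  have not_beyond : ¬ (Y < y ∧ Z < z) := by
    rintro ⟨hYy, hZz⟩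
    apply ne_of_sieve h 0 (y - (Y + 1)) (z - (Z + 1))
    rwa [one_pow, mul_one, ← pow_add, ← pow_add, Nat.add_sub_cancel' hYy, Nat.add_sub_cancel' hZz]
  have ordered : Y < y ↔ Z < z := by
    rw [← Nat.pow_lt_pow_iff_right (n := Y) hp.one_lt, ← Nat.pow_lt_pow_iff_right (n := Z) hq]
    rcases hlast with ⟨rfl, rfl⟩ | hlast
    · have := Nat.one_lt_pow hy.ne' hp.one_lt
      simp only [pow_zero]
      omega
    · omega
  omega

/-- The odd primes below `100`. -/
def oddPrimes : List ℕ :=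
  [3, 5, 7, 11, 13, 17, 19, 23, 29, 31, 37, 41, 43, 47, 53, 59, 61, 67, 71, 73, 79, 83, 89, 97]

theorem prime_of_mem_oddPrimes : ∀ p ∈ oddPrimes, p.Prime := by
  simp only [oddPrimes, List.forall_mem_cons]
  norm_num

theorem three_le_of_mem_oddPrimes : ∀ p ∈ oddPrimes, 3 ≤ p := by
  decide

theorem mem_oddPrimes {p : ℕ} (hp : p.Prime) (hp2 : p ≠ 2) (h : p < 100) : p ∈ oddPrimes := by
  interval_cases p <;> first | decide | exact absurd rfl hp2 | exact absurd hp (by norm_num)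

/-- The solutions of `a ^ x + b ^ y = c ^ z` in positive integers. -/
def solutions (a b c : ℕ) : Set (ℕ × ℕ × ℕ) :=
  {s | 0 < s.1 ∧ 0 < s.2.1 ∧ 0 < s.2.2 ∧ a ^ s.1 + b ^ s.2.1 = c ^ s.2.2}

theorem exists_eq_two_of_pow_add_pow_eq_pow {a b c x y z : ℕ} (ha : a.Prime) (hb : b.Prime)
    (hc : c.Prime) (h : a ^ x + b ^ y = c ^ z) : a = 2 ∨ b = 2 ∨ c = 2 := by
  by_contra! odd
  have even_sum : Even (a ^ x + b ^ y) :=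
    (ha.odd_of_ne_two odd.1).pow.add_odd (hb.odd_of_ne_two odd.2.1).pow
  exact Nat.not_even_iff_odd.mpr (hc.odd_of_ne_two odd.2.2).pow (h ▸ even_sum)

theorem sieve_sum_eq_two_pow : ∀ p ∈ oddPrimes, ∀ q ∈ oddPrimes, p < q →
    sieve moduli (p ^ 1) p (q ^ 1) q (2 ^ 10) 2 = true := by
  decide +kernel

theorem card_small_sums_dvd_le_one : ∀ p ∈ oddPrimes, ∀ q ∈ oddPrimes, p < q →
    (p, q) ∉ [(3, 5), (3, 13)] →
      {e ∈ Finset.Icc 1 5 ×ˢ Finset.Icc 1 5 | p ^ e.1 + q ^ e.2 ∣ 2 ^ 9}.card ≤ 1 := by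
  decide +kernel

theorem exponent_le_five {p x : ℕ} (hp : 3 ≤ p) (h : p ^ x ≤ 2 ^ 9) : x ≤ 5 := by
  by_contra! hx
  have : 3 ^ 6 ≤ p ^ x := (Nat.pow_le_pow_right (by simp) hx).trans (Nat.pow_le_pow_left hp x)
  omega

theorem solutions_two_right_subsingleton {p q : ℕ} (hp : p ∈ oddPrimes) (hq : q ∈ oddPrimes)
    (hpq : p < q) (hexc : (p, q) ∉ [(3, 5), (3, 13)]) : (solutions p q 2).Subsingleton := by
  have small : ∀ s ∈ solutions p q 2, (s.1, s.2.1) ∈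
      {e ∈ Finset.Icc 1 5 ×ˢ Finset.Icc 1 5 | p ^ e.1 + q ^ e.2 ∣ 2 ^ 9} := by
    rintro ⟨x, y, z⟩ ⟨hx, hy, -, h⟩
    have hz : z ≤ 9 := by
      by_contra! hz
      exact pow_add_pow_ne_of_sieve (sieve_sum_eq_two_pow p hp q hq hpq) hx hy hz h
    have sum_dvd : p ^ x + q ^ y ∣ 2 ^ 9 := h ▸ pow_dvd_pow 2 hz
    have sum_le := Nat.le_of_dvd (by simp) sum_dvd
    have hx5 := exponent_le_five (three_le_of_mem_oddPrimes p hp) (by omega : p ^ x ≤ 2 ^ 9)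
    have hy5 := exponent_le_five (three_le_of_mem_oddPrimes q hq) (by omega : q ^ y ≤ 2 ^ 9)
    simpa only [Finset.mem_filter, Finset.mem_product, Finset.mem_Icc] using
      ⟨⟨⟨hx, hx5⟩, hy, hy5⟩, sum_dvd⟩
  rintro ⟨x, y, z⟩ hs ⟨x', y', z'⟩ ht
  obtain ⟨rfl, rfl⟩ := Prod.mk.inj (Finset.card_le_one.mp
    (card_small_sums_dvd_le_one p hp q hq hpq hexc) _ (small _ hs) _ (small _ ht))
  obtain rfl : z = z' := Nat.pow_right_injective le_rfl (hs.2.2.2.symm.trans ht.2.2.2)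
  rfl

theorem sieve_two_pow_add : ∀ p ∈ oddPrimes, ∀ q ∈ oddPrimes, p ≠ q →
    sieve moduli (2 ^ 10) 2 (p ^ 1) p (q ^ 1) q = true := by
  decide +kernel

theorem refutesBeyondLast_two_pow : ∀ k ∈ List.range' 1 9, ∀ p ∈ oddPrimes, ∀ q ∈ oddPrimes,
    p ≠ q → refutesBeyondLast (2 ^ k) p q = true := by
  decide +kernel

theorem card_small_differences_dvd_le_one : ∀ p ∈ oddPrimes, ∀ q ∈ oddPrimes, p ≠ q →
    (p, q) ∉ [(3, 5), (3, 11), (5, 3), (7, 3)] →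
      {e ∈ Finset.Icc 1 4 ×ˢ Finset.Icc 1 4 | q ^ e.2 - p ^ e.1 ∣ 2 ^ 9}.card ≤ 1 := by
  decide +kernel

theorem solutions_two_left_subsingleton {p q : ℕ} (hp : p ∈ oddPrimes) (hq : q ∈ oddPrimes)
    (hpq : p ≠ q) (hexc : (p, q) ∉ [(3, 5), (3, 11), (5, 3), (7, 3)]) :
    (solutions 2 p q).Subsingleton := by
  have hp' := prime_of_mem_oddPrimes p hp
  have hq' := prime_of_mem_oddPrimes q hq
  have small : ∀ s ∈ solutions 2 p q, s.2 ∈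
      {e ∈ Finset.Icc 1 4 ×ˢ Finset.Icc 1 4 | q ^ e.2 - p ^ e.1 ∣ 2 ^ 9} := by
    rintro ⟨x, y, z⟩ ⟨hx, hy, hz, h⟩
    have hx9 : x ≤ 9 := by
      by_contra! hx9
      exact pow_add_pow_ne_of_sieve (sieve_two_pow_add p hp q hq hpq) hx9 hy hz h
    have hxk : x ∈ List.range' 1 9 := List.mem_range'_1.mpr ⟨hx, by omega⟩
    obtain ⟨hy4, hz4⟩ := exponents_le_four hp' hq'.one_lt
      (refutesBeyondLast_two_pow x hxk p hp q hq hpq) hy h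
    have difference_dvd : q ^ z - p ^ y ∣ 2 ^ 9 :=
      (Nat.sub_eq_of_eq_add h.symm).symm ▸ pow_dvd_pow 2 hx9
    simpa only [Finset.mem_filter, Finset.mem_product, Finset.mem_Icc] using
      ⟨⟨⟨hy, hy4⟩, hz, hz4⟩, difference_dvd⟩
  rintro ⟨x, e⟩ hs ⟨x', e'⟩ ht
  obtain rfl := Finset.card_le_one.mp
    (card_small_differences_dvd_le_one p hp q hq hpq hexc) _ (small _ hs) _ (small _ ht)
  obtain rfl : x = x' :=
    Nat.pow_right_injective le_rfl (Nat.add_right_cancel (hs.2.2.2.trans ht.2.2.2.symm))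
  rfl

end ExponentialSieve

open ExponentialSieve in
/-- Lemma 2.9: Conjecture 1.7 holds for distinct primes `a < b` with
`max{a,b,c} < 100`: outside the six exceptional triples there is at most one
solution of `a^x + b^y = c^z` in positive integers. -/
theorem stmt_14 (a b c : ℕ) (ha : Nat.Prime a) (hb : Nat.Prime b) (hc : Nat.Prime c)
    (hab : a < b) (hac : a ≠ c) (hbc : b ≠ c)
    (hmax : max a (max b c) < 100)
    (hexc : (a, b, c) ≠ (2, 3, 5) ∧ (a, b, c) ≠ (2, 3, 11) ∧ (a, b, c) ≠ (2, 5, 3) ∧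
        (a, b, c) ≠ (2, 7, 3) ∧ (a, b, c) ≠ (3, 5, 2) ∧ (a, b, c) ≠ (3, 13, 2)) :
    ∀ s t : ℕ × ℕ × ℕ,
        (0 < s.1 ∧ 0 < s.2.1 ∧ 0 < s.2.2 ∧ a ^ s.1 + b ^ s.2.1 = c ^ s.2.2) →
        (0 < t.1 ∧ 0 < t.2.1 ∧ 0 < t.2.2 ∧ a ^ t.1 + b ^ t.2.1 = c ^ t.2.2) →
        s = t := by
  intro s t hs ht
  suffices (solutions a b c).Subsingleton from this hs ht
  simp only [max_lt_iff] at hmax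
  obtain ⟨ha100, hb100, hc100⟩ := hmax
  have hb2 : b ≠ 2 := (ha.two_le.trans_lt hab).ne'
  rcases exists_eq_two_of_pow_add_pow_eq_pow ha hb hc hs.2.2.2 with rfl | rfl | rfl
  · exact solutions_two_left_subsingleton (mem_oddPrimes hb hb2 hb100)
      (mem_oddPrimes hc hac.symm hc100) hbc (by simpa using hexc)
  · exact absurd rfl hb2
  · exact solutions_two_right_subsingleton (mem_oddPrimes ha hac ha100)
      (mem_oddPrimes hb hb2 hb100) hab (by simpa using hexc)
end
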